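/- Let f : ℝ³ → ℝ³ be a C¹ cooperative irreducible vector field admitting a C¹ first integral H : ℝ³ → ℝ with ∇H(x) ≠ 0 for every x ∈ ℝ³. Then: (a) for every solution γ : [0,∞) → ℝ³ of ẋ = f(x), the ω-limit set of γ is either empty or a singleton; and (b) for every solution γ : (−∞,0] → ℝ³, the α-limit set of γ is either empty or a singleton. -/

import Mathlib

open Set Filter Topology

noncomputable section

/-- `f` is a cooperative vector field on `X`: the off-diagonal entries of the
Jacobian are nonnegative. -/
def coopVF {n : ℕ} (f : (Fin n → ℝ) → (Fin n → ℝ)) (X : Set (Fin n → ℝ)) : Prop :=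
  ∀ x ∈ X, ∀ i j : Fin n, i ≠ j → 0 ≤ fderiv ℝ f x (Pi.single j 1) i

/-- The Jacobian matrix of `f` at `x`. -/
def jacMat {n : ℕ} (f : (Fin n → ℝ) → (Fin n → ℝ)) (x : Fin n → ℝ) :
    Fin n → Fin n → ℝ :=
  fun i j => fderiv ℝ f x (Pi.single j 1) i

/-- A matrix is irreducible if for every nonempty proper subset `S` of indices there
are `i ∈ S`, `j ∉ S` with `A i j ≠ 0`. -/
def matIrred {n : ℕ} (A : Fin n → Fin n → ℝ) : Prop :=
  ∀ S : Set (Fin n), S.Nonempty → S ≠ Set.univ → ∃ i ∈ S, ∃ j ∉ S, A i j ≠ 0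

/-- `X` is p-convex: the segment joining any two order-related points of `X` lies in `X`. -/
def pconvex {n : ℕ} (X : Set (Fin n → ℝ)) : Prop :=
  ∀ x ∈ X, ∀ y ∈ X, x < y → segment ℝ x y ⊆ X

/-- `x ≪ y`: strict inequality in every coordinate. -/
def strLt {n : ℕ} (x y : Fin n → ℝ) : Prop := ∀ i, x i < y i

/-- `γ` is a solution of `ẋ = f(x)` on the time interval `I`, with values in `X`. -/
def IsSolOn {n : ℕ} (f : (Fin n → ℝ) → (Fin n → ℝ)) (X : Set (Fin n → ℝ))
    (I : Set ℝ) (γ : ℝ → Fin n → ℝ) : Prop :=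
  (∀ t ∈ I, γ t ∈ X) ∧ (∀ t ∈ I, HasDerivWithinAt γ (f (γ t)) I t)

/-- The ω-limit set (within `X`) of a curve `γ`. -/
def omegaSet {n : ℕ} (X : Set (Fin n → ℝ)) (γ : ℝ → Fin n → ℝ) :
    Set (Fin n → ℝ) :=
  {y | y ∈ X ∧ ∃ t : ℕ → ℝ, Tendsto t atTop atTop ∧
    Tendsto (fun k => γ (t k)) atTop (𝓝 y)}

/-- The α-limit set (within `X`) of a curve `γ`. -/
def alphaSet {n : ℕ} (X : Set (Fin n → ℝ)) (γ : ℝ → Fin n → ℝ) :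
    Set (Fin n → ℝ) :=
  {y | y ∈ X ∧ ∃ t : ℕ → ℝ, Tendsto t atTop atBot ∧
    Tendsto (fun k => γ (t k)) atTop (𝓝 y)}

/-- The Euclidean norm on `Fin n → ℝ`. -/
def eunorm {n : ℕ} (v : Fin n → ℝ) : ℝ := Real.sqrt (∑ i, (v i) ^ 2)

/-- `X` is order-convex: it contains the order interval of any two of its points. -/
def orderConvex {n : ℕ} (X : Set (Fin n → ℝ)) : Prop :=
  ∀ x ∈ X, ∀ y ∈ X, x ≤ y → Set.Icc x y ⊆ X

/-!
Suppose that the limit set of an orbit `γ` is not a singleton, and let `c` be the value of `H` on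
`γ`. By strong monotonicity no two limit points `x`, `y` satisfy `x ≪ y`. If `∇H` were semidefinite
at some limit point, the Lyapunov functions `⟨∇H, f⁺⟩` and `H (x ⊔ p)` would force convergence.
So at every limit point `∇H` is orthogonal to a positive vector, that is, level sets of `H` are
tangent to this vector.

Let `z` be a limit point with `f z ≠ 0`. The orbit returns to a plane section at `z` that contains
the positive vector, and near `z` points of the section on one level are comparable, so
`γ a ≤ γ b` for some arc of `γ` with ends near `z`, up to the symmetry `x ↦ -x`. Project `ℝ³` to a
plane along the positive vector. The frontier of the set of points above the arc is a graph over
this plane, and every orbit meeting the frontier off the arc crosses it, so that `|H - c|` satisfies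
a maximum principle there. Apply this over the points of non-zero index with respect to the
projected arc closed up by its chord: on the border of this region `|H - c|` is small, because the
chord is short, whereas the region contains points at a definite distance from the arc in the
direction of `∇H z`, where `|H - c|` is not small.
-/

open scoped Matrix NNReal

local infix:50 " ≪ " => strLt

section Positivity

variable {n : ℕ}

/-- A Metzler matrix has nonnegative off-diagonal entries. The linear system `v' = M v` of such a
matrix preserves the nonnegative orthant forwards in time. -/
def IsMetzler (M : Matrix (Fin n) (Fin n) ℝ) : Prop := ∀ i j, i ≠ j → 0 ≤ M i j

/-- `γ` solves the autonomous equation `x' = f x` on `s`. -/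
abbrev IsSol {E : Type*} [NormedAddCommGroup E] [NormedSpace ℝ E] (f : E → E) (γ : ℝ → E)
    (s : Set ℝ) : Prop :=
  IsIntegralCurveOn γ (fun _ ↦ f) s

/-- `d` solves the linear equation `v' = M(t) v` on `s`. -/
abbrev IsLinSol (M : ℝ → Matrix (Fin n) (Fin n) ℝ) (d : ℝ → Fin n → ℝ) (s : Set ℝ) : Prop :=
  IsIntegralCurveOn d (fun t v ↦ M t *ᵥ v) s

lemma hasDerivAt_min_zero_sq (x : ℝ) :
    HasDerivAt (fun y : ℝ ↦ (min y 0) ^ 2) (2 * min x 0) x := by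
  rcases lt_trichotomy x 0 with h | rfl | h
  · rw [min_eq_left h.le]
    refine HasDerivAt.congr_of_eventuallyEq (by simpa using hasDerivAt_pow 2 x) ?_
    filter_upwards [gt_mem_nhds h] with y hy
    rw [min_eq_left hy.le]
  · have hle : (fun y : ℝ ↦ (min y 0) ^ 2) =O[𝓝 0] fun y ↦ y ^ 2 := by
      refine Asymptotics.IsBigO.of_bound 1 (Eventually.of_forall fun y ↦ ?_)
      rw [one_mul, norm_pow, norm_pow, Real.norm_eq_abs, Real.norm_eq_abs]
      gcongr 1
      rcases le_total y 0 with h | h <;> simp [h]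
    simpa [hasDerivAt_iff_isLittleO] using
      hle.trans_isLittleO (Asymptotics.isLittleO_pow_id one_lt_two)
  · rw [min_eq_right h.le, mul_zero]
    refine (hasDerivAt_const x (0 : ℝ)).congr_of_eventuallyEq ?_
    filter_upwards [lt_mem_nhds h] with y hy
    rw [min_eq_right hy.le, zero_pow two_ne_zero]

lemma antitoneOn_exp_mul_of_deriv_le {F F' : ℝ → ℝ} {a b K : ℝ}
    (hF : ∀ t ∈ Icc a b, HasDerivWithinAt F (F' t) (Icc a b) t)
    (hF' : ∀ t ∈ Icc a b, F' t ≤ K * F t) :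
    AntitoneOn (fun t ↦ Real.exp (-K * t) * F t) (Icc a b) := by
  have hderiv : ∀ t ∈ Icc a b, HasDerivWithinAt (fun t ↦ Real.exp (-K * t) * F t)
      (Real.exp (-K * t) * (F' t - K * F t)) (Icc a b) t := fun t ht ↦ by
    have hexp : HasDerivAt (fun t ↦ Real.exp (-K * t)) (Real.exp (-K * t) * -K) t := by
      simpa using ((hasDerivAt_id t).const_mul (-K)).exp
    exact (hexp.hasDerivWithinAt.mul (hF t ht)).congr_deriv (by ring)
  refine antitoneOn_of_hasDerivWithinAt_nonpos (convex_Icc a b)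
    (fun t ht ↦ (hderiv t ht).continuousWithinAt)
    (fun t ht ↦ (hderiv t (interior_subset ht)).mono interior_subset) fun t ht ↦ ?_
  exact mul_nonpos_of_nonneg_of_nonpos (Real.exp_pos _).le
    (sub_nonpos.2 (hF' t (interior_subset ht)))

lemma IsMetzler.neg_mul_le_mulVec {M : Matrix (Fin n) (Fin n) ℝ} (hM : IsMetzler M) {K : ℝ}
    (hK : ∀ i j, |M i j| ≤ K) {v : Fin n → ℝ} (hv : 0 ≤ v) (i : Fin n) :
    -K * v i ≤ (M *ᵥ v) i := by
  have hrest : 0 ≤ ∑ j ∈ Finset.univ.erase i, M i j * v j :=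
    Finset.sum_nonneg fun j hj ↦ mul_nonneg (hM i j (Finset.ne_of_mem_erase hj).symm) (hv j)
  have hdiag : -K * v i ≤ M i i * v i :=
    mul_le_mul_of_nonneg_right (neg_le_of_abs_le (hK i i)) (hv i)
  have hsplit := Finset.add_sum_erase Finset.univ (fun j ↦ M i j * v j) (Finset.mem_univ i)
  simp only [Matrix.mulVec, dotProduct]
  linarith

lemma IsMetzler.min_zero_mul_mulVec_le {M : Matrix (Fin n) (Fin n) ℝ} (hM : IsMetzler M) {K : ℝ}
    (hK : ∀ i j, |M i j| ≤ K) (v : Fin n → ℝ) (i : Fin n) :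
    min (v i) 0 * (M *ᵥ v) i ≤ min (v i) 0 * (K * ∑ j, min (v j) 0) := by
  rcases le_total 0 (v i) with hi | hi
  · simp [hi]
  refine mul_le_mul_of_nonpos_left ?_ (min_le_right _ _)
  simp only [Matrix.mulVec, dotProduct, Finset.mul_sum]
  refine Finset.sum_le_sum fun j _ ↦ ?_
  have hKj := abs_le.1 (hK i j)
  rcases le_total (v j) 0 with hj | hj
  · rw [min_eq_left hj]
    exact mul_le_mul_of_nonpos_right hKj.2 hj
  · rw [min_eq_right hj, mul_zero]
    rcases eq_or_ne i j with rfl | hij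
    · simp [le_antisymm hi hj]
    · exact mul_nonneg (hM i j hij) hj

lemma exists_bound_matrix {M : ℝ → Matrix (Fin n) (Fin n) ℝ} {a b : ℝ}
    (hM : ContinuousOn M (Icc a b)) : ∃ K, ∀ t ∈ Icc a b, ∀ i j, |M t i j| ≤ K := by
  obtain ⟨K, hK⟩ := isCompact_Icc.exists_bound_of_continuousOn (E := Fin n → Fin n → ℝ) hM
  exact ⟨K, fun t ht i j ↦
    (norm_le_pi_norm (M t i) j).trans ((norm_le_pi_norm _ i).trans (hK t ht))⟩

lemma IsLinSol.nonneg {M : ℝ → Matrix (Fin n) (Fin n) ℝ} {d : ℝ → Fin n → ℝ} {a b : ℝ}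
    (hd : IsLinSol M d (Icc a b)) (hM : ContinuousOn M (Icc a b))
    (hMetz : ∀ t ∈ Icc a b, IsMetzler (M t)) (h0 : 0 ≤ d a) :
    ∀ t ∈ Icc a b, 0 ≤ d t := by
  obtain ⟨K, hK⟩ := exists_bound_matrix hM
  let N : ℝ → ℝ := fun t ↦ ∑ i, (min (d t i) 0) ^ 2
  have hN : ∀ t ∈ Icc a b, HasDerivWithinAt N
      (∑ i, 2 * min (d t i) 0 * (M t *ᵥ d t) i) (Icc a b) t := fun t ht ↦
    HasDerivWithinAt.fun_sum fun i _ ↦ HasDerivAt.comp_hasDerivWithinAt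
      (h₂ := fun y : ℝ ↦ (min y 0) ^ 2) t (hasDerivAt_min_zero_sq (d t i))
      (hasDerivWithinAt_pi.1 (hd t ht) i)
  have hN' : ∀ t ∈ Icc a b,
      ∑ i, 2 * min (d t i) 0 * (M t *ᵥ d t) i ≤ 2 * |K| * n * N t := fun t ht ↦ by
    calc ∑ i, 2 * min (d t i) 0 * (M t *ᵥ d t) i
        ≤ ∑ i, 2 * (min (d t i) 0 * (|K| * ∑ j, min (d t j) 0)) := by
          refine Finset.sum_le_sum fun i _ ↦ ?_
          rw [mul_assoc]
          exact mul_le_mul_of_nonneg_left ((hMetz t ht).min_zero_mul_mulVec_le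
            (fun i j ↦ (hK t ht i j).trans (le_abs_self K)) _ i) zero_le_two
      _ = 2 * |K| * (∑ i, min (d t i) 0) ^ 2 := by
          rw [← Finset.mul_sum, ← Finset.sum_mul]
          ring
      _ ≤ 2 * |K| * (n * N t) := by
          gcongr
          simpa using sq_sum_le_card_mul_sum_sq (s := Finset.univ) (f := fun i ↦ min (d t i) 0)
      _ = 2 * |K| * n * N t := by ring
  intro t ht i
  have hNa : N a = 0 := Finset.sum_eq_zero fun i _ ↦ by simpa using h0 i
  have hNt : Real.exp (-(2 * |K| * n) * t) * N t ≤ 0 := by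
    simpa [hNa] using
      antitoneOn_exp_mul_of_deriv_le hN hN' (left_mem_Icc.2 (ht.1.trans ht.2)) ht ht.1
  have hNt' : N t ≤ 0 := nonpos_of_mul_nonpos_right hNt (Real.exp_pos _)
  have hi : (min (d t i) 0) ^ 2 ≤ 0 := (Finset.single_le_sum
    (f := fun i ↦ (min (d t i) 0) ^ 2) (fun _ _ ↦ sq_nonneg _) (Finset.mem_univ i)).trans hNt'
  simpa using pow_eq_zero_iff two_ne_zero |>.1 (le_antisymm hi (sq_nonneg _))

lemma IsLinSol.pos_of_pos {M : ℝ → Matrix (Fin n) (Fin n) ℝ} {d : ℝ → Fin n → ℝ} {a b : ℝ}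
    (hd : IsLinSol M d (Icc a b)) (hM : ContinuousOn M (Icc a b))
    (hMetz : ∀ t ∈ Icc a b, IsMetzler (M t)) (hnn : ∀ t ∈ Icc a b, 0 ≤ d t) {i : Fin n} {s t : ℝ}
    (hs : s ∈ Icc a b) (ht : t ∈ Icc a b) (hst : s ≤ t) (hpos : 0 < d s i) : 0 < d t i := by
  obtain ⟨K, hK⟩ := exists_bound_matrix hM
  have hanti := antitoneOn_exp_mul_of_deriv_le (F := fun t ↦ -d t i) (K := -K)
    (fun t ht ↦ (hasDerivWithinAt_pi.1 (hd t ht) i).neg)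
    (fun t ht ↦ by
      have := (hMetz t ht).neg_mul_le_mulVec (hK t ht) (hnn t ht) i
      linarith) hs ht hst
  refine pos_of_mul_pos_right (a := Real.exp (- -K * t)) ?_ (Real.exp_pos _).le
  linarith [mul_pos (Real.exp_pos (- -K * s)) hpos]

lemma IsMetzler.exists_mulVec_pos {M : Matrix (Fin n) (Fin n) ℝ} (hM : IsMetzler M)
    (hirr : matIrred M) {v : Fin n → ℝ} (hv : 0 ≤ v) (hv0 : v ≠ 0) (hz : ∃ i, v i = 0) :
    ∃ i, v i = 0 ∧ 0 < (M *ᵥ v) i := by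
  obtain ⟨i, hi, j, hj, hij⟩ := hirr {i | v i = 0} hz fun h ↦ hv0 (funext (eq_univ_iff_forall.1 h))
  have hne : i ≠ j := fun h ↦ hj (h ▸ hi)
  refine ⟨i, hi, Finset.sum_pos' (fun k _ ↦ ?_) ⟨j, Finset.mem_univ j, ?_⟩⟩
  · rcases eq_or_ne i k with rfl | hk
    · rw [show v i = 0 from hi, mul_zero]
    · exact mul_nonneg (hM i k hk) (hv k)
  · exact mul_pos ((hM i j hne).lt_of_ne' hij) ((hv j).lt_of_ne' hj)

lemma IsLinSol.pos {M : ℝ → Matrix (Fin n) (Fin n) ℝ} {d : ℝ → Fin n → ℝ} {a b : ℝ}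
    (hd : IsLinSol M d (Icc a b)) (hM : ContinuousOn M (Icc a b))
    (hMetz : ∀ t ∈ Icc a b, IsMetzler (M t)) (hirr : ∀ t ∈ Icc a b, matIrred (M t))
    (h0 : 0 ≤ d a) (h0' : d a ≠ 0) : ∀ t ∈ Ioc a b, 0 ≪ d t := by
  have hnn := hd.nonneg hM hMetz h0
  have hzero : ∀ {i s t}, s ∈ Icc a b → t ∈ Icc a b → s ≤ t → d t i = 0 → d s i = 0 :=
    fun {i s t} hs ht hst h ↦ by
      by_contra hne
      exact (hd.pos_of_pos hM hMetz hnn hs ht hst ((hnn s hs i).lt_of_ne' hne)).ne' h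
  intro t ht i
  by_contra hneg
  have hdti : d t i = 0 := le_antisymm (not_lt.1 hneg) (hnn t ⟨ht.1.le, ht.2⟩ i)
  have htI : t ∈ Icc a b := ⟨ht.1.le, ht.2⟩
  have hsub : Icc a t ⊆ Icc a b := Icc_subset_Icc_right ht.2
  have hdt : d t ≠ 0 := fun h ↦
    h0' (funext fun j ↦ hzero (hsub (left_mem_Icc.2 ht.1.le)) htI ht.1.le (congrFun h j))
  obtain ⟨k, hk, hpos⟩ :=
    (hMetz t htI).exists_mulVec_pos (hirr t htI) (hnn t htI) hdt ⟨i, hdti⟩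
  -- Zeros propagate backwards, so `d · k` vanishes on `Icc a t`, although its slope at `t` is
  -- positive.
  have hconst : HasDerivWithinAt (fun r ↦ d r k) 0 (Icc a t) t :=
    (hasDerivWithinAt_const t _ (0 : ℝ)).congr
      (fun r hr ↦ hzero (hsub hr) htI hr.2 hk) hk
  exact hpos.ne' ((uniqueDiffOn_Icc ht.1 t (right_mem_Icc.2 ht.1.le)).eq_deriv _
    ((hasDerivWithinAt_pi.1 (hd t htI) k).mono hsub) hconst)

end Positivity

section AveragedDerivative

variable {E F : Type*} [NormedAddCommGroup E] [NormedSpace ℝ E]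
  [NormedAddCommGroup F] [NormedSpace ℝ F]

/-- The derivative of `f` averaged over the segment from `x` to `y`. It satisfies
`avgFDeriv f x y (y - x) = f y - f x` and is jointly continuous if `f` is `C¹`. -/
def avgFDeriv (f : E → F) (x y : E) : E →L[ℝ] F := ∫ θ in (0 : ℝ)..1, fderiv ℝ f (x + θ • (y - x))

lemma continuous_fderiv_segment {f : E → F} (hf : ContDiff ℝ 1 f) (x y : E) :
    Continuous fun θ : ℝ ↦ fderiv ℝ f (x + θ • (y - x)) :=
  (hf.continuous_fderiv one_ne_zero).comp (by fun_prop)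

lemma continuous_avgFDeriv {f : E → F} (hf : ContDiff ℝ 1 f) :
    Continuous fun p : E × E ↦ avgFDeriv f p.1 p.2 := by
  refine intervalIntegral.continuous_parametric_intervalIntegral_of_continuous' ?_ 0 1
  exact (hf.continuous_fderiv one_ne_zero).comp (by fun_prop)

variable [CompleteSpace F]

lemma avgFDeriv_self (f : E → F) (x : E) : avgFDeriv f x x = fderiv ℝ f x := by
  simp [avgFDeriv]

lemma avgFDeriv_sub {f : E → F} (hf : ContDiff ℝ 1 f) (x y : E) :
    avgFDeriv f x y (y - x) = f y - f x := by
  have hderiv : ∀ θ : ℝ, HasDerivAt (fun θ : ℝ ↦ f (x + θ • (y - x)))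
      (fderiv ℝ f (x + θ • (y - x)) (y - x)) θ := fun θ ↦ by
    have hseg : HasDerivAt (fun θ : ℝ ↦ x + θ • (y - x)) (y - x) θ := by
      simpa using ((hasDerivAt_id θ).smul_const (y - x)).const_add x
    exact ((hf.differentiable one_ne_zero _).hasFDerivAt).comp_hasDerivAt θ hseg
  have hcont := continuous_fderiv_segment hf x y
  rw [avgFDeriv, ContinuousLinearMap.intervalIntegral_apply (hcont.intervalIntegrable 0 1),
    intervalIntegral.integral_eq_sub_of_hasDerivAt (fun θ _ ↦ hderiv θ)
      ((hcont.clm_apply continuous_const).intervalIntegrable 0 1)]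
  simp

lemma avgFDeriv_add_smul {f : E → F} (hf : ContDiff ℝ 1 f) (x e : E) {s : ℝ} (hs : s ≠ 0) :
    avgFDeriv f x (x + s • e) e = s⁻¹ • (f (x + s • e) - f x) := by
  rw [← avgFDeriv_sub hf, add_sub_cancel_left, map_smul, inv_smul_smul₀ hs]

lemma tendstoLocallyUniformlyOn_of_continuousOn {X Y Z : Type*} [TopologicalSpace X]
    [TopologicalSpace Y] [UniformSpace Z] {G : X → Y → Z} {x₀ : X} {s : Set Y} {l : Filter X}
    (hl : l ≤ 𝓝 x₀) (hG : ContinuousOn (fun p : X × Y ↦ G p.1 p.2) (univ ×ˢ s)) :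
    TendstoLocallyUniformlyOn G (G x₀) l s := by
  rw [tendstoLocallyUniformlyOn_iff_forall_tendsto]
  intro y hy
  have hjoint : Tendsto (fun p : X × Y ↦ G p.1 p.2) (l ×ˢ 𝓝[s] y) (𝓝 (G x₀ y)) := by
    refine (hG (x₀, y) ⟨mem_univ _, hy⟩).tendsto.mono_left ?_
    rw [nhdsWithin_prod_eq, nhdsWithin_univ]
    exact Filter.prod_mono_left _ hl
  have hlimit : Tendsto (fun p : X × Y ↦ G x₀ p.2) (l ×ˢ 𝓝[s] y) (𝓝 (G x₀ y)) := by
    have hGx₀ : ContinuousOn (G x₀) s :=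
      hG.comp (f := fun y ↦ (x₀, y)) (by fun_prop) fun y hy ↦ ⟨mem_univ _, hy⟩
    exact (hGx₀ y hy).tendsto.comp tendsto_snd
  exact (hlimit.prodMk_nhds hjoint).mono_right (nhds_le_uniformity _)

end AveragedDerivative

section AdjointEquation

variable {E : Type*} [NormedAddCommGroup E] [NormedSpace ℝ E]

lemma IsSol.hasDerivAt {f : E → E} {γ : ℝ → E} {A : Set ℝ} (hγ : IsSol f γ A) (hA : IsOpen A)
    {t : ℝ} (ht : t ∈ A) : HasDerivAt γ (f (γ t)) t :=
  (hγ t ht).hasDerivAt (hA.mem_nhds ht)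

-- `H` is only `C¹`, so `t ↦ DH(γ t)` cannot be differentiated directly; its difference quotients
-- in the direction `e` can, because `⟨∇H, f⟩ = 0` removes the factor `1 / s` from their derivative.
lemma IsSol.hasDerivAt_fderiv_firstIntegral [CompleteSpace E] {f : E → E} {H : E → ℝ}
    {γ : ℝ → E} {A : Set ℝ} (hf : ContDiff ℝ 1 f) (hH : ContDiff ℝ 1 H)
    (hfH : ∀ x, fderiv ℝ H x (f x) = 0)
    (hA : IsOpen A) (hγ : IsSol f γ A) (e : E) {t : ℝ} (ht : t ∈ A) :
    HasDerivAt (fun t ↦ fderiv ℝ H (γ t) e) (-(fderiv ℝ H (γ t) (fderiv ℝ f (γ t) e))) t := by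
  let Q : ℝ → ℝ → ℝ := fun s t ↦ avgFDeriv H (γ t) (γ t + s • e) e
  let Q' : ℝ → ℝ → ℝ := fun s t ↦
    -(fderiv ℝ H (γ t + s • e) (avgFDeriv f (γ t) (γ t + s • e) e))
  have hQ' : ∀ s ≠ 0, ∀ t ∈ A, HasDerivAt (Q s) (Q' s t) t := fun s hs t ht ↦ by
    have hdiff : ∀ x, HasFDerivAt H (fderiv ℝ H x) x :=
      fun x ↦ (hH.differentiable one_ne_zero x).hasFDerivAt
    have hγt := hγ.hasDerivAt hA ht
    have hderiv := (((hdiff _).comp_hasDerivAt t (hγt.add_const (s • e))).sub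
      ((hdiff _).comp_hasDerivAt t hγt)).const_smul s⁻¹
    refine (hderiv.congr_of_eventuallyEq
      (.of_forall fun r ↦ avgFDeriv_add_smul hH _ e hs)).congr_deriv ?_
    simp only [Q', avgFDeriv_add_smul hf _ e hs, map_smul, map_sub, hfH]
    simp
  have hcont : ContinuousOn (fun p : ℝ × ℝ ↦ Q' p.1 p.2) (univ ×ˢ A) := by
    have hγc : ContinuousOn (fun p : ℝ × ℝ ↦ γ p.2) (univ ×ˢ A) :=
      hγ.continuousOn.comp continuousOn_snd fun p hp ↦ hp.2
    have hγs : ContinuousOn (fun p : ℝ × ℝ ↦ γ p.2 + p.1 • e) (univ ×ˢ A) :=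
      hγc.add (continuous_fst.smul continuous_const).continuousOn
    exact (((hH.continuous_fderiv one_ne_zero).comp_continuousOn hγs).clm_apply
      (((continuous_avgFDeriv hf).comp_continuousOn (hγc.prodMk hγs)).clm_apply
        continuousOn_const)).neg
  have hlim : ∀ t ∈ A, Tendsto (fun s ↦ Q s t) (𝓝[≠] 0) (𝓝 (fderiv ℝ H (γ t) e)) := fun t _ ↦ by
    have hQ : Continuous fun s ↦ Q s t :=
      ((continuous_avgFDeriv hH).comp (by fun_prop : Continuous fun s : ℝ ↦
        (γ t, γ t + s • e))).clm_apply continuous_const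
    refine (hQ.tendsto' 0 _ ?_).mono_left nhdsWithin_le_nhds
    simp [Q, avgFDeriv_self]
  have hderiv := hasDerivAt_of_tendstoLocallyUniformlyOn (l := 𝓝[≠] (0 : ℝ)) hA
    (tendstoLocallyUniformlyOn_of_continuousOn nhdsWithin_le_nhds hcont)
    (eventually_mem_nhdsWithin.mono hQ') hlim ht
  simpa [Q', avgFDeriv_self] using hderiv

end AdjointEquation

section VectorField

variable {n : ℕ} {f : (Fin n → ℝ) → Fin n → ℝ} {H : (Fin n → ℝ) → ℝ} {x y γ : ℝ → Fin n → ℝ}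
  {a b : ℝ}

/-- A cooperative irreducible `C¹` vector field on `ℝⁿ`. -/
structure IsCoopIrred (f : (Fin n → ℝ) → Fin n → ℝ) : Prop where
  contDiff : ContDiff ℝ 1 f
  isMetzler : ∀ x, IsMetzler (jacMat f x)
  irreducible : ∀ x, matIrred (jacMat f x)

/-- A `C¹` first integral of `x' = f x` without critical points. -/
structure IsFirstIntegral (f : (Fin n → ℝ) → Fin n → ℝ) (H : (Fin n → ℝ) → ℝ) : Prop where
  contDiff : ContDiff ℝ 1 H
  fderiv_apply : ∀ x, fderiv ℝ H x (f x) = 0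
  fderiv_ne_zero : ∀ x, fderiv ℝ H x ≠ 0

/-- The gradient of `H` as a vector of partial derivatives. -/
def grad (H : (Fin n → ℝ) → ℝ) (x : Fin n → ℝ) : Fin n → ℝ := fun i ↦ fderiv ℝ H x (Pi.single i 1)

lemma fderiv_eq_mulVec (f : (Fin n → ℝ) → Fin n → ℝ) (x v : Fin n → ℝ) :
    fderiv ℝ f x v = Matrix.of (jacMat f x) *ᵥ v :=
  (LinearMap.toMatrix'_mulVec (fderiv ℝ f x : (Fin n → ℝ) →ₗ[ℝ] Fin n → ℝ) v).symm

lemma fderiv_eq_dotProduct (H : (Fin n → ℝ) → ℝ) (x v : Fin n → ℝ) :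
    fderiv ℝ H x v = grad H x ⬝ᵥ v := by
  conv_lhs => rw [pi_eq_sum_univ' v, map_sum]
  simp [dotProduct, grad, mul_comm]

lemma grad_ne_zero (hH : IsFirstIntegral f H) (x : Fin n → ℝ) : grad H x ≠ 0 := fun h ↦
  hH.fderiv_ne_zero x (ContinuousLinearMap.ext fun v ↦ by simp [fderiv_eq_dotProduct, h])

lemma continuous_jacMat (hf : ContDiff ℝ 1 f) : Continuous (jacMat f) :=
  continuous_pi fun i ↦ continuous_pi fun _ ↦
    (continuous_apply i).comp ((hf.continuous_fderiv one_ne_zero).clm_apply continuous_const)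

lemma continuous_grad (hH : ContDiff ℝ 1 H) : Continuous (grad H) :=
  continuous_pi fun _ ↦ (hH.continuous_fderiv one_ne_zero).clm_apply continuous_const

lemma matIrred_transpose {M : Matrix (Fin n) (Fin n) ℝ} (hM : matIrred M) : matIrred Mᵀ := by
  intro S hS hS'
  obtain ⟨i, hi, j, hj, hij⟩ := hM Sᶜ (nonempty_compl.2 hS') fun h ↦
    hS.ne_empty (compl_univ_iff.1 h)
  exact ⟨j, not_not.1 hj, i, hi, hij⟩

/-- The Jacobian matrix of `f` averaged over the segment from `x` to `y`. -/
def avgJacMat (f : (Fin n → ℝ) → Fin n → ℝ) (x y : Fin n → ℝ) : Matrix (Fin n) (Fin n) ℝ :=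
  fun i j ↦ avgFDeriv f x y (Pi.single j 1) i

lemma avgJacMat_mulVec (hf : ContDiff ℝ 1 f) (x y : Fin n → ℝ) :
    avgJacMat f x y *ᵥ (y - x) = f y - f x := by
  rw [← avgFDeriv_sub hf]
  exact LinearMap.toMatrix'_mulVec (avgFDeriv f x y : (Fin n → ℝ) →ₗ[ℝ] Fin n → ℝ) _

lemma continuous_avgJacMat (hf : ContDiff ℝ 1 f) :
    Continuous fun p : (Fin n → ℝ) × (Fin n → ℝ) ↦ avgJacMat f p.1 p.2 :=
  continuous_pi fun i ↦ continuous_pi fun _ ↦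
    (continuous_apply i).comp ((continuous_avgFDeriv hf).clm_apply continuous_const)

lemma avgJacMat_apply (hf : ContDiff ℝ 1 f) (x y : Fin n → ℝ) (i j : Fin n) :
    avgJacMat f x y i j = ∫ θ in (0 : ℝ)..1, jacMat f (x + θ • (y - x)) i j :=
  (((ContinuousLinearMap.proj (R := ℝ) (φ := fun _ : Fin n ↦ ℝ) i).comp
    (ContinuousLinearMap.apply ℝ (Fin n → ℝ) (Pi.single j (1 : ℝ)))).intervalIntegral_comp_comm
    ((continuous_fderiv_segment hf x y).intervalIntegrable 0 1)).symm

lemma IsCoopIrred.isMetzler_avgJacMat (hf : IsCoopIrred f) (x y : Fin n → ℝ) :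
    IsMetzler (avgJacMat f x y) := fun i j hij ↦ by
  rw [avgJacMat_apply hf.contDiff]
  exact intervalIntegral.integral_nonneg zero_le_one fun θ _ ↦ hf.isMetzler _ i j hij

lemma IsCoopIrred.matIrred_avgJacMat (hf : IsCoopIrred f) (x y : Fin n → ℝ) :
    matIrred (avgJacMat f x y) := by
  intro S hS hS'
  obtain ⟨i, hi, j, hj, hij⟩ := hf.irreducible x S hS hS'
  have hne : i ≠ j := fun h ↦ hj (h ▸ hi)
  have hcont : Continuous fun θ : ℝ ↦ jacMat f (x + θ • (y - x)) i j :=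
    (continuous_apply_apply i j).comp ((continuous_jacMat hf.contDiff).comp (by fun_prop))
  refine ⟨i, hi, j, hj, ne_of_gt ?_⟩
  rw [avgJacMat_apply hf.contDiff]
  refine intervalIntegral.integral_pos zero_lt_one hcont.continuousOn
    (fun θ _ ↦ hf.isMetzler _ i j hne) ⟨0, by simp, ?_⟩
  simpa using (hf.isMetzler x i j hne).lt_of_ne' hij

lemma IsSol.isLinSol_sub (hf : ContDiff ℝ 1 f) {s : Set ℝ} (hx : IsSol f x s) (hy : IsSol f y s) :
    IsLinSol (fun t ↦ avgJacMat f (x t) (y t)) (fun t ↦ y t - x t) s := fun t ht ↦ by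
  simpa only [avgJacMat_mulVec hf] using (hy t ht).fun_sub (hx t ht)

lemma continuousOn_avgJacMat_sol (hf : ContDiff ℝ 1 f) {s : Set ℝ} (hx : IsSol f x s)
    (hy : IsSol f y s) : ContinuousOn (fun t ↦ avgJacMat f (x t) (y t)) s :=
  Continuous.comp_continuousOn (g := fun p : (Fin n → ℝ) × (Fin n → ℝ) ↦ avgJacMat f p.1 p.2)
    (f := fun t ↦ (x t, y t)) (continuous_avgJacMat hf) (hx.continuousOn.prodMk hy.continuousOn)

lemma IsCoopIrred.le_of_le (hf : IsCoopIrred f) (hx : IsSol f x (Icc a b))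
    (hy : IsSol f y (Icc a b)) (h : x a ≤ y a) : ∀ t ∈ Icc a b, x t ≤ y t := fun t ht ↦
  sub_nonneg.1 ((hx.isLinSol_sub hf.contDiff hy).nonneg
    (continuousOn_avgJacMat_sol hf.contDiff hx hy) (fun _ _ ↦ hf.isMetzler_avgJacMat _ _)
    (sub_nonneg.2 h) t ht)

lemma IsCoopIrred.strLt_of_lt (hf : IsCoopIrred f) (hx : IsSol f x (Icc a b))
    (hy : IsSol f y (Icc a b)) (h : x a < y a) : ∀ t ∈ Ioc a b, x t ≪ y t := fun t ht i ↦
  sub_pos.1 ((hx.isLinSol_sub hf.contDiff hy).pos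
    (continuousOn_avgJacMat_sol hf.contDiff hx hy) (fun _ _ ↦ hf.isMetzler_avgJacMat _ _)
    (fun _ _ ↦ hf.matIrred_avgJacMat _ _) (sub_nonneg.2 h.le) (sub_pos.2 h).ne' t ht i)

lemma IsSol.isLinSol_velocity (hf : ContDiff ℝ 1 f) {s : Set ℝ} (hγ : IsSol f γ s) :
    IsLinSol (fun t ↦ Matrix.of (jacMat f (γ t))) (fun t ↦ f (γ t)) s := fun t ht ↦ by
  simpa only [fderiv_eq_mulVec, Function.comp_def] using
    (hf.differentiable one_ne_zero (γ t)).hasFDerivAt.comp_hasDerivWithinAt t (hγ t ht)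

lemma IsCoopIrred.velocity_pos (hf : IsCoopIrred f) (hγ : IsSol f γ (Icc a b)) (h : 0 < f (γ a)) :
    ∀ t ∈ Ioc a b, 0 ≪ f (γ t) :=
  (hγ.isLinSol_velocity hf.contDiff).pos
    ((continuous_jacMat hf.contDiff).comp_continuousOn hγ.continuousOn)
    (fun _ _ ↦ hf.isMetzler _) (fun _ _ ↦ hf.irreducible _) h.le h.ne'

lemma IsSol.isLinSol_grad (hf : ContDiff ℝ 1 f) (hH : IsFirstIntegral f H) {A : Set ℝ}
    (hA : IsOpen A) (hγ : IsSol f γ A) :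
    IsLinSol (fun t ↦ -(Matrix.of (jacMat f (γ t)))ᵀ) (fun t ↦ grad H (γ t)) A := fun t ht ↦ by
  refine HasDerivAt.hasDerivWithinAt (hasDerivAt_pi.2 fun i ↦ ?_)
  refine (hγ.hasDerivAt_fderiv_firstIntegral hf hH.contDiff hH.fderiv_apply hA _ ht).congr_deriv ?_
  simp [fderiv_eq_dotProduct, Matrix.mulVec, dotProduct, jacMat, mul_comm]

lemma IsCoopIrred.grad_pos (hf : IsCoopIrred f) (hH : IsFirstIntegral f H) {A : Set ℝ}
    (hA : IsOpen A) (hγ : IsSol f γ A) (hab : Icc a b ⊆ A) (h : 0 ≤ grad H (γ b)) :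
    ∀ t ∈ Ico a b, 0 ≪ grad H (γ t) := fun t ht ↦ by
  have hmaps : MapsTo (fun r : ℝ ↦ -r) (Icc (-b) (-a)) (Icc a b) := fun r hr ↦
    ⟨by linarith [hr.2], by linarith [hr.1]⟩
  have hlin : IsLinSol (fun r ↦ (Matrix.of (jacMat f (γ (-r))))ᵀ) (fun r ↦ grad H (γ (-r)))
      (Icc (-b) (-a)) := fun r hr ↦ by
    have hderiv := ((hγ.isLinSol_grad hf.contDiff hH hA _ (hab (hmaps hr))).mono hab).scomp r
      (hasDerivAt_neg r).hasDerivWithinAt hmaps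
    simpa [Matrix.neg_mulVec, Function.comp_def] using hderiv
  have hcont : ContinuousOn (fun r ↦ (Matrix.of (jacMat f (γ (-r))))ᵀ) (Icc (-b) (-a)) :=
    (Continuous.matrix_transpose (A := fun x ↦ Matrix.of (jacMat f x))
      (continuous_jacMat hf.contDiff)).comp_continuousOn
      ((hγ.continuousOn.mono hab).comp continuousOn_neg hmaps)
  simpa using hlin.pos hcont (fun _ _ i j hij ↦ hf.isMetzler _ j i hij.symm)
    (fun _ _ ↦ matIrred_transpose (hf.irreducible _)) (by simpa using h)
    (grad_ne_zero hH _) (-t) ⟨by linarith [ht.2], by linarith [ht.1]⟩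

end VectorField

section Negation

variable {n : ℕ} {f : (Fin n → ℝ) → Fin n → ℝ} {H : (Fin n → ℝ) → ℝ} {γ : ℝ → Fin n → ℝ}

lemma fderiv_comp_neg' {E F : Type*} [NormedAddCommGroup E] [NormedSpace ℝ E]
    [NormedAddCommGroup F] [NormedSpace ℝ F] (g : E → F) (x : E) :
    fderiv ℝ (fun x ↦ g (-x)) x = -fderiv ℝ g (-x) := by
  simpa using fderiv_comp_smul (f := g) (x := x) (-1 : ℝ)

lemma jacMat_neg_comp_neg (f : (Fin n → ℝ) → Fin n → ℝ) (x : Fin n → ℝ) :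
    jacMat (fun x ↦ -f (-x)) x = jacMat f (-x) := by
  funext i j
  simp [jacMat, fderiv_fun_neg, fderiv_comp_neg']

lemma IsCoopIrred.neg (hf : IsCoopIrred f) : IsCoopIrred fun x ↦ -f (-x) where
  contDiff := (hf.contDiff.comp contDiff_neg).neg
  isMetzler x := by simpa only [jacMat_neg_comp_neg] using hf.isMetzler (-x)
  irreducible x := by simpa only [jacMat_neg_comp_neg] using hf.irreducible (-x)

lemma IsSol.neg {s : Set ℝ} (hγ : IsSol f γ s) : IsSol (fun x ↦ -f (-x)) (fun t ↦ -γ t) s :=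
  fun t ht ↦ by simpa using (hγ t ht).fun_neg

lemma IsFirstIntegral.comp_neg (hH : IsFirstIntegral f H) :
    IsFirstIntegral (fun x ↦ -f (-x)) fun x ↦ H (-x) where
  contDiff := hH.contDiff.comp contDiff_neg
  fderiv_apply x := by simp [fderiv_comp_neg', hH.fderiv_apply]
  fderiv_ne_zero x := by simpa [fderiv_comp_neg'] using hH.fderiv_ne_zero (-x)

lemma IsFirstIntegral.neg (hH : IsFirstIntegral f H) : IsFirstIntegral f fun x ↦ -H x where
  contDiff := hH.contDiff.neg
  fderiv_apply x := by simp [fderiv_fun_neg, hH.fderiv_apply]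
  fderiv_ne_zero x := by simpa [fderiv_fun_neg] using hH.fderiv_ne_zero x

end Negation

section LocalFlow

variable {E : Type*} [NormedAddCommGroup E] [NormedSpace ℝ E] {f : E → E} {x y : ℝ → E} {a b : ℝ}

/-- `Φ x`, for `x` in the closed ball of radius `R` around `x₀`, is the solution of `x' = f x` with
initial value `x` on the time interval `[-ε, ε]`. -/
structure IsLocalFlow (f : E → E) (Φ : E → ℝ → E) (x₀ : E) (R ε : ℝ) : Prop where
  radius_pos : 0 < R
  time_pos : 0 < ε
  map_zero : ∀ x ∈ Metric.closedBall x₀ R, Φ x 0 = x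
  isSol : ∀ x ∈ Metric.closedBall x₀ R, IsSol f (Φ x) (Icc (-ε) ε)
  continuousOn : ContinuousOn (Function.uncurry Φ) (Metric.closedBall x₀ R ×ˢ Icc (-ε) ε)

lemma exists_isLocalFlow [CompleteSpace E] (hf : ContDiff ℝ 1 f) (x₀ : E) :
    ∃ Φ R ε, IsLocalFlow f Φ x₀ R ε := by
  obtain ⟨ε, hε, _, r, _, _, hr, hpl⟩ :=
    IsPicardLindelof.of_contDiffAt_one (hf.contDiffAt (x := x₀))
  obtain ⟨Φ, hΦ, hcont⟩ :=
    (hpl 0).exists_forall_mem_closedBall_eq_hasDerivWithinAt_continuousOn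
  refine ⟨fun x t ↦ Φ (x, t), r, ε, hr, hε, fun x hx ↦ (hΦ x hx).1, fun x hx ↦ ?_, ?_⟩
  · simpa [IsIntegralCurveOn] using (hΦ x hx).2
  · simpa [Function.uncurry_def] using hcont

lemma IsSol.eqOn (hf : ContDiff ℝ 1 f) {t₀ : ℝ} (hx : IsSol f x (Icc a b))
    (hy : IsSol f y (Icc a b)) (ht : t₀ ∈ Ioo a b) (h : x t₀ = y t₀) : EqOn x y (Icc a b) := by
  let s := x '' Icc a b ∪ y '' Icc a b
  have hs : IsCompact s := (isCompact_Icc.image_of_continuousOn hx.continuousOn).union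
    (isCompact_Icc.image_of_continuousOn hy.continuousOn)
  obtain ⟨K, hK⟩ := hf.locallyLipschitz.locallyLipschitzOn.exists_lipschitzOnWith_of_compact hs
  have hderiv : ∀ {z}, IsSol f z (Icc a b) → ∀ t ∈ Ioo a b, HasDerivAt z (f (z t)) t :=
    fun hz t ht ↦ IsSol.hasDerivAt (hz.mono Ioo_subset_Icc_self) isOpen_Ioo ht
  exact ODE_solution_unique_of_mem_Icc (v := fun _ ↦ f) (s := fun _ ↦ s) (fun _ _ ↦ hK) ht
    hx.continuousOn (hderiv hx) (fun t ht ↦ .inl ⟨t, Ioo_subset_Icc_self ht, rfl⟩)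
    hy.continuousOn (hderiv hy) (fun t ht ↦ .inr ⟨t, Ioo_subset_Icc_self ht, rfl⟩) h

lemma IsSol.shift {γ : ℝ → E} {s s' : Set ℝ} (hγ : IsSol f γ s) (u : ℝ)
    (hs : ∀ t ∈ s', t + u ∈ s) : IsSol f (fun t ↦ γ (t + u)) s' :=
  (IsIntegralCurveOn.comp_add (v := fun _ ↦ f) hγ u).mono fun t ht ↦
    mem_vadd_set_iff_neg_vadd_mem.2 (by simpa [add_comm] using hs t ht)

lemma IsLocalFlow.eq_of_isSol (hf : ContDiff ℝ 1 f) {Φ : E → ℝ → E} {x₀ : E} {R ε : ℝ}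
    (hΦ : IsLocalFlow f Φ x₀ R ε) {γ : ℝ → E} {t : ℝ} (ht : γ t ∈ Metric.closedBall x₀ R)
    (hγ : IsSol f γ (Icc (t - ε) (t + ε))) {h : ℝ} (hh : h ∈ Icc (-ε) ε) :
    Φ (γ t) h = γ (t + h) := by
  have hshift : IsSol f (fun s ↦ γ (s + t)) (Icc (-ε) ε) :=
    hγ.shift t fun s hs ↦ ⟨by linarith [hs.1], by linarith [hs.2]⟩
  rw [add_comm]
  exact (hΦ.isSol _ ht).eqOn hf hshift ⟨neg_lt_zero.2 hΦ.time_pos, hΦ.time_pos⟩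
    (by simp [hΦ.map_zero _ ht]) hh

lemma isSol_const {z : E} (hz : f z = 0) (s : Set ℝ) : IsSol f (fun _ ↦ z) s := fun t _ ↦ by
  simpa [hz] using hasDerivWithinAt_const t s z

end LocalFlow

section PeakValley

variable {n : ℕ}

lemma strLt.le {x y : Fin n → ℝ} (h : x ≪ y) : x ≤ y := fun i ↦ (h i).le

lemma strLt.lt [NeZero n] {x y : Fin n → ℝ} (h : x ≪ y) : x < y :=
  h.le.lt_of_ne fun e ↦ (h 0).ne (congrFun e 0)

lemma eventually_strLt {X : Type*} {l : Filter X} {g k : X → Fin n → ℝ} {x y : Fin n → ℝ}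
    (hg : Tendsto g l (𝓝 x)) (hk : Tendsto k l (𝓝 y)) (h : x ≪ y) : ∀ᶠ z in l, g z ≪ k z :=
  eventually_all.2 fun i ↦ (tendsto_pi_nhds.1 hg i).eventually_lt (tendsto_pi_nhds.1 hk i) (h i)

variable {f : (Fin n → ℝ) → Fin n → ℝ} {γ : ℝ → Fin n → ℝ} {a c d : ℝ}

lemma IsCoopIrred.shift_le_shift (hf : IsCoopIrred f) {b s s' u : ℝ} (hγ : IsSol f γ (Icc a b))
    (hs : a ≤ s) (hs' : a ≤ s') (hu : 0 ≤ u) (hsu : s + u ≤ b) (hsu' : s' + u ≤ b)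
    (h : γ s ≤ γ s') : γ (s + u) ≤ γ (s' + u) := by
  simpa only [add_comm u] using hf.le_of_le (a := 0) (b := u)
    (hγ.shift s fun t ht ↦ ⟨by linarith [ht.1], by linarith [ht.2]⟩)
    (hγ.shift s' fun t ht ↦ ⟨by linarith [ht.1], by linarith [ht.2]⟩) (by simpa using h) u
    ⟨hu, le_rfl⟩

-- The Euclidean algorithm on `(m, k)`: translating `γ (c - m h) ≤ γ c` by the shorter of the two
-- time differences gives the same configuration with the longer one reduced.
lemma IsCoopIrred.not_peak_commensurable (hf : IsCoopIrred f) {h : ℝ} (hh : 0 < h) (m k : ℕ)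
    (hm : 0 < m) (hk : 0 < k) (hγ : IsSol f γ (Icc (c - m * h) (c + k * h)))
    (hleft : γ (c - m * h) < γ c) : ¬ γ (c + k * h) < γ c := by
  induction hN : m + k using Nat.strong_induction_on generalizing m k with
  | _ N ih =>
    intro hright
    have hmh : 0 < m * h := by positivity
    have hkh : 0 < k * h := by positivity
    have hshift : γ (c - m * h + k * h) < γ c :=
      (hf.shift_le_shift hγ le_rfl (by linarith) hkh.le (by linarith) le_rfl hleft.le).trans_lt
        hright
    rcases lt_trichotomy m k with hmk | rfl | hkm
    · have hcast : c + (k - m : ℕ) * h = c - m * h + k * h := by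
        push_cast [hmk.le]
        ring
      refine ih (m + (k - m)) (by omega) m (k - m) hm (by omega)
        (hγ.mono (Icc_subset_Icc_right ?_)) hleft rfl ?_
      · rw [hcast]
        linarith
      · rwa [hcast]
    · simp at hshift
    · have hcast : c - (m - k : ℕ) * h = c - m * h + k * h := by
        push_cast [hkm.le]
        ring
      refine ih (m - k + k) (by omega) (m - k) k (by omega) hk
        (hγ.mono (Icc_subset_Icc_left ?_)) ?_ rfl hright
      · rw [hcast]
        linarith
      · rwa [hcast]

lemma IsCoopIrred.not_peak [NeZero n] (hf : IsCoopIrred f) (hγ : IsSol f γ (Icc a d)) (hac : a < c)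
    (hcd : c < d) (hleft : γ a ≪ γ c) : ¬ γ d < γ c := by
  have hdc : 0 < d - c := sub_pos.2 hcd
  have ha : Tendsto γ (𝓝[>] a) (𝓝 (γ a)) :=
    ((hγ.continuousOn a ⟨le_rfl, (hac.trans hcd).le⟩).mono_of_mem_nhdsWithin
      (Icc_mem_nhdsGT (hac.trans hcd))).tendsto
  obtain ⟨u, hau, hu⟩ := mem_nhdsGT_iff_exists_Ioo_subset.1
    (eventually_strLt ha (tendsto_const_nhds (x := γ c)) hleft)
  -- Replace `a` by `a' = c - q (d - c)` with `q` rational, still close to `a`.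
  obtain ⟨q, hq, hq'⟩ := exists_rat_btwn
    (show (c - min u c) / (d - c) < (c - a) / (d - c) by gcongr; exact lt_min hau hac)
  have hq0 : 0 < q := by
    exact_mod_cast (div_nonneg (sub_nonneg.2 (min_le_right u c)) hdc.le).trans_lt hq
  rw [div_lt_iff₀ hdc] at hq
  rw [lt_div_iff₀ hdc] at hq'
  obtain ⟨m, hm⟩ := Int.eq_ofNat_of_zero_le (Rat.num_pos.2 hq0).le
  have hq_eq : (q : ℝ) = m / q.den := by
    have := Rat.cast_def (K := ℝ) q
    rwa [hm, Int.cast_natCast] at this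
  have hm0 : 0 < m := by exact_mod_cast hm ▸ Rat.num_pos.2 hq0
  have hden : (q.den : ℝ) ≠ 0 := by exact_mod_cast q.den_nz
  have ha' : c - m * ((d - c) / q.den) = c - q * (d - c) := by rw [hq_eq]; ring
  have hd : c + q.den * ((d - c) / q.den) = d := by field_simp; ring
  have hnot := hf.not_peak_commensurable (γ := γ) (c := c) (h := (d - c) / q.den)
    (div_pos hdc (by exact_mod_cast q.den_pos)) m q.den hm0 q.den_pos
  rw [ha', hd] at hnot
  exact hnot (hγ.mono (Icc_subset_Icc_left (by linarith)))
    (strLt.lt (hu ⟨by linarith, by linarith [min_le_left u c]⟩))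

lemma IsCoopIrred.not_valley [NeZero n] (hf : IsCoopIrred f) (hγ : IsSol f γ (Icc a d))
    (hac : a < c) (hcd : c < d) (hleft : γ c ≪ γ a) : ¬ γ c < γ d := fun hright ↦
  hf.neg.not_peak hγ.neg hac hcd (fun i ↦ by simpa using hleft i) (by simpa using hright)

end PeakValley

section LimitSet

variable {n : ℕ} {f : (Fin n → ℝ) → Fin n → ℝ} {H : (Fin n → ℝ) → ℝ} {γ : ℝ → Fin n → ℝ}
  {l : Filter ℝ} {A : Set ℝ}

/-- `γ` is a forward or backward half-orbit of `x' = f x`, according as `l` is `atTop` or `atBot`,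
defined at least on the open interval `A`. The limit points of `γ` are the `y` such that
`MapClusterPt y l γ`. -/
structure IsOrbit (f : (Fin n → ℝ) → Fin n → ℝ) (γ : ℝ → Fin n → ℝ) (l : Filter ℝ) (A : Set ℝ) :
    Prop where
  isSol : IsSol f γ A
  isOpen : IsOpen A
  ordConnected : OrdConnected A
  mem : A ∈ l
  eq_atTop_or_atBot : l = atTop ∨ l = atBot

lemma eq_of_hasDerivWithinAt_zero {F : ℝ → ℝ} {s : Set ℝ} (hs : OrdConnected s)
    (hF : ∀ t ∈ s, HasDerivWithinAt F 0 s t) {t t' : ℝ} (ht : t ∈ s) (ht' : t' ∈ s) :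
    F t = F t' := by
  have h := hs.convex.norm_image_sub_le_of_norm_hasDerivWithin_le (C := 0) hF (by simp) ht' ht
  rwa [zero_mul, norm_le_zero_iff, sub_eq_zero] at h

lemma IsFirstIntegral.eq_of_isSol (hH : IsFirstIntegral f H) {s : Set ℝ} (hγ : IsSol f γ s)
    (hs : OrdConnected s) {t t' : ℝ} (ht : t ∈ s) (ht' : t' ∈ s) : H (γ t) = H (γ t') :=
  eq_of_hasDerivWithinAt_zero (F := H ∘ γ) hs (fun r hr ↦ hH.fderiv_apply (γ r) ▸
    (hH.contDiff.differentiable one_ne_zero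
      (γ r)).hasFDerivAt.comp_hasDerivWithinAt r (hγ r hr)) ht ht'

lemma frequently_of_mapClusterPt {y : Fin n → ℝ} (hy : MapClusterPt y l γ)
    {P : (Fin n → ℝ) → Prop} (hP : ∀ᶠ x in 𝓝 y, P x) : ∃ᶠ t in l, P (γ t) :=
  mapClusterPt_iff_frequently.1 hy _ hP

lemma mapClusterPt_neg {y : Fin n → ℝ} (hy : MapClusterPt y l γ) :
    MapClusterPt (-y) l fun t ↦ -γ t :=
  MapClusterPt.continuousAt_comp (f := fun x ↦ -x) continuous_neg.continuousAt hy

namespace IsOrbit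

lemma neg (hγ : IsOrbit f γ l A) : IsOrbit (fun x ↦ -f (-x)) (fun t ↦ -γ t) l A where
  __ := hγ
  isSol := hγ.isSol.neg

lemma tendsto_add (hγ : IsOrbit f γ l A) (h : ℝ) : Tendsto (· + h) l l := by
  rcases hγ.eq_atTop_or_atBot with rfl | rfl
  · exact tendsto_atTop_add_const_right _ _ tendsto_id
  · exact tendsto_atBot_add_const_right _ _ tendsto_id

lemma eventually_Icc_subset (hγ : IsOrbit f γ l A) (δ : ℝ) :
    ∀ᶠ t in l, Icc (t - δ) (t + δ) ⊆ A := by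
  filter_upwards [(hγ.tendsto_add (-δ)).eventually hγ.mem, (hγ.tendsto_add δ).eventually hγ.mem]
    with t ht ht' using hγ.ordConnected.out ht ht'

lemma restrict (hγ : IsOrbit f γ l A) {S : Set ℝ} (hS : S ∈ l) :
    ∃ A' ⊆ A ∩ S, IsOrbit f γ l A' := by
  rcases hγ.eq_atTop_or_atBot with rfl | rfl
  · obtain ⟨N, hN⟩ := mem_atTop_sets.1 (inter_mem hγ.mem hS)
    have hsub : Ioi N ⊆ A ∩ S := fun t ht ↦ hN t (le_of_lt ht)
    exact ⟨Ioi N, hsub, hγ.isSol.mono (hsub.trans inter_subset_left), isOpen_Ioi,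
      ordConnected_Ioi, Ioi_mem_atTop N, .inl rfl⟩
  · obtain ⟨N, hN⟩ := mem_atBot_sets.1 (inter_mem hγ.mem hS)
    have hsub : Iio N ⊆ A ∩ S := fun t ht ↦ hN t (le_of_lt ht)
    exact ⟨Iio N, hsub, hγ.isSol.mono (hsub.trans inter_subset_left), isOpen_Iio,
      ordConnected_Iio, Iio_mem_atBot N, .inr rfl⟩

lemma exists_separated_times (hγ : IsOrbit f γ l A) (δ : ℝ) {P Q R : ℝ → Prop}
    (hP : ∃ᶠ t in l, P t) (hQ : ∃ᶠ t in l, Q t) (hR : ∃ᶠ t in l, R t) :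
    ∃ t₁ t₂ t₃, t₁ + δ < t₂ ∧ t₂ + δ < t₃ ∧ Icc (t₁ - δ) (t₃ + δ) ⊆ A ∧ P t₁ ∧ Q t₂ ∧ R t₃ := by
  suffices ∃ t₁ t₂ t₃, t₁ + δ < t₂ ∧ t₂ + δ < t₃ ∧ t₁ - δ ∈ A ∧ t₃ + δ ∈ A ∧ P t₁ ∧ Q t₂ ∧ R t₃ by
    obtain ⟨t₁, t₂, t₃, h₁₂, h₂₃, h₁, h₃, hPQR⟩ := this
    exact ⟨t₁, t₂, t₃, h₁₂, h₂₃, hγ.ordConnected.out h₁ h₃, hPQR⟩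
  have hsub : ∀ᶠ t in l, t - δ ∈ A := (hγ.tendsto_add (-δ)).eventually hγ.mem
  have hadd : ∀ᶠ t in l, t + δ ∈ A := (hγ.tendsto_add δ).eventually hγ.mem
  rcases hγ.eq_atTop_or_atBot with rfl | rfl
  · obtain ⟨t₁, h₁, hA₁⟩ := (hP.and_eventually hsub).exists
    obtain ⟨t₂, h₂, h₁₂⟩ := (hQ.and_eventually (eventually_gt_atTop (t₁ + δ))).exists
    obtain ⟨t₃, ⟨h₃, h₂₃⟩, hA₃⟩ :=
      ((hR.and_eventually (eventually_gt_atTop (t₂ + δ))).and_eventually hadd).exists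
    exact ⟨t₁, t₂, t₃, h₁₂, h₂₃, hA₁, hA₃, h₁, h₂, h₃⟩
  · obtain ⟨t₃, h₃, hA₃⟩ := (hR.and_eventually hadd).exists
    obtain ⟨t₂, h₂, h₂₃⟩ := (hQ.and_eventually (eventually_lt_atBot (t₃ - δ))).exists
    obtain ⟨t₁, ⟨h₁, h₁₂⟩, hA₁⟩ :=
      ((hP.and_eventually (eventually_lt_atBot (t₂ - δ))).and_eventually hsub).exists
    exact ⟨t₁, t₂, t₃, lt_sub_iff_add_lt.1 h₁₂, lt_sub_iff_add_lt.1 h₂₃, hA₁, hA₃, h₁, h₂, h₃⟩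

lemma firstIntegral_eq (hγ : IsOrbit f γ l A) (hH : IsFirstIntegral f H) {y : Fin n → ℝ}
    (hy : MapClusterPt y l γ) {t : ℝ} (ht : t ∈ A) : H (γ t) = H y := by
  by_contra hne
  have hne_near : ∀ᶠ x in 𝓝 y, H x ≠ H (γ t) :=
    hH.contDiff.continuous.continuousAt.eventually_ne (Ne.symm hne)
  obtain ⟨s, hs, hsA⟩ := ((frequently_of_mapClusterPt hy hne_near).and_eventually hγ.mem).exists
  exact hs (hH.eq_of_isSol hγ.isSol hγ.ordConnected hsA ht)

lemma exists_isSol_mapClusterPt (hγ : IsOrbit f γ l A) (hf : ContDiff ℝ 1 f) {p : Fin n → ℝ}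
    (hp : MapClusterPt p l γ) :
    ∃ ε > 0, ∃ x : ℝ → Fin n → ℝ, x 0 = p ∧ IsSol f x (Icc (-ε) ε) ∧
      ∀ h ∈ Icc (-ε) ε, MapClusterPt (x h) l γ := by
  obtain ⟨Φ, R, ε, hΦ⟩ := exists_isLocalFlow hf p
  have hpR : p ∈ Metric.closedBall p R := Metric.mem_closedBall_self hΦ.radius_pos.le
  refine ⟨ε, hΦ.time_pos, Φ p, hΦ.map_zero p hpR, hΦ.isSol p hpR, fun h hh ↦ ?_⟩
  have hcont : ContinuousAt (fun y ↦ Φ y h) p :=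
    (hΦ.continuousOn.comp (f := fun y ↦ (y, h)) (by fun_prop)
      (fun y hy ↦ ⟨hy, hh⟩)).continuousAt (Metric.closedBall_mem_nhds p hΦ.radius_pos)
  refine mapClusterPt_iff_frequently.2 fun U hU ↦ (hγ.tendsto_add h).frequently ?_
  refine ((frequently_of_mapClusterPt hp ((hcont.eventually hU).and (Metric.closedBall_mem_nhds p
    hΦ.radius_pos))).and_eventually (hγ.eventually_Icc_subset ε)).mono ?_
  rintro t ⟨⟨htU, htR⟩, htA⟩
  exact hΦ.eq_of_isSol hf htR (hγ.isSol.mono htA) hh ▸ htU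

lemma not_strLt [NeZero n] (hγ : IsOrbit f γ l A) (hf : IsCoopIrred f) {x y : Fin n → ℝ}
    (hx : MapClusterPt x l γ) (hy : MapClusterPt y l γ) : ¬ x ≪ y := fun hxy ↦ by
  have hprod : ∀ᶠ z in 𝓝 x ×ˢ 𝓝 y, z.1 ≪ z.2 := eventually_strLt tendsto_fst tendsto_snd hxy
  obtain ⟨P, hP, Q, hQ, hPQ⟩ := eventually_prod_iff.1 hprod
  obtain ⟨t₁, t₂, t₃, h₁₂, h₂₃, hA, h₁, h₂, h₃⟩ := hγ.exists_separated_times 0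
    (frequently_of_mapClusterPt hx hP) (frequently_of_mapClusterPt hy hQ)
    (frequently_of_mapClusterPt hx hP)
  rw [add_zero] at h₁₂ h₂₃
  rw [sub_zero, add_zero] at hA
  exact hf.not_peak (hγ.isSol.mono hA) h₁₂ h₂₃ (hPQ h₁ h₂) (hPQ h₃ h₂).lt

end IsOrbit

lemma IsSol.strLt_of_velocity_pos {a b : ℝ} (hγ : IsSol f γ (Icc a b)) (hab : a < b)
    (h : ∀ t ∈ Ioc a b, 0 ≪ f (γ t)) : γ a ≪ γ b := fun i ↦ by
  have hmono : StrictMonoOn (fun t ↦ γ t i) (Icc a b) := by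
    refine strictMonoOn_of_deriv_pos (convex_Icc a b)
      ((continuous_apply i).comp_continuousOn hγ.continuousOn) fun t ht ↦ ?_
    rw [interior_Icc] at ht
    rw [(hasDerivAt_pi.1
      (IsSol.hasDerivAt (hγ.mono Ioo_subset_Icc_self) isOpen_Ioo ht) i).deriv]
    exact h t (Ioo_subset_Ioc_self ht) i
  exact hmono ⟨le_rfl, hab.le⟩ ⟨hab.le, le_rfl⟩ hab

namespace IsOrbit

variable [NeZero n]

lemma eq_zero_of_velocity_nonneg (hγ : IsOrbit f γ l A) (hf : IsCoopIrred f) {q : Fin n → ℝ}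
    (hq : MapClusterPt q l γ) (h : 0 ≤ f q) : f q = 0 := by
  by_contra hne
  obtain ⟨ε, hε, x, rfl, hx, hlim⟩ := hγ.exists_isSol_mapClusterPt hf.contDiff hq
  have hx' : IsSol f x (Icc 0 ε) := hx.mono (Icc_subset_Icc_left (by linarith))
  exact hγ.not_strLt hf hq (hlim ε ⟨by linarith, le_rfl⟩)
    (hx'.strLt_of_velocity_pos hε (hf.velocity_pos hx' (h.lt_of_ne (Ne.symm hne))))

lemma eq_zero_of_velocity_nonpos (hγ : IsOrbit f γ l A) (hf : IsCoopIrred f) {q : Fin n → ℝ}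
    (hq : MapClusterPt q l γ) (h : f q ≤ 0) : f q = 0 := by
  simpa using hγ.neg.eq_zero_of_velocity_nonneg hf.neg (mapClusterPt_neg hq) (by simpa using h)

lemma eq_of_frequently_ge (hγ : IsOrbit f γ l A) (hf : IsCoopIrred f) {z q : Fin n → ℝ}
    (hz : f z = 0) (hzl : MapClusterPt z l γ) (h : ∃ᶠ t in l, z ≤ γ t)
    (hq : MapClusterPt q l γ) : q = z := by
  have hle : z ≤ q := by
    by_contra hn
    have hnot : ∀ᶠ x in 𝓝 q, ¬ z ≤ x := isClosed_Ici.isOpen_compl.mem_nhds hn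
    obtain ⟨t₁, t₂, t₃, h₁₂, h₂₃, hA, h₁, h₂, -⟩ :=
      hγ.exists_separated_times 0 h (frequently_of_mapClusterPt hq hnot) h
    exact h₂ (hf.le_of_le (isSol_const hz _) (hγ.isSol.mono ((Icc_subset_Icc (by linarith)
      (by linarith)).trans hA)) h₁ t₂ (right_mem_Icc.2 (by linarith)))
  by_contra hne
  obtain ⟨ε, hε, x, rfl, hx, hlim⟩ := hγ.exists_isSol_mapClusterPt hf.contDiff hq
  exact hγ.not_strLt hf hzl (hlim ε ⟨by linarith, le_rfl⟩)
    (hf.strLt_of_lt (isSol_const hz _) (hx.mono (Icc_subset_Icc_left (by linarith)))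
      (hle.lt_of_ne (Ne.symm hne)) ε ⟨hε, le_rfl⟩)

lemma eq_of_frequently_le (hγ : IsOrbit f γ l A) (hf : IsCoopIrred f) {z q : Fin n → ℝ}
    (hz : f z = 0) (hzl : MapClusterPt z l γ) (h : ∃ᶠ t in l, γ t ≤ z)
    (hq : MapClusterPt q l γ) : q = z := by
  simpa using hγ.neg.eq_of_frequently_ge hf.neg (z := -z) (by simpa using hz) (mapClusterPt_neg hzl)
    (by simpa using h) (mapClusterPt_neg hq)

end IsOrbit

end LimitSet

section PositiveGradient

variable {n : ℕ}

lemma le_of_forall_eventually_nhdsGT_le {F : ℝ → ℝ} {a b : ℝ} (hab : a ≤ b)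
    (hF : ContinuousOn F (Icc a b)) (h : ∀ s ∈ Ico a b, ∀ᶠ t in 𝓝[>] s, F t ≤ F s) : F b ≤ F a := by
  refine image_le_of_liminf_slope_right_le_deriv_boundary (B := fun _ ↦ F a) (B' := fun _ ↦ 0) hF
    le_rfl continuousOn_const (fun s _ ↦ hasDerivWithinAt_const s _ _) (fun s hs r hr ↦ ?_)
    ⟨hab, le_rfl⟩
  refine Eventually.frequently ?_
  filter_upwards [h s hs, self_mem_nhdsWithin] with t ht hst
  rw [slope_def_field]
  exact (div_nonpos_of_nonpos_of_nonneg (sub_nonpos.2 ht) (sub_nonneg.2 (le_of_lt hst))).trans_lt hr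

lemma norm_mulVec_le {M : Matrix (Fin n) (Fin n) ℝ} {K : ℝ} (hK0 : 0 ≤ K)
    (hK : ∀ i j, |M i j| ≤ K) (v : Fin n → ℝ) : ‖M *ᵥ v‖ ≤ n * K * ‖v‖ := by
  refine (pi_norm_le_iff_of_nonneg (by positivity)).2 fun i ↦ ?_
  calc ‖∑ j, M i j * v j‖ ≤ ∑ j, |M i j| * ‖v j‖ :=
        (norm_sum_le _ _).trans_eq (by simp only [norm_mul, Real.norm_eq_abs])
    _ ≤ ∑ _j : Fin n, K * ‖v‖ := Finset.sum_le_sum fun j _ ↦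
        mul_le_mul (hK i j) (norm_le_pi_norm v j) (norm_nonneg _) hK0
    _ = n * K * ‖v‖ := by simp [mul_assoc]

lemma exists_isLinSol {M : ℝ → Matrix (Fin n) (Fin n) ℝ} {a b : ℝ} (hab : a < b)
    (hM : ContinuousOn M (Icc a b)) (v₀ : Fin n → ℝ) :
    ∃ c ∈ Ioc a b, ∃ v, v a = v₀ ∧ IsLinSol M v (Icc a c) := by
  obtain ⟨K, hK⟩ := exists_bound_matrix hM
  let C : ℝ≥0 := n * K.toNNReal
  have hC : ∀ t ∈ Icc a b, ∀ v, ‖M t *ᵥ v‖ ≤ C * ‖v‖ := fun t ht v ↦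
    norm_mulVec_le K.toNNReal.2 (fun i j ↦ (hK t ht i j).trans K.le_coe_toNNReal) v
  let L : ℝ≥0 := C * (1 + ‖v₀‖₊)
  let c := min b (a + 1 / (L + 1))
  have hac : a < c := lt_min hab (lt_add_of_pos_right a (by positivity))
  have hcb : Icc a c ⊆ Icc a b := Icc_subset_Icc_right (min_le_left _ _)
  have hpl : IsPicardLindelof (fun t v ↦ M t *ᵥ v) (⟨a, left_mem_Icc.2 hac.le⟩ : Icc a c) v₀
      1 0 L C := by
    refine ⟨fun t ht ↦ ?_, fun v _ ↦ ?_, fun t ht v hv ↦ ?_, ?_⟩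
    · refine LipschitzWith.lipschitzOnWith (.of_dist_le_mul fun v w ↦ ?_)
      rw [dist_eq_norm, dist_eq_norm, ← Matrix.mulVec_sub]
      exact hC t (hcb ht) _
    · exact (continuous_id.matrix_mulVec continuous_const).comp_continuousOn (hM.mono hcb)
    · have hv' : ‖v‖ ≤ 1 + ‖v₀‖ := by
        linarith [norm_sub_norm_le v v₀, mem_closedBall_iff_norm.1 hv, NNReal.coe_one]
      exact (hC t (hcb ht) v).trans (mul_le_mul_of_nonneg_left hv' C.2)
    · have hlen : c - a ≤ 1 / (L + 1) := by linarith [min_le_right b (a + 1 / ((L : ℝ) + 1))]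
      have hmul : (L : ℝ) * (c - a) ≤ L * (1 / (L + 1)) := by gcongr
      have hone : (L : ℝ) * (1 / (L + 1)) ≤ 1 := by
        rw [mul_one_div, div_le_one (by positivity)]
        linarith
      simpa [hac.le] using hmul.trans hone
  exact ⟨c, ⟨hac, min_le_left _ _⟩, hpl.exists_eq_forall_mem_Icc_hasDerivWithinAt₀⟩

lemma IsLinSol.dotProduct_eq {M : ℝ → Matrix (Fin n) (Fin n) ℝ} {v w : ℝ → Fin n → ℝ} {s : Set ℝ}
    (hs : OrdConnected s) (hv : IsLinSol M v s) (hw : IsLinSol (fun t ↦ -(M t)ᵀ) w s) {t t' : ℝ}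
    (ht : t ∈ s) (ht' : t' ∈ s) : w t ⬝ᵥ v t = w t' ⬝ᵥ v t' := by
  refine eq_of_hasDerivWithinAt_zero (F := fun t ↦ w t ⬝ᵥ v t) hs (fun r hr ↦ ?_) ht ht'
  have hderiv : HasDerivWithinAt (fun t ↦ w t ⬝ᵥ v t)
      ((-(M r)ᵀ) *ᵥ w r ⬝ᵥ v r + w r ⬝ᵥ M r *ᵥ v r) s r := by
    simp only [dotProduct, ← Finset.sum_add_distrib]
    exact HasDerivWithinAt.fun_sum fun i _ ↦
      (hasDerivWithinAt_pi.1 (hw r hr) i).mul (hasDerivWithinAt_pi.1 (hv r hr) i)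
  convert hderiv using 1
  rw [Matrix.neg_mulVec, Matrix.mulVec_transpose, neg_dotProduct, Matrix.dotProduct_mulVec,
    neg_add_cancel]

lemma exists_isLinSol_sup_zero {M : ℝ → Matrix (Fin n) (Fin n) ℝ} {u : ℝ → Fin n → ℝ} {a b : ℝ}
    (hab : a < b) (hM : ContinuousOn M (Icc a b)) (hu : IsLinSol M u (Icc a b)) :
    ∃ c ∈ Ioc a b, ∃ v, v a = u a ⊔ 0 ∧ IsLinSol M v (Icc a c) ∧
      IsLinSol M (fun t ↦ v t - u t) (Icc a c) := by
  obtain ⟨c, hc, v, hva, hv⟩ := exists_isLinSol hab hM (u a ⊔ 0)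
  refine ⟨c, hc, v, hva, hv, fun t ht ↦ ?_⟩
  simpa only [Matrix.mulVec_sub] using
    (hv t ht).fun_sub (hu.mono (Icc_subset_Icc_right hc.2) t ht)

section Adjoint

variable {M : ℝ → Matrix (Fin n) (Fin n) ℝ} {u w : ℝ → Fin n → ℝ} {a b : ℝ}

lemma eventually_dotProduct_sup_zero_le (hab : a < b) (hM : ContinuousOn M (Icc a b))
    (hMetz : ∀ t ∈ Icc a b, IsMetzler (M t)) (hu : IsLinSol M u (Icc a b))
    (hw : IsLinSol (fun t ↦ -(M t)ᵀ) w (Icc a b)) (hw0 : ∀ t ∈ Icc a b, 0 ≤ w t) :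
    ∀ᶠ t in 𝓝[>] a, w t ⬝ᵥ (u t ⊔ 0) ≤ w a ⬝ᵥ (u a ⊔ 0) := by
  obtain ⟨c, hc, v, hva, hv, hvu⟩ := exists_isLinSol_sup_zero hab hM hu
  have hsub : Icc a c ⊆ Icc a b := Icc_subset_Icc_right hc.2
  have hle : ∀ t ∈ Icc a c, u t ⊔ 0 ≤ v t := fun t ht ↦ sup_le
    (sub_nonneg.1 (hvu.nonneg (hM.mono hsub) (fun s hs ↦ hMetz s (hsub hs)) (by simp [hva]) t ht))
    (hv.nonneg (hM.mono hsub) (fun s hs ↦ hMetz s (hsub hs)) (by simp [hva]) t ht)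
  filter_upwards [Ioc_mem_nhdsGT hc.1] with t ht
  have ht' : t ∈ Icc a c := Ioc_subset_Icc_self ht
  rw [← hva, ← hv.dotProduct_eq ordConnected_Icc (hw.mono hsub) ht' (left_mem_Icc.2 hc.1.le)]
  exact dotProduct_le_dotProduct_of_nonneg_left (hle t ht') (hw0 t (hsub ht'))

lemma eventually_dotProduct_sup_zero_lt [NeZero n] (hab : a < b) (hM : ContinuousOn M (Icc a b))
    (hMetz : ∀ t ∈ Icc a b, IsMetzler (M t)) (hirr : ∀ t ∈ Icc a b, matIrred (M t))
    (hu : IsLinSol M u (Icc a b)) (hw : IsLinSol (fun t ↦ -(M t)ᵀ) w (Icc a b))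
    (hw0 : ∀ t ∈ Icc a b, 0 ≪ w t) (hua : ¬ 0 ≤ u a) (hua' : ¬ u a ≤ 0) :
    ∀ᶠ t in 𝓝[>] a, w t ⬝ᵥ (u t ⊔ 0) < w a ⬝ᵥ (u a ⊔ 0) := by
  obtain ⟨c, hc, v, hva, hv, hvu⟩ := exists_isLinSol_sup_zero hab hM hu
  have hsub : Icc a c ⊆ Icc a b := Icc_subset_Icc_right hc.2
  have hpos : ∀ {d}, IsLinSol M d (Icc a c) → 0 ≤ d a → d a ≠ 0 → ∀ t ∈ Ioc a c, 0 ≪ d t :=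
    fun hd ↦ hd.pos (hM.mono hsub) (fun s hs ↦ hMetz s (hsub hs)) (fun s hs ↦ hirr s (hsub hs))
  have hlt : ∀ t ∈ Ioc a c, u t ⊔ 0 ≪ v t := fun t ht i ↦ max_lt
    (sub_pos.1 (hpos hvu (by simp [hva]) (by simpa [hva, sub_eq_zero] using hua) t ht i))
    (hpos hv (by simp [hva]) (by simpa [hva] using hua') t ht i)
  filter_upwards [Ioc_mem_nhdsGT hc.1] with t ht
  have ht' : t ∈ Icc a c := Ioc_subset_Icc_self ht
  rw [← hva, ← hv.dotProduct_eq ordConnected_Icc (hw.mono hsub) ht' (left_mem_Icc.2 hc.1.le)]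
  exact Finset.sum_lt_sum_of_nonempty Finset.univ_nonempty fun i _ ↦
    mul_lt_mul_of_pos_left (hlt t ht i) (hw0 t (hsub ht') i)

end Adjoint

variable {f : (Fin n → ℝ) → Fin n → ℝ} {H : (Fin n → ℝ) → ℝ} {γ : ℝ → Fin n → ℝ}

/-- The Lyapunov function `⟨∇H(x), f(x)⁺⟩`, nonincreasing along solutions on which `∇H ≥ 0`. -/
def posFlux (f : (Fin n → ℝ) → Fin n → ℝ) (H : (Fin n → ℝ) → ℝ) (x : Fin n → ℝ) : ℝ :=
  grad H x ⬝ᵥ (f x ⊔ 0)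

lemma continuous_posFlux (hf : ContDiff ℝ 1 f) (hH : ContDiff ℝ 1 H) :
    Continuous (posFlux f H) :=
  (continuous_grad hH).dotProduct (continuous_pi fun i ↦
    ((continuous_apply i).comp hf.continuous).sup continuous_const)

lemma IsCoopIrred.posFlux_le (hf : IsCoopIrred f) (hH : IsFirstIntegral f H) {A : Set ℝ}
    (hA : IsOpen A) (hγ : IsSol f γ A) {a b : ℝ} (hab : a ≤ b) (hsub : Icc a b ⊆ A)
    (h : 0 ≤ grad H (γ b)) : posFlux f H (γ b) ≤ posFlux f H (γ a) := by
  have hnn : ∀ t ∈ Icc a b, 0 ≤ grad H (γ t) := fun t ht ↦ by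
    rcases ht.2.eq_or_lt with rfl | htb
    · exact h
    · exact (hf.grad_pos hH hA hγ hsub h t ⟨ht.1, htb⟩).le
  have hγ' : IsSol f γ (Icc a b) := hγ.mono hsub
  refine le_of_forall_eventually_nhdsGT_le (F := fun t ↦ posFlux f H (γ t)) hab
    ((continuous_posFlux hf.contDiff hH.contDiff).comp_continuousOn hγ'.continuousOn)
    fun s hs ↦ ?_
  have hsb : Icc s b ⊆ Icc a b := Icc_subset_Icc_left hs.1
  exact eventually_dotProduct_sup_zero_le hs.2
    ((continuous_jacMat hf.contDiff).comp_continuousOn (hγ'.continuousOn.mono hsb))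
    (fun _ _ ↦ hf.isMetzler _) ((hγ'.isLinSol_velocity hf.contDiff).mono hsb)
    ((hγ.isLinSol_grad hf.contDiff hH hA).mono (hsb.trans hsub)) fun t ht ↦ hnn t (hsb ht)

lemma eventually_grad_pos (hH : ContDiff ℝ 1 H) {x : Fin n → ℝ} (hx : 0 ≪ grad H x) :
    ∀ᶠ y in 𝓝 x, 0 ≪ grad H y :=
  eventually_strLt tendsto_const_nhds (continuous_grad hH).continuousAt hx

namespace IsOrbit

variable {l : Filter ℝ} {A : Set ℝ} {q : Fin n → ℝ}

lemma frequently_grad_pos (hγ : IsOrbit f γ l A) (hf : IsCoopIrred f) (hH : IsFirstIntegral f H)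
    (hq : MapClusterPt q l γ) (hq0 : 0 ≤ grad H q) : ∃ᶠ t in l, 0 ≪ grad H (γ t) := by
  obtain ⟨ε, hε, x, rfl, hx, hlim⟩ := hγ.exists_isSol_mapClusterPt hf.contDiff hq
  have hpos := hf.grad_pos hH isOpen_Ioo (hx.mono Ioo_subset_Icc_self) (a := -(ε / 2)) (b := 0)
    (Icc_subset_Ioo (by linarith) hε) hq0 (-(ε / 2)) ⟨le_rfl, by linarith⟩
  exact frequently_of_mapClusterPt (hlim _ ⟨by linarith, by linarith⟩)
    (eventually_grad_pos hH.contDiff hpos)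

lemma grad_pos_of_mapClusterPt (hγ : IsOrbit f γ l A) (hf : IsCoopIrred f)
    (hH : IsFirstIntegral f H) (hfreq : ∃ᶠ t in l, 0 ≪ grad H (γ t)) {y : Fin n → ℝ}
    (hy : MapClusterPt y l γ) : 0 ≪ grad H y := by
  have hnn : ∀ {z}, MapClusterPt z l γ → 0 ≤ grad H z := by
    intro z hz
    by_contra hn
    have hnear : ∀ᶠ x in 𝓝 z, ¬ 0 ≤ grad H x :=
      (continuous_grad hH.contDiff).continuousAt.eventually (isClosed_Ici.isOpen_compl.mem_nhds hn)
    obtain ⟨t₁, t₂, t₃, h₁₂, h₂₃, hA, -, h₂, h₃⟩ :=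
      hγ.exists_separated_times 0 hfreq (frequently_of_mapClusterPt hz hnear) hfreq
    exact h₂ (hf.grad_pos hH hγ.isOpen hγ.isSol ((Icc_subset_Icc (by linarith)
      (by linarith)).trans hA) h₃.le t₂ ⟨le_rfl, by linarith⟩).le
  obtain ⟨ε, hε, x, rfl, hx, hlim⟩ := hγ.exists_isSol_mapClusterPt hf.contDiff hy
  exact hf.grad_pos hH isOpen_Ioo (hx.mono Ioo_subset_Icc_self) (a := 0) (b := ε / 2)
    (Icc_subset_Ioo (by linarith) (by linarith)) (hnn (hlim _ ⟨by linarith, by linarith⟩)) 0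
    ⟨le_rfl, by linarith⟩

lemma posFlux_le_of_mapClusterPt (hγ : IsOrbit f γ l A) (hf : IsCoopIrred f)
    (hH : IsFirstIntegral f H) (hfreq : ∃ᶠ t in l, 0 ≪ grad H (γ t)) {x y : Fin n → ℝ}
    (hx : MapClusterPt x l γ) (hy : MapClusterPt y l γ) : posFlux f H y ≤ posFlux f H x := by
  by_contra! hlt
  obtain ⟨m, hxm, hmy⟩ := exists_between hlt
  have hcont := continuous_posFlux hf.contDiff hH.contDiff
  obtain ⟨t₁, t₂, t₃, h₁₂, h₂₃, hA, h₁, h₂, h₃⟩ := hγ.exists_separated_times 0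
    (frequently_of_mapClusterPt hx (hcont.continuousAt.eventually_lt continuousAt_const hxm))
    (frequently_of_mapClusterPt hy (continuousAt_const.eventually_lt hcont.continuousAt hmy)) hfreq
  have hgrad := hf.grad_pos hH hγ.isOpen hγ.isSol (a := t₂) (b := t₃)
    ((Icc_subset_Icc (by linarith) (by linarith)).trans hA) h₃.le t₂ ⟨le_rfl, by linarith⟩
  have hle := hf.posFlux_le hH hγ.isOpen hγ.isSol (a := t₁) (b := t₂) (by linarith)
    ((Icc_subset_Icc (by linarith) (by linarith)).trans hA) hgrad.le
  linarith

-- `posFlux` is constant on the limit set, but strictly decreases at a point where `f` takes both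
-- signs.
lemma eq_zero_of_frequently_grad_pos [NeZero n] (hγ : IsOrbit f γ l A) (hf : IsCoopIrred f)
    (hH : IsFirstIntegral f H) (hfreq : ∃ᶠ t in l, 0 ≪ grad H (γ t)) {p : Fin n → ℝ}
    (hp : MapClusterPt p l γ) : f p = 0 := by
  by_contra hne
  obtain ⟨ε, hε, x, rfl, hx, hlim⟩ := hγ.exists_isSol_mapClusterPt hf.contDiff hp
  have hsub : Icc 0 (ε / 2) ⊆ Ioo (-ε) ε := Icc_subset_Ioo (by linarith) (by linarith)
  have hx' : IsSol f x (Ioo (-ε) ε) := hx.mono Ioo_subset_Icc_self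
  have hdecr := eventually_dotProduct_sup_zero_lt (half_pos hε)
    ((continuous_jacMat hf.contDiff).comp_continuousOn (hx'.continuousOn.mono hsub))
    (fun _ _ ↦ hf.isMetzler _) (fun _ _ ↦ hf.irreducible _)
    ((hx'.isLinSol_velocity hf.contDiff).mono hsub)
    ((hx'.isLinSol_grad hf.contDiff hH isOpen_Ioo).mono hsub)
    (fun t ht ↦ hγ.grad_pos_of_mapClusterPt hf hH hfreq (hlim t (Ioo_subset_Icc_self (hsub ht))))
    (fun h ↦ hne (hγ.eq_zero_of_velocity_nonneg hf hp h))
    (fun h ↦ hne (hγ.eq_zero_of_velocity_nonpos hf hp h))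
  obtain ⟨t, hlt, ht⟩ := (hdecr.and (Ioc_mem_nhdsGT (half_pos hε))).exists
  exact hlt.not_ge (hγ.posFlux_le_of_mapClusterPt hf hH hfreq
    (hlim t (Ioo_subset_Icc_self (hsub (Ioc_subset_Icc_self ht)))) hp)

end IsOrbit

end PositiveGradient

section Isolation

variable {n : ℕ} {f : (Fin n → ℝ) → Fin n → ℝ} {H : (Fin n → ℝ) → ℝ}

lemma lt_of_grad_pos (hH : Differentiable ℝ H) {s : Set (Fin n → ℝ)} (hs : Convex ℝ s)
    (hpos : ∀ z ∈ s, 0 ≪ grad H z) {x y : Fin n → ℝ} (hx : x ∈ s) (hy : y ∈ s) (hxy : x < y) :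
    H x < H y := by
  obtain ⟨z, hz, hmvt⟩ := domain_mvt (fun z _ ↦ (hH z).hasFDerivAt.hasFDerivWithinAt) hs hx hy
  obtain ⟨hle, i, hi⟩ := Pi.lt_def.1 hxy
  have hzpos := hpos z (hs.segment_subset hx hy hz)
  rw [← sub_pos, hmvt, fderiv_eq_dotProduct]
  exact Finset.sum_pos' (fun j _ ↦ mul_nonneg (hzpos j).le (sub_nonneg.2 (hle j)))
    ⟨i, Finset.mem_univ i, mul_pos (hzpos i) (sub_pos.2 hi)⟩

lemma continuousOn_sup {x y : ℝ → Fin n → ℝ} {s : Set ℝ} (hx : ContinuousOn x s)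
    (hy : ContinuousOn y s) : ContinuousOn (fun t ↦ x t ⊔ y t) s :=
  continuousOn_pi.2 fun i ↦ (continuousOn_pi.1 hx i).sup (continuousOn_pi.1 hy i)

-- The solution through `x a ⊔ y a` stays above `x ⊔ y` and preserves `H`.
lemma IsCoopIrred.eventually_firstIntegral_sup_le (hf : IsCoopIrred f) (hH : IsFirstIntegral f H)
    {x y : ℝ → Fin n → ℝ} {a b : ℝ} (hab : a < b) (hx : IsSol f x (Icc a b))
    (hy : IsSol f y (Icc a b)) (hpos : 0 ≪ grad H (x a ⊔ y a)) :
    ∀ᶠ t in 𝓝[>] a, H (x t ⊔ y t) ≤ H (x a ⊔ y a) := by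
  obtain ⟨r, hr, hball⟩ := Metric.eventually_nhds_iff_ball.1 (eventually_grad_pos hH.contDiff hpos)
  obtain ⟨Φ, R, ε, hΦ⟩ := exists_isLocalFlow hf.contDiff (x a ⊔ y a)
  have hmem : x a ⊔ y a ∈ Metric.closedBall (x a ⊔ y a) R :=
    Metric.mem_closedBall_self hΦ.radius_pos.le
  let z : ℝ → Fin n → ℝ := fun t ↦ Φ (x a ⊔ y a) (t - a)
  have hza : z a = x a ⊔ y a := by simp only [z, sub_self, hΦ.map_zero _ hmem]
  let c := min b (a + ε)
  have hac : a < c := lt_min hab (lt_add_of_pos_right a hΦ.time_pos)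
  have hcb : Icc a c ⊆ Icc a b := Icc_subset_Icc_right (min_le_left _ _)
  have hz : IsSol f z (Icc a c) := (hΦ.isSol _ hmem).shift (-a) fun t ht ↦
    ⟨by linarith [ht.1, hΦ.time_pos], by linarith [ht.2, min_le_right b (a + ε)]⟩
  have hle : ∀ t ∈ Icc a c, x t ⊔ y t ≤ z t := fun t ht ↦ sup_le
    (hf.le_of_le (hx.mono hcb) hz (hza ▸ le_sup_left) t ht)
    (hf.le_of_le (hy.mono hcb) hz (hza ▸ le_sup_right) t ht)
  have hnear : ∀ {w : ℝ → Fin n → ℝ}, ContinuousOn w (Icc a c) → w a = x a ⊔ y a →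
      ∀ᶠ t in 𝓝[>] a, w t ∈ Metric.ball (x a ⊔ y a) r := fun hw hwa ↦
    ((hw a (left_mem_Icc.2 hac.le)).mono_of_mem_nhdsWithin (Icc_mem_nhdsGT hac)).eventually
      (Metric.isOpen_ball.mem_nhds (by rw [hwa]; exact Metric.mem_ball_self hr))
  filter_upwards [Ioc_mem_nhdsGT hac, hnear hz.continuousOn hza,
    hnear (continuousOn_sup (hx.mono hcb).continuousOn (hy.mono hcb).continuousOn) rfl]
    with t ht hzt hxyt
  rw [← hza, ← hH.eq_of_isSol hz ordConnected_Icc (Ioc_subset_Icc_self ht) (left_mem_Icc.2 hac.le)]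
  rcases (hle t (Ioc_subset_Icc_self ht)).eq_or_lt with h | h
  · rw [h]
  · exact (lt_of_grad_pos (hH.contDiff.differentiable one_ne_zero) (convex_ball _ _) hball
      hxyt hzt h).le

lemma IsCoopIrred.firstIntegral_sup_le (hf : IsCoopIrred f) (hH : IsFirstIntegral f H)
    {x y : ℝ → Fin n → ℝ} {a b : ℝ} (hab : a ≤ b) (hx : IsSol f x (Icc a b))
    (hy : IsSol f y (Icc a b)) (hpos : ∀ t ∈ Ico a b, 0 ≪ grad H (x t ⊔ y t)) :
    H (x b ⊔ y b) ≤ H (x a ⊔ y a) :=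
  le_of_forall_eventually_nhdsGT_le (F := fun t ↦ H (x t ⊔ y t)) hab
    (hH.contDiff.continuous.comp_continuousOn (continuousOn_sup hx.continuousOn hy.continuousOn))
    fun s hs ↦ hf.eventually_firstIntegral_sup_le hH hs.2 (hx.mono (Icc_subset_Icc_left hs.1))
      (hy.mono (Icc_subset_Icc_left hs.1)) (hpos s hs)

lemma exists_first_exit {g : ℝ → ℝ} {a b r : ℝ} (hab : a ≤ b) (hg : ContinuousOn g (Icc a b))
    (ha : g a < r) (hb : r ≤ g b) : ∃ t ∈ Icc a b, g t = r ∧ ∀ s ∈ Ico a t, g s < r := by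
  have hcpt : IsCompact (Icc a b ∩ g ⁻¹' Ici r) := isCompact_Icc.of_isClosed_subset
    (hg.preimage_isClosed_of_isClosed isClosed_Icc isClosed_Ici) inter_subset_left
  obtain ⟨t, ⟨ht, hrt⟩, hmin⟩ := hcpt.exists_isLeast ⟨b, right_mem_Icc.2 hab, hb⟩
  have hlt : ∀ s ∈ Ico a t, g s < r := fun s hs ↦ not_le.1 fun hrs ↦
    hs.2.not_ge (hmin ⟨⟨hs.1, hs.2.le.trans ht.2⟩, hrs⟩)
  refine ⟨t, ht, le_antisymm ?_ hrt, hlt⟩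
  by_contra! hgt
  obtain ⟨s, hs, rfl⟩ := intermediate_value_Ico ht.1 (hg.mono (Icc_subset_Icc_right ht.2))
    ⟨ha.le, hgt⟩
  exact (hlt s hs).false

lemma sup_mem_closedBall {p x : Fin n → ℝ} {ρ : ℝ} (hx : x ∈ Metric.closedBall p ρ) :
    x ⊔ p ∈ Metric.closedBall p ρ := by
  rw [mem_closedBall_iff_norm] at hx ⊢
  refine (pi_norm_le_iff_of_nonneg ((norm_nonneg _).trans hx)).2 fun i ↦
    le_trans ?_ ((norm_le_pi_norm _ i).trans hx)
  rw [Pi.sub_apply, Pi.sup_apply, Pi.sub_apply, Real.norm_eq_abs, Real.norm_eq_abs]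
  simpa only [max_self] using abs_max_sub_max_le_abs (x i) (p i) (p i)

-- On `{H = H p}` a point of the sphere is not comparable with `p`, so `H (x ⊔ p) > H p` there.
lemma exists_firstIntegral_sup_gap (hH : ContDiff ℝ 1 H) {p : Fin n → ℝ} {ρ : ℝ} (hρ : 0 < ρ)
    (hpos : ∀ x ∈ Metric.closedBall p ρ, 0 ≪ grad H x) :
    ∃ m > H p, ∀ x ∈ Metric.sphere p ρ, H x = H p → m ≤ H (x ⊔ p) := by
  have hlt : ∀ {x y}, x ∈ Metric.closedBall p ρ → y ∈ Metric.closedBall p ρ → x < y → H x < H y :=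
    lt_of_grad_pos (hH.differentiable one_ne_zero) (convex_closedBall p ρ) hpos
  have hpB : p ∈ Metric.closedBall p ρ := Metric.mem_closedBall_self hρ.le
  let S := Metric.sphere p ρ ∩ {x | H x = H p}
  have hS : IsCompact S :=
    (isCompact_sphere p ρ).inter_right (isClosed_eq hH.continuous continuous_const)
  have hgt : ∀ x ∈ S, H p < H (x ⊔ p) := by
    rintro x ⟨hx, hHx⟩
    have hxB := Metric.sphere_subset_closedBall hx
    refine hlt hpB (sup_mem_closedBall hxB) (le_sup_right.lt_of_ne fun h ↦ ?_)
    have hxp : x ≠ p := by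
      rintro rfl
      exact hρ.ne (by simpa using hx)
    exact (hlt hxB hpB ((h ▸ le_sup_left : x ≤ p).lt_of_ne hxp)).ne hHx
  rcases S.eq_empty_or_nonempty with hempty | hne
  · exact ⟨H p + 1, lt_add_one _, fun x hx hHx ↦ (hempty.subset ⟨hx, hHx⟩).elim⟩
  · have hcont : ContinuousOn (fun x ↦ H (x ⊔ p)) S := (hH.continuous.comp
      (continuous_pi fun i ↦ (continuous_apply i).sup continuous_const)).continuousOn
    obtain ⟨x, hx, hmin⟩ := hS.exists_isMinOn hne hcont
    exact ⟨_, hgt x hx, fun y hy hHy ↦ hmin ⟨hy, hHy⟩⟩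

lemma IsOrbit.subsingleton_of_grad_nonneg [NeZero n] {γ : ℝ → Fin n → ℝ} {l : Filter ℝ} {A : Set ℝ}
    (hγ : IsOrbit f γ l A) (hf : IsCoopIrred f) (hH : IsFirstIntegral f H) {q : Fin n → ℝ}
    (hq : MapClusterPt q l γ) (hq0 : 0 ≤ grad H q) : {y | MapClusterPt y l γ}.Subsingleton := by
  intro p hp p' hp'
  by_contra! hne
  have hfreq := hγ.frequently_grad_pos hf hH hq hq0
  have hfp : f p = 0 := hγ.eq_zero_of_frequently_grad_pos hf hH hfreq hp
  obtain ⟨ρ₀, hρ₀, hball⟩ := Metric.nhds_basis_closedBall.eventually_iff.1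
    (eventually_grad_pos hH.contDiff (hγ.grad_pos_of_mapClusterPt hf hH hfreq hp))
  obtain ⟨ρ, hρ, hρlt⟩ := exists_between (lt_min hρ₀ (dist_pos.2 hne.symm))
  have hpos : ∀ x ∈ Metric.closedBall p ρ, 0 ≪ grad H x := fun x hx ↦
    hball (Metric.closedBall_subset_closedBall (hρlt.trans_le (min_le_left _ _)).le hx)
  obtain ⟨m, hm, hgap⟩ := exists_firstIntegral_sup_gap hH.contDiff hρ hpos
  have hV : Continuous fun x ↦ H (x ⊔ p) := hH.contDiff.continuous.comp
    (continuous_pi fun i ↦ (continuous_apply i).sup continuous_const)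
  have hstart : ∀ᶠ x in 𝓝 p, H (x ⊔ p) < m ∧ dist x p < ρ :=
    (hV.continuousAt.eventually_lt continuousAt_const (by simpa using hm)).and
      (Metric.ball_mem_nhds p hρ)
  have hleave : ∀ᶠ x in 𝓝 p', ρ < dist x p := continuousAt_const.eventually_lt
    (continuous_id.dist continuous_const).continuousAt (hρlt.trans_le (min_le_right _ _))
  obtain ⟨t₁, t₂, t₃, h₁₂, h₂₃, hA, h₁, h₂, -⟩ := hγ.exists_separated_times 0
    (frequently_of_mapClusterPt hp hstart) (frequently_of_mapClusterPt hp' hleave)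
    (frequently_of_mapClusterPt hp hstart)
  have hsol : IsSol f γ (Icc t₁ t₂) :=
    hγ.isSol.mono ((Icc_subset_Icc (by linarith) (by linarith)).trans hA)
  obtain ⟨t, ht, hexit, hin⟩ := exists_first_exit (g := fun t ↦ dist (γ t) p) (by linarith)
    ((continuous_id.dist continuous_const).comp_continuousOn hsol.continuousOn) h₁.2 h₂.le
  have hle : H (γ t ⊔ p) ≤ H (γ t₁ ⊔ p) := hf.firstIntegral_sup_le hH (y := fun _ ↦ p) ht.1
    (hsol.mono (Icc_subset_Icc_right ht.2)) (isSol_const hfp _) fun s hs ↦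
      hpos _ (sup_mem_closedBall (hin s hs).le)
  have hHt : H (γ t) = H p :=
    hγ.firstIntegral_eq hH hp (hA ⟨by linarith [ht.1], by linarith [ht.2]⟩)
  exact (hgap (γ t) hexit hHt).not_gt (hle.trans_lt h₁.1)

end Isolation

/-! ### The index of a plane arc closed up by its chord -/

/-- `η` is differentiable at the points of `[a, b]`, with continuous derivative on `[a, b]`. -/
structure IsC1Arc (η : ℝ → ℂ) (a b : ℝ) : Prop where
  le : a ≤ b
  differentiableAt : ∀ t ∈ Icc a b, DifferentiableAt ℝ η t
  continuousOn_deriv : ContinuousOn (deriv η) (Icc a b)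

/-- The variation of a logarithm of `η - ξ` along `[a, b]`. -/
def logIntegral (η : ℝ → ℂ) (a b : ℝ) (ξ : ℂ) : ℂ :=
  ∫ t in a..b, deriv η t / (η t - ξ)

/-- The closed curve made of the arc `η` on `[a, b]` and of its chord. -/
def chordLoop (η : ℝ → ℂ) (a b : ℝ) : Set ℂ :=
  η '' Icc a b ∪ segment ℝ (η a) (η b)

/-- `2πi` times the winding number of `chordLoop η a b` around `ξ`. Off the chord the ratio
below avoids the negative reals, so that the principal logarithm is the variation of the logarithm
along the chord. -/
def loopIndex (η : ℝ → ℂ) (a b : ℝ) (ξ : ℂ) : ℂ :=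
  logIntegral η a b ξ + Complex.log ((η a - ξ) / (η b - ξ))

section LogIntegral

variable {η : ℝ → ℂ} {a b m : ℝ} {ξ : ℂ}

lemma IsC1Arc.continuousOn (h : IsC1Arc η a b) : ContinuousOn η (Icc a b) :=
  fun t ht ↦ (h.differentiableAt t ht).continuousAt.continuousWithinAt

lemma IsC1Arc.left (h : IsC1Arc η a b) (ham : a ≤ m) (hmb : m ≤ b) : IsC1Arc η a m :=
  ⟨ham, fun t ht ↦ h.differentiableAt t ⟨ht.1, ht.2.trans hmb⟩,
    h.continuousOn_deriv.mono (Icc_subset_Icc_right hmb)⟩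

lemma IsC1Arc.right (h : IsC1Arc η a b) (ham : a ≤ m) (hmb : m ≤ b) : IsC1Arc η m b :=
  ⟨hmb, fun t ht ↦ h.differentiableAt t ⟨ham.trans ht.1, ht.2⟩,
    h.continuousOn_deriv.mono (Icc_subset_Icc_left ham)⟩

lemma IsC1Arc.continuousOn_div (h : IsC1Arc η a b) (hξ : ξ ∉ η '' Icc a b) :
    ContinuousOn (fun t ↦ deriv η t / (η t - ξ)) (Icc a b) :=
  h.continuousOn_deriv.div (h.continuousOn.sub continuousOn_const)
    fun t ht ↦ sub_ne_zero.2 fun e ↦ hξ ⟨t, ht, e⟩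

lemma IsC1Arc.logIntegral_add (h : IsC1Arc η a b) (ham : a ≤ m) (hmb : m ≤ b)
    (hξ : ξ ∉ η '' Icc a b) :
    logIntegral η a m ξ + logIntegral η m b ξ = logIntegral η a b ξ :=
  intervalIntegral.integral_add_adjacent_intervals
    (((h.continuousOn_div hξ).mono (Icc_subset_Icc_right hmb)).intervalIntegrable_of_Icc ham)
    (((h.continuousOn_div hξ).mono (Icc_subset_Icc_left ham)).intervalIntegrable_of_Icc hmb)

lemma IsC1Arc.exp_logIntegral (h : IsC1Arc η a b) (hξ : ξ ∉ η '' Icc a b) :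
    Complex.exp (logIntegral η a b ξ) = (η b - ξ) / (η a - ξ) := by
  have hne : ∀ t ∈ Icc a b, η t - ξ ≠ 0 := fun t ht ↦ sub_ne_zero.2 fun e ↦ hξ ⟨t, ht, e⟩
  obtain ⟨k, hk, hkη⟩ : ∃ k : ℝ → ℂ, Continuous k ∧
      ∀ t ∈ Icc a b, k t = deriv η t / (η t - ξ) :=
    ⟨_, (continuousOn_iff_continuous_domRestrict.1 (h.continuousOn_div hξ)).Icc_extend' (h := h.le),
      fun t ht ↦ IccExtend_of_mem h.le _ ht⟩
  have hderiv : ∀ t ∈ Icc a b,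
      HasDerivAt (fun t ↦ Complex.exp (-∫ s in a..t, k s) * (η t - ξ)) 0 t := by
    intro t ht
    refine ((hk.integral_hasStrictDerivAt a t).hasDerivAt.neg.cexp.mul
      ((h.differentiableAt t ht).hasDerivAt.sub_const ξ)).congr_deriv ?_
    rw [← div_mul_cancel₀ (deriv η t) (hne t ht), ← hkη t ht]
    simp only [Pi.neg_apply]
    ring
  have hconst := constant_of_has_deriv_right_zero
    (fun t ht ↦ (hderiv t ht).continuousAt.continuousWithinAt)
    (fun t ht ↦ (hderiv t (Ico_subset_Icc_self ht)).hasDerivWithinAt) b ⟨h.le, le_rfl⟩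
  have hint : logIntegral η a b ξ = ∫ t in a..b, k t :=
    intervalIntegral.integral_congr fun t ht ↦ (hkη t (uIcc_of_le h.le ▸ ht)).symm
  rw [intervalIntegral.integral_same, neg_zero, Complex.exp_zero, one_mul, ← hint,
    Complex.exp_neg] at hconst
  rw [eq_div_iff (hne a ⟨le_rfl, h.le⟩), ← hconst,
    mul_inv_cancel_left₀ (Complex.exp_ne_zero _)]

lemma IsC1Arc.logIntegral_eq_log_sub_log (h : IsC1Arc η a b) {c : ℂ}
    (hc : ∀ t ∈ Icc a b, c * (η t - ξ) ∈ Complex.slitPlane) :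
    logIntegral η a b ξ = Complex.log (c * (η b - ξ)) - Complex.log (c * (η a - ξ)) := by
  have hne : ∀ t ∈ Icc a b, c * (η t - ξ) ≠ 0 := fun t ht ↦ Complex.slitPlane_ne_zero (hc t ht)
  have hξ : ξ ∉ η '' Icc a b := by
    rintro ⟨t, ht, rfl⟩
    exact hne t ht (by rw [sub_self, mul_zero])
  refine intervalIntegral.integral_eq_sub_of_hasDerivAt
    (f := fun t ↦ Complex.log (c * (η t - ξ))) (fun t ht ↦ ?_)
    ((h.continuousOn_div hξ).intervalIntegrable_of_Icc h.le)
  rw [uIcc_of_le h.le] at ht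
  have hlog := (((h.differentiableAt t ht).hasDerivAt.sub_const ξ).const_mul c).clog_real (hc t ht)
  rwa [mul_div_mul_left _ _ (left_ne_zero_of_mul (hne t ht))] at hlog

lemma IsC1Arc.isClosed_image (h : IsC1Arc η a b) : IsClosed (η '' Icc a b) :=
  (isCompact_Icc.image_of_continuousOn h.continuousOn).isClosed

lemma IsC1Arc.continuousAt_logIntegral (h : IsC1Arc η a b) (hξ : ξ ∉ η '' Icc a b) :
    ContinuousAt (logIntegral η a b) ξ := by
  obtain ⟨M, hM⟩ := isCompact_Icc.exists_bound_of_continuousOn h.continuousOn_deriv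
  obtain ⟨d, hd, hball⟩ := Metric.isOpen_iff.1 h.isClosed_image.isOpen_compl ξ hξ
  have hfar : ∀ x ∈ Metric.ball ξ (d / 2), ∀ t ∈ Icc a b, d / 2 ≤ ‖η t - x‖ := by
    intro x hx t ht
    have : d ≤ dist (η t) ξ := not_lt.1 fun hlt ↦ hball hlt ⟨t, ht, rfl⟩
    rw [Metric.mem_ball] at hx
    rw [← dist_eq_norm]
    linarith [dist_triangle (η t) x ξ]
  have hoff : ∀ x ∈ Metric.ball ξ (d / 2), x ∉ η '' Icc a b := by
    rintro _ hx ⟨t, ht, rfl⟩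
    linarith [hfar _ hx t ht, norm_le_zero_iff.2 (sub_self (η t))]
  have hnhds := Metric.ball_mem_nhds ξ (half_pos hd)
  have huIoc : ∀ t ∈ uIoc a b, t ∈ Icc a b :=
    fun t ht ↦ Ioc_subset_Icc_self (uIoc_of_le h.le ▸ ht)
  refine intervalIntegral.continuousAt_of_dominated_interval (bound := fun _ ↦ M / (d / 2))
    ?_ ?_ intervalIntegrable_const ?_
  · filter_upwards [hnhds] with x hx
    exact ((h.continuousOn_div (hoff x hx)).mono huIoc).aestronglyMeasurable measurableSet_uIoc
  · filter_upwards [hnhds] with x hx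
    refine Eventually.of_forall fun t ht ↦ ?_
    rw [norm_div]
    exact div_le_div₀ ((norm_nonneg _).trans (hM t (huIoc t ht))) (hM t (huIoc t ht))
      (half_pos hd) (hfar x hx t (huIoc t ht))
  · exact Eventually.of_forall fun t ht ↦ continuousAt_const.div
      (continuousAt_const.sub continuousAt_id) (sub_ne_zero.2 fun e ↦ hξ ⟨t, huIoc t ht, e⟩)

lemma IsC1Arc.tendsto_logIntegral_cobounded (h : IsC1Arc η a b) :
    Tendsto (logIntegral η a b) (Bornology.cobounded ℂ) (𝓝 0) := by
  obtain ⟨M, hM⟩ := isCompact_Icc.exists_bound_of_continuousOn h.continuousOn_deriv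
  obtain ⟨N, hN⟩ := isCompact_Icc.exists_bound_of_continuousOn h.continuousOn
  have hatTop : Tendsto (fun ξ : ℂ ↦ ‖ξ‖ - N) (Bornology.cobounded ℂ) atTop :=
    tendsto_atTop_add_const_right _ _ tendsto_norm_cobounded_atTop
  have hzero : Tendsto (fun ξ : ℂ ↦ M / (‖ξ‖ - N) * |b - a|) (Bornology.cobounded ℂ) (𝓝 0) := by
    simpa using (hatTop.const_div_atTop M).mul_const |b - a|
  refine squeeze_zero_norm' ?_ hzero
  filter_upwards [hatTop.eventually_gt_atTop 0] with ξ hξ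
  refine intervalIntegral.norm_integral_le_of_norm_le_const fun t ht ↦ ?_
  have ht' : t ∈ Icc a b := Ioc_subset_Icc_self (uIoc_of_le h.le ▸ ht)
  rw [norm_div]
  refine div_le_div₀ ((norm_nonneg _).trans (hM t ht')) (hM t ht') hξ ?_
  linarith [norm_sub_norm_le ξ (η t), norm_sub_rev ξ (η t), hN t ht']

lemma sub_div_sub_mem_slitPlane {p q : ℂ} (hξ : ξ ∉ segment ℝ p q) :
    (p - ξ) / (q - ξ) ∈ Complex.slitPlane := by
  have hp : p - ξ ≠ 0 := sub_ne_zero.2 fun e ↦ hξ (e ▸ left_mem_segment ℝ p q)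
  have hq : q - ξ ≠ 0 := sub_ne_zero.2 fun e ↦ hξ (e ▸ right_mem_segment ℝ p q)
  rw [Complex.mem_slitPlane_iff_arg]
  refine ⟨fun harg ↦ hξ ?_, div_ne_zero hp hq⟩
  rw [Complex.arg_eq_pi_iff] at harg
  rw [mem_segment_iff_sameRay, Complex.sameRay_iff_arg_div_eq_zero, ← neg_sub p ξ, neg_div,
    Complex.arg_eq_zero_iff, Complex.neg_re, Complex.neg_im, harg.2]
  exact ⟨by linarith [harg.1], neg_zero⟩

lemma tendsto_sub_div_sub_cobounded (p q : ℂ) :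
    Tendsto (fun ξ ↦ (p - ξ) / (q - ξ)) (Bornology.cobounded ℂ) (𝓝 1) := by
  have hinv : Tendsto (fun ξ ↦ (q - ξ)⁻¹) (Bornology.cobounded ℂ) (𝓝 0) :=
    tendsto_inv₀_cobounded.comp (tendsto_const_sub_cobounded q)
  have hlim : Tendsto (fun ξ ↦ 1 + (p - q) * (q - ξ)⁻¹) (Bornology.cobounded ℂ) (𝓝 1) := by
    simpa using (hinv.const_mul (p - q)).const_add 1
  refine hlim.congr' ?_
  filter_upwards [Bornology.eventually_ne_cobounded q] with ξ hξ
  have : q - ξ ≠ 0 := sub_ne_zero.2 hξ.symm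
  field_simp
  ring

end LogIntegral

section LoopIndex

variable {η : ℝ → ℂ} {a b m : ℝ} {ξ : ℂ}

lemma eventually_eq_zero_of_exp_eq_one :
    ∀ᶠ w in 𝓝 (0 : ℂ), Complex.exp w = 1 → w = 0 := by
  have him : ∀ᶠ w in 𝓝 (0 : ℂ), w.im ∈ Ioo (-Real.pi) Real.pi :=
    Complex.continuous_im.continuousAt.eventually
      (Ioo_mem_nhds (by simpa using Real.pi_pos) (by simpa using Real.pi_pos))
  filter_upwards [him] with w hw hexp
  rw [← Complex.log_exp hw.1 hw.2.le, hexp, Complex.log_one]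

lemma IsC1Arc.isClosed_chordLoop (h : IsC1Arc η a b) : IsClosed (chordLoop η a b) := by
  refine h.isClosed_image.union ?_
  rw [segment_eq_image]
  exact (isCompact_Icc.image (by fun_prop)).isClosed

lemma IsC1Arc.exp_loopIndex (h : IsC1Arc η a b) (hξ : ξ ∉ chordLoop η a b) :
    Complex.exp (loopIndex η a b ξ) = 1 := by
  have hlog := Complex.slitPlane_ne_zero (sub_div_sub_mem_slitPlane fun hs ↦ hξ (Or.inr hs))
  have hne := div_ne_zero_iff.1 hlog
  rw [loopIndex, Complex.exp_add, h.exp_logIntegral fun hs ↦ hξ (Or.inl hs), Complex.exp_log hlog,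
    div_mul_div_cancel₀ hne.1, div_self hne.2]

lemma continuousAt_log_sub_div_sub {p q : ℂ} (hξ : ξ ∉ segment ℝ p q) :
    ContinuousAt (fun ξ ↦ Complex.log ((p - ξ) / (q - ξ))) ξ := by
  have hslit := sub_div_sub_mem_slitPlane hξ
  exact (ContinuousAt.div (by fun_prop) (by fun_prop)
    (div_ne_zero_iff.1 (Complex.slitPlane_ne_zero hslit)).2).clog hslit

lemma IsC1Arc.continuousAt_loopIndex (h : IsC1Arc η a b) (hξ : ξ ∉ chordLoop η a b) :
    ContinuousAt (loopIndex η a b) ξ :=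
  (h.continuousAt_logIntegral fun hs ↦ hξ (Or.inl hs)).add
    (continuousAt_log_sub_div_sub fun hs ↦ hξ (Or.inr hs))

lemma IsC1Arc.eventually_loopIndex_eq (h : IsC1Arc η a b) (hξ : ξ ∉ chordLoop η a b) :
    ∀ᶠ x in 𝓝 ξ, x ∉ chordLoop η a b ∧ loopIndex η a b x = loopIndex η a b ξ := by
  have hsub : Tendsto (fun x ↦ loopIndex η a b x - loopIndex η a b ξ) (𝓝 ξ) (𝓝 0) :=
    tendsto_sub_nhds_zero_iff.2 (h.continuousAt_loopIndex hξ)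
  filter_upwards [h.isClosed_chordLoop.isOpen_compl.mem_nhds hξ,
    hsub.eventually eventually_eq_zero_of_exp_eq_one] with x hx hexp
  refine ⟨hx, sub_eq_zero.1 (hexp ?_)⟩
  rw [Complex.exp_sub, h.exp_loopIndex hx, h.exp_loopIndex hξ, div_one]

lemma IsC1Arc.eventually_loopIndex_eq_zero (h : IsC1Arc η a b) :
    ∀ᶠ ξ in Bornology.cobounded ℂ, ξ ∉ chordLoop η a b → loopIndex η a b ξ = 0 := by
  have hlog := (continuousAt_clog Complex.one_mem_slitPlane).tendsto.comp
    (tendsto_sub_div_sub_cobounded (η a) (η b))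
  rw [Complex.log_one] at hlog
  have hlim : Tendsto (loopIndex η a b) (Bornology.cobounded ℂ) (𝓝 0) :=
    add_zero (0 : ℂ) ▸ h.tendsto_logIntegral_cobounded.add hlog
  filter_upwards [hlim.eventually eventually_eq_zero_of_exp_eq_one] with ξ hexp hξ
  exact hexp (h.exp_loopIndex hξ)

lemma IsC1Arc.loopIndex_eq_of_isPreconnected (h : IsC1Arc η a b) {S : Set ℂ}
    (hS : IsPreconnected S) (hdisj : Disjoint S (chordLoop η a b)) {x y : ℂ} (hx : x ∈ S)
    (hy : y ∈ S) : loopIndex η a b x = loopIndex η a b y := by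
  have hoff : ∀ z ∈ S, z ∉ chordLoop η a b := fun z hz ↦ disjoint_left.1 hdisj hz
  have hcount : {w : ℂ | Complex.exp w = 1}.Countable := by
    refine (countable_range fun k : ℤ ↦ (k : ℂ) * (2 * Real.pi * Complex.I)).mono fun w hw ↦ ?_
    obtain ⟨k, hk⟩ := Complex.exp_eq_one_iff.1 hw
    exact ⟨k, hk.symm⟩
  have hcont : ContinuousOn (loopIndex η a b) S :=
    fun z hz ↦ (h.continuousAt_loopIndex (hoff z hz)).continuousWithinAt
  exact hcount.isTotallyDisconnected _ (image_subset_iff.2 fun z hz ↦ h.exp_loopIndex (hoff z hz))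
    (hS.image _ hcont) ⟨x, hx, rfl⟩ ⟨y, hy, rfl⟩

end LoopIndex

section Jump

variable {η : ℝ → ℂ} {a s m b : ℝ}

lemma log_I_mul_sub_log_neg_I_mul {P : ℂ} (hP : 0 < P.re) :
    Complex.log (Complex.I * P) - Complex.log (-Complex.I * P) = Real.pi * Complex.I := by
  have hP0 : P ≠ 0 := fun h ↦ hP.ne' (by rw [h, Complex.zero_re])
  have harg := abs_lt.1 (Complex.abs_arg_lt_pi_div_two_iff.2 (Or.inl hP))
  rw [Complex.log_mul Complex.I_ne_zero hP0, Complex.log_mul (neg_ne_zero.2 Complex.I_ne_zero) hP0,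
    Complex.log_I, Complex.log_neg_I]
  · ring
  · rw [Complex.arg_neg_I]
    exact ⟨by linarith [harg.1], by linarith [harg.2, Real.pi_pos]⟩
  · rw [Complex.arg_I]
    exact ⟨by linarith [harg.1, Real.pi_pos], by linarith [harg.2]⟩

/-- The part of `loopIndex η a b` which is continuous at the points of `η '' (a, m)`. -/
def restIndex (η : ℝ → ℂ) (a m b : ℝ) (ξ : ℂ) : ℂ :=
  logIntegral η m b ξ + Complex.log ((η a - ξ) / (η b - ξ))

lemma add_ofReal_mem_slitPlane {c w : ℂ} (hc : c * c = -1) (hw : w.re ≠ 0) (τ : ℝ) :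
    c * w + τ ∈ Complex.slitPlane := by
  right
  have hcI : c = Complex.I ∨ c = -Complex.I :=
    mul_self_eq_mul_self_iff.1 (hc.trans Complex.I_mul_I.symm)
  rcases hcI with rfl | rfl <;> simpa using hw

/- With `c = ±i` the numbers `c * (η t - (η s + τ * c)) = c * (η t - η s) + τ`, `t ∈ [a, m]`, avoid
the negative reals, so that the integral over `[a, m]` is a difference of principal logarithms. -/
lemma IsC1Arc.tendsto_loopIndex (h : IsC1Arc η a b) (has : a < s) (hsm : s < m) (hmb : m ≤ b)
    (hl : ∀ t ∈ Ico a s, (η t).re < (η s).re) (hr : ∀ t ∈ Ioc s m, (η s).re < (η t).re)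
    (hrest : η s ∉ η '' Icc m b) (hchord : η s ∉ segment ℝ (η a) (η b)) {c : ℂ} (hc : c * c = -1)
    (hoff : ∀ᶠ τ : ℝ in 𝓝[>] 0, η s + τ * c ∉ chordLoop η a b) :
    Tendsto (fun τ : ℝ ↦ loopIndex η a b (η s + τ * c)) (𝓝[>] 0)
      (𝓝 (Complex.log (c * (η m - η s)) - Complex.log (c * (η a - η s)) +
        restIndex η a m b (η s))) := by
  have ham : a ≤ m := has.le.trans hsm.le
  have hmul : ∀ (p : ℂ) (τ : ℝ), c * (p - (η s + τ * c)) = c * (p - η s) + τ := fun p τ ↦ by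
    linear_combination -(τ : ℂ) * hc
  have hre : ∀ t ∈ Icc a m, t ≠ s → (η t - η s).re ≠ 0 := by
    intro t ht hts
    rw [Complex.sub_re, sub_ne_zero]
    rcases hts.lt_or_gt with hts | hts
    exacts [(hl t ⟨ht.1, hts⟩).ne, (hr t ⟨hts, ht.2⟩).ne']
  have hslit : ∀ τ : ℝ, 0 < τ → ∀ t ∈ Icc a m,
      c * (η t - (η s + τ * c)) ∈ Complex.slitPlane := by
    intro τ hτ t ht
    rw [hmul]
    rcases eq_or_ne t s with rfl | hts
    · rw [sub_self, mul_zero, zero_add]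
      exact Complex.ofReal_mem_slitPlane.2 hτ
    · exact add_ofReal_mem_slitPlane hc (hre t ht hts) τ
  have hlog : ∀ t ∈ Icc a m, t ≠ s → Tendsto
      (fun τ : ℝ ↦ Complex.log (c * (η t - (η s + τ * c)))) (𝓝[>] 0)
      (𝓝 (Complex.log (c * (η t - η s)))) := by
    intro t ht hts
    have hcont : Continuous fun τ : ℝ ↦ c * (η t - η s) + (τ : ℂ) := by fun_prop
    have := (hcont.continuousAt (x := 0)).clog (add_ofReal_mem_slitPlane hc (hre t ht hts) 0)
    simpa [ContinuousAt, hmul] using this.mono_left nhdsWithin_le_nhds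
  have hrestlim : Tendsto (fun τ : ℝ ↦ restIndex η a m b (η s + τ * c)) (𝓝[>] 0)
      (𝓝 (restIndex η a m b (η s))) := by
    have hcont : ContinuousAt (restIndex η a m b) (η s) :=
      ((h.right ham hmb).continuousAt_logIntegral hrest).add (continuousAt_log_sub_div_sub hchord)
    have hpath : Continuous fun τ : ℝ ↦ η s + (τ : ℂ) * c := by fun_prop
    exact hcont.tendsto.comp ((hpath.tendsto' 0 _ (by simp)).mono_left nhdsWithin_le_nhds)
  refine (((hlog m ⟨ham, le_rfl⟩ hsm.ne').sub (hlog a ⟨le_rfl, ham⟩ has.ne)).add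
    hrestlim).congr' ?_
  filter_upwards [hoff, self_mem_nhdsWithin] with τ hτC hτ
  rw [loopIndex, ← h.logIntegral_add ham hmb fun hs ↦ hτC (Or.inl hs),
    (h.left ham hmb).logIntegral_eq_log_sub_log (hslit τ hτ), restIndex, add_assoc]

-- The index is constant on each side of the arc along the vertical line through `η s`, and its two
-- values differ by `2πi`.
lemma IsC1Arc.exists_loopIndex_ne_zero (h : IsC1Arc η a b) (has : a < s) (hsm : s < m)
    (hmb : m ≤ b) (hl : ∀ t ∈ Ico a s, (η t).re < (η s).re)
    (hr : ∀ t ∈ Ioc s m, (η s).re < (η t).re) (hrest : η s ∉ η '' Icc m b)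
    (hchord : η s ∉ segment ℝ (η a) (η b)) {r : ℝ} (hr0 : 0 < r)
    (hoff : ∀ c : ℂ, c * c = -1 → ∀ τ ∈ Ioc 0 r, η s + τ * c ∉ chordLoop η a b) :
    ∃ c : ℂ, c * c = -1 ∧ loopIndex η a b (η s + r * c) ≠ 0 := by
  by_contra! hzero
  have hvertical : ∀ c : ℂ, c * c = -1 → ∀ τ ∈ Ioc 0 r, loopIndex η a b (η s + τ * c) = 0 := by
    intro c hc τ hτ
    have hpre : IsPreconnected ((fun τ : ℝ ↦ η s + τ * c) '' Ioc 0 r) :=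
      isPreconnected_Ioc.image _ (by fun_prop)
    rw [← hzero c hc]
    refine h.loopIndex_eq_of_isPreconnected hpre ?_ ⟨τ, hτ, rfl⟩ ⟨r, ⟨hr0, le_rfl⟩, rfl⟩
    rw [disjoint_left]
    rintro _ ⟨τ, hτ, rfl⟩
    exact hoff c hc τ hτ
  have hlim : ∀ c : ℂ, c * c = -1 → Complex.log (c * (η m - η s)) -
      Complex.log (c * (η a - η s)) + restIndex η a m b (η s) = 0 := by
    intro c hc
    have hmem : ∀ᶠ τ : ℝ in 𝓝[>] 0, τ ∈ Ioc 0 r := Ioc_mem_nhdsGT hr0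
    refine tendsto_nhds_unique
      (h.tendsto_loopIndex has hsm hmb hl hr hrest hchord hc (hmem.mono (hoff c hc)))
      (tendsto_const_nhds.congr' ?_)
    filter_upwards [hmem] with τ hτ
    exact (hvertical c hc τ hτ).symm
  have hm := log_I_mul_sub_log_neg_I_mul (P := η m - η s)
    (by simpa using hr m ⟨hsm, le_rfl⟩)
  have ha := log_I_mul_sub_log_neg_I_mul (P := -(η a - η s)) (by simpa using hl a ⟨le_rfl, has⟩)
  rw [mul_neg, neg_mul_neg, ← neg_mul] at ha
  have : 2 * (Real.pi : ℂ) * Complex.I = 0 := by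
    linear_combination hlim Complex.I Complex.I_mul_I - hm - ha -
      hlim (-Complex.I) (by rw [neg_mul_neg, Complex.I_mul_I])
  simp [Real.pi_ne_zero] at this

-- `D` is the set of points of non-zero index off the loop.
lemma IsC1Arc.exists_bounded_side (h : IsC1Arc η a b) (has : a < s) (hsm : s < m)
    (hmb : m ≤ b) (hl : ∀ t ∈ Ico a s, (η t).re < (η s).re)
    (hr : ∀ t ∈ Ioc s m, (η s).re < (η t).re) (hrest : η s ∉ η '' Icc m b)
    (hchord : η s ∉ segment ℝ (η a) (η b)) {r : ℝ} (hr0 : 0 < r)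
    (hoff : ∀ c : ℂ, c * c = -1 → ∀ τ ∈ Ioc 0 r, η s + τ * c ∉ chordLoop η a b) :
    ∃ D : Set ℂ, IsOpen D ∧ Bornology.IsBounded D ∧ frontier D ⊆ chordLoop η a b ∧
      ∃ c : ℂ, c * c = -1 ∧ η s + r * c ∈ D := by
  obtain ⟨c, hc, hne⟩ := h.exists_loopIndex_ne_zero has hsm hmb hl hr hrest hchord hr0 hoff
  have hopen : IsOpen {ξ | ξ ∉ chordLoop η a b ∧ loopIndex η a b ξ ≠ 0} := by
    refine isOpen_iff_mem_nhds.2 fun ξ hξ ↦ ?_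
    filter_upwards [h.eventually_loopIndex_eq hξ.1] with x hx
    exact ⟨hx.1, hx.2 ▸ hξ.2⟩
  refine ⟨_, hopen, ?_, fun ξ hξ ↦ ?_, c, hc, hoff c hc r ⟨hr0, le_rfl⟩, hne⟩
  · rw [Bornology.isBounded_def]
    filter_upwards [h.eventually_loopIndex_eq_zero] with ξ hzero hξ
    exact hξ.2 (hzero hξ.1)
  · rw [hopen.frontier_eq] at hξ
    by_contra hξC
    obtain ⟨x, hx, hxD⟩ := mem_closure_iff_nhds.1 hξ.1 _ (h.eventually_loopIndex_eq hξC)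
    exact hξ.2 ⟨hξC, hx.2 ▸ hxD.2⟩

end Jump

/-! ### Projection along a positive vector

A continuous linear equivalence `L` of `ℝⁿ` with `E × ℝ` such that `0 ≪ L.symm (0, 1)` is used as
the projection `x ↦ (L x).1` along the positive vector `L.symm (0, 1)`. -/

section PositiveDirection

variable {n : ℕ} {v x y : Fin n → ℝ}

lemma strLt.exists_pos_forall_le (hv : 0 ≪ v) : ∃ c > 0, ∀ i, c ≤ v i := by
  have hlt : ∀ᶠ c in 𝓝[>] (0 : ℝ), ∀ i, c < v i :=
    eventually_all.2 fun i ↦ nhdsWithin_le_nhds (Iio_mem_nhds (hv i))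
  obtain ⟨c, hc, hc0⟩ := (hlt.and self_mem_nhdsWithin).exists
  exact ⟨c, hc0, fun i ↦ (hc i).le⟩

lemma strLt_of_norm_sub_lt {c k : ℝ} (hc : 0 < c) (hcv : ∀ i, c ≤ v i)
    (h : ‖x - y - k • v‖ < k * c) : y ≪ x := by
  intro i
  have hk : 0 ≤ k := (pos_of_mul_pos_left ((norm_nonneg _).trans_lt h) hc.le).le
  have hi := (abs_lt.1 ((norm_le_pi_norm (x - y - k • v) i).trans_lt h)).1
  simp only [Pi.sub_apply, Pi.smul_apply, smul_eq_mul] at hi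
  linarith [mul_le_mul_of_nonneg_left (hcv i) hk]

lemma strLt.eventually_strLt_smul (hv : 0 ≪ v) {K : Set (Fin n → ℝ)}
    (hK : Bornology.IsBounded K) : ∀ᶠ t : ℝ in atTop, ∀ u ∈ K, u ≪ t • v := by
  obtain ⟨c, hc, hcv⟩ := hv.exists_pos_forall_le
  obtain ⟨M, hM⟩ := hK.exists_norm_le
  filter_upwards [(tendsto_id.atTop_mul_const hc).eventually_gt_atTop M] with t ht u hu
  refine strLt_of_norm_sub_lt hc hcv (k := t) ?_
  rw [sub_right_comm, sub_self, zero_sub, norm_neg]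
  exact (hM u hu).trans_lt ht

lemma exists_pos_dotProduct_eq_zero {w : Fin n → ℝ} {i j : Fin n} (hi : 0 < w i) (hj : w j < 0) :
    ∃ v : Fin n → ℝ, 0 ≪ v ∧ w ⬝ᵥ v = 0 := by
  suffices h : ∃ k c, 0 ≤ c ∧ w k * c = -∑ l, w l by
    obtain ⟨k, c, hc, hkc⟩ := h
    refine ⟨1 + Pi.single k c, fun l ↦ ?_, ?_⟩
    · have hle : (1 : Fin n → ℝ) ≤ 1 + Pi.single k c :=
        le_add_of_nonneg_right (Pi.single_nonneg.2 hc)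
      exact one_pos.trans_le (hle l)
    · rw [dotProduct_add, dotProduct_one, dotProduct_single, hkc, add_neg_cancel]
  rcases le_total (∑ l, w l) 0 with h | h
  · exact ⟨i, _, div_nonneg (neg_nonneg.2 h) hi.le, mul_div_cancel₀ _ hi.ne'⟩
  · exact ⟨j, _, div_nonneg_of_nonpos (neg_nonpos.2 h) hj.le, mul_div_cancel₀ _ hj.ne⟩

end PositiveDirection

section Projection

variable {n : ℕ} {E : Type*} [NormedAddCommGroup E] [NormedSpace ℝ E]
  {L : (Fin n → ℝ) ≃L[ℝ] E × ℝ}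

lemma exists_norm_sub_le_of_not_strLt (hL : 0 ≪ L.symm (0, 1)) :
    ∃ C > 0, ∀ x y, ¬ x ≪ y → ¬ y ≪ x → ‖x - y‖ ≤ C * ‖(L x).1 - (L y).1‖ := by
  set v := L.symm (0, 1)
  set σ : E →L[ℝ] (Fin n → ℝ) := L.symm.toContinuousLinearMap ∘L ContinuousLinearMap.inl ℝ E ℝ
  obtain ⟨c, hc, hcv⟩ := hL.exists_pos_forall_le
  refine ⟨(‖σ‖ + 1) * (1 + ‖v‖ / c), by positivity, fun x y hxy hyx ↦ ?_⟩
  set d := (L x).1 - (L y).1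
  set k := (L (x - y)).2
  have hdec : x - y = σ d + k • v := by
    apply L.injective
    ext <;> simp [σ, v, d, k]
  have hk : |k| * c ≤ ‖σ d‖ := by
    by_contra! hlt
    rcases abs_cases k with ⟨hk, -⟩ | ⟨hk, -⟩ <;> rw [hk] at hlt
    · exact hyx (strLt_of_norm_sub_lt hc hcv (by rwa [hdec, add_sub_cancel_right]))
    · refine hxy (strLt_of_norm_sub_lt hc hcv (k := -k) ?_)
      rwa [← neg_sub x y, hdec, neg_smul, ← neg_sub', add_sub_cancel_right, norm_neg]
  calc ‖x - y‖ ≤ ‖σ d‖ + |k| * ‖v‖ := by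
        rw [hdec]
        exact (norm_add_le _ _).trans_eq (by rw [norm_smul, Real.norm_eq_abs])
    _ ≤ ‖σ d‖ + ‖σ d‖ / c * ‖v‖ := by gcongr; rwa [le_div_iff₀ hc]
    _ = ‖σ d‖ * (1 + ‖v‖ / c) := by ring
    _ ≤ (‖σ‖ + 1) * ‖d‖ * (1 + ‖v‖ / c) := by
        gcongr
        exact (σ.le_opNorm d).trans (by gcongr; exact le_add_of_nonneg_right zero_le_one)
    _ = (‖σ‖ + 1) * (1 + ‖v‖ / c) * ‖d‖ := by ring

lemma eq_of_not_strLt (hL : 0 ≪ L.symm (0, 1)) {x y : Fin n → ℝ} (hxy : ¬ x ≪ y) (hyx : ¬ y ≪ x)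
    (h : (L x).1 = (L y).1) : x = y := by
  obtain ⟨C, -, hC⟩ := exists_norm_sub_le_of_not_strLt hL
  have := hC x y hxy hyx
  rw [h, sub_self, norm_zero, mul_zero] at this
  exact sub_eq_zero.1 (norm_le_zero_iff.1 this)

end Projection

section PlaneProjection

variable {n : ℕ} {L : (Fin n → ℝ) ≃L[ℝ] ℂ × ℝ} {H : (Fin n → ℝ) → ℝ} {z : Fin n → ℝ}

/- As `Im (L ·).1` is the differential of `H` at `z`, the variation of `H` between unordered points
near `z` with the same `Re (L ·).1` is at least half their distance in the plane. -/
lemma exists_nhds_norm_sub_le_two_mul_abs_sub (hL : 0 ≪ L.symm (0, 1)) (hH : ContDiffAt ℝ 1 H z)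
    (hLH : ∀ x, (L x).1.im = fderiv ℝ H z x) :
    ∃ U ∈ 𝓝 z, ∀ x ∈ U, ∀ y ∈ U, (L x).1.re = (L y).1.re → ¬ x ≪ y → ¬ y ≪ x →
      ‖(L x).1 - (L y).1‖ ≤ 2 * |H x - H y| := by
  obtain ⟨C, hC, hbound⟩ := exists_norm_sub_le_of_not_strLt hL
  have hstrict := (hH.hasStrictFDerivAt one_ne_zero).isLittleO.def
    (show (0 : ℝ) < (2 * C)⁻¹ by positivity)
  rw [nhds_prod_eq] at hstrict
  obtain ⟨U, hU, hHU⟩ := eventually_prod_self_iff'.1 hstrict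
  refine ⟨U, hU, fun x hx y hy hre hxy hyx ↦ ?_⟩
  have him : (L x).1 - (L y).1 = (fderiv ℝ H z (x - y) : ℝ) * Complex.I := by
    apply Complex.ext <;> simp [hre, hLH]
  have hle := hbound x y hxy hyx
  rw [him, norm_mul, Complex.norm_I, mul_one, Complex.norm_real, Real.norm_eq_abs] at hle ⊢
  have hsmall : |H x - H y - fderiv ℝ H z (x - y)| ≤ |fderiv ℝ H z (x - y)| / 2 :=
    calc _ ≤ (2 * C)⁻¹ * ‖x - y‖ := hHU x hx y hy
      _ ≤ (2 * C)⁻¹ * (C * |fderiv ℝ H z (x - y)|) := by gcongr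
      _ = |fderiv ℝ H z (x - y)| / 2 := by field_simp
  rw [abs_sub_comm] at hsmall
  linarith [abs_sub_abs_le_abs_sub (fderiv ℝ H z (x - y)) (H x - H y)]

lemma exists_nhds_eq_or_strLt (hL : 0 ≪ L.symm (0, 1)) (hH : ContDiffAt ℝ 1 H z)
    (hLH : ∀ x, (L x).1.im = fderiv ℝ H z x) :
    ∃ U ∈ 𝓝 z, ∀ x ∈ U, ∀ y ∈ U, H x = H y → (L x).1.re = (L y).1.re →
      x = y ∨ x ≪ y ∨ y ≪ x := by
  obtain ⟨U, hU, hHU⟩ := exists_nhds_norm_sub_le_two_mul_abs_sub hL hH hLH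
  refine ⟨U, hU, fun x hx y hy hHxy hre ↦ ?_⟩
  by_contra! hn
  refine hn.1 (eq_of_not_strLt hL hn.2.1 hn.2.2 (sub_eq_zero.1 (norm_le_zero_iff.1 ?_)))
  simpa [hHxy] using hHU x hx y hy hre hn.2.1 hn.2.2

lemma exists_continuousLinearEquiv_complex_prod {v w : Fin 3 → ℝ} (hw : w ≠ 0) (hv : 0 ≪ v)
    (hwv : w ⬝ᵥ v = 0) :
    ∃ L : (Fin 3 → ℝ) ≃L[ℝ] ℂ × ℝ, 0 ≪ L.symm (0, 1) ∧ ∀ x, (L x).1.im = w ⬝ᵥ x := by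
  have hww : w ⬝ᵥ w ≠ 0 := dotProduct_self_eq_zero.not.2 hw
  have hvv : 0 < v ⬝ᵥ v := (dotProduct_nonneg_of_nonneg hv.le hv.le).lt_of_ne'
    (dotProduct_self_eq_zero.not.2 hv.lt.ne')
  have hdet : Matrix.det ![w ⨯₃ v, w, v] ≠ 0 := by
    rw [← triple_product_eq_det, cross_dot_cross, hwv, zero_mul, sub_zero]
    exact mul_ne_zero hww hvv.ne'
  let T : (Fin 3 → ℝ) →ₗ[ℝ] ℂ × ℝ :=
    { toFun := fun x ↦ (⟨(w ⨯₃ v) ⬝ᵥ x, w ⬝ᵥ x⟩, v ⬝ᵥ x)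
      map_add' := fun x y ↦ by
        refine Prod.ext (Complex.ext ?_ ?_) ?_ <;> simp [dotProduct_add]
      map_smul' := fun c x ↦ by
        refine Prod.ext (Complex.ext ?_ ?_) ?_ <;> simp [dotProduct_smul] }
  have hT : Function.Injective T := by
    refine (injective_iff_map_eq_zero T).2 fun x hx ↦ Matrix.eq_zero_of_mulVec_eq_zero hdet ?_
    obtain ⟨hx₁, hx₂⟩ := Prod.ext_iff.1 hx
    ext i
    fin_cases i
    exacts [congrArg Complex.re hx₁, congrArg Complex.im hx₁, hx₂]
  let L := (T.linearEquivOfInjective hT (by simp)).toContinuousLinearEquiv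
  refine ⟨L, ?_, fun x ↦ rfl⟩
  have hLv : L ((v ⬝ᵥ v)⁻¹ • v) = (0, 1) := by
    change T _ = _
    refine Prod.ext (Complex.ext ?_ ?_) ?_ <;> simp [T, hwv, hvv.ne', dotProduct_comm _ v]
  rw [← hLv, L.symm_apply_apply]
  exact fun i ↦ mul_pos (inv_pos.2 hvv) (hv i)

end PlaneProjection

/-! ### The upper closure of a rising arc -/

section Frontier

lemma exists_mem_frontier {X : Type*} [TopologicalSpace X] {U : Set X} {c : ℝ → X} {p q : ℝ}
    (hpq : p ≤ q) (hc : ContinuousOn c (Icc p q)) (hp : c p ∉ U) (hq : c q ∈ U) :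
    ∃ t ∈ Icc p q, c t ∈ frontier U := by
  have hcover : c '' Icc p q ⊆ closure U ∪ closure Uᶜ := fun x _ ↦
    (em (x ∈ U)).imp (fun h ↦ subset_closure h) fun h ↦ subset_closure (mem_compl h)
  obtain ⟨_, ⟨t, ht, rfl⟩, hU, hUc⟩ := isPreconnected_closed_iff.1 (isPreconnected_Icc.image c hc)
    (closure U) (closure Uᶜ) isClosed_closure isClosed_closure hcover
    ⟨c q, mem_image_of_mem c (right_mem_Icc.2 hpq), subset_closure hq⟩
    ⟨c p, mem_image_of_mem c (left_mem_Icc.2 hpq), subset_closure hp⟩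
  refine ⟨t, ht, ?_⟩
  rw [frontier_eq_closure_inter_closure]
  exact ⟨hU, hUc⟩

variable {n : ℕ} {U K : Set (Fin n → ℝ)} {x y : Fin n → ℝ}

lemma not_strLt_of_mem_frontier (hU : IsUpperSet U) (hx : x ∈ closure U) (hy : y ∈ frontier U) :
    ¬ x ≪ y := fun h ↦
  hy.2 (hU.mem_interior_of_forall_lt hx h)

open scoped Pointwise in
lemma isClosed_upperClosure_of_isCompact (hK : IsCompact K) :
    IsClosed (upperClosure K : Set (Fin n → ℝ)) := by
  rw [← add_zero K, ← singleton_zero, ← add_upperClosure, upperClosure_singleton]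
  exact isClosed_Ici.add_left_of_isCompact hK

lemma exists_strLt_of_mem_interior_upperClosure
    (hx : x ∈ interior (upperClosure K : Set (Fin n → ℝ))) : ∃ k ∈ K, k ≪ x := by
  have hlim : Tendsto (fun t : ℝ ↦ x - t • (1 : Fin n → ℝ)) (𝓝[>] 0) (𝓝 x) := by
    have hcont : Continuous fun t : ℝ ↦ x - t • (1 : Fin n → ℝ) := by fun_prop
    simpa using (hcont.tendsto 0).mono_left nhdsWithin_le_nhds
  obtain ⟨t, ⟨k, hk, hkx⟩, ht⟩ :=
    ((hlim.eventually_mem (mem_interior_iff_mem_nhds.1 hx)).and self_mem_nhdsWithin).exists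
  refine ⟨k, hk, fun i ↦ (hkx i).trans_lt ?_⟩
  simpa using ht

variable {E : Type*} [NormedAddCommGroup E] [NormedSpace ℝ E] {L : (Fin n → ℝ) ≃L[ℝ] E × ℝ}

lemma exists_mem_frontier_upperClosure [NeZero n] (hL : 0 ≪ L.symm (0, 1))
    (hK : Bornology.IsBounded K) (hne : K.Nonempty) (ξ : E) :
    ∃ q ∈ frontier (upperClosure K : Set (Fin n → ℝ)), (L q).1 = ξ := by
  obtain ⟨k, hk⟩ := hne
  have hline : ∀ t, L.symm (ξ, t) = L.symm (ξ, 0) + t • L.symm (0, 1) := fun t ↦ by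
    rw [← map_smul, ← map_add]
    simp
  obtain ⟨t, ht⟩ := (hL.eventually_strLt_smul
    ((hK.sub (Bornology.isBounded_singleton (x := L.symm (ξ, 0)))).union
      ((Bornology.isBounded_singleton (x := L.symm (ξ, 0))).sub hK)) |>.and
        (eventually_ge_atTop 0)).exists
  have hbelow : L.symm (ξ, -t) ∉ (upperClosure K : Set (Fin n → ℝ)) := fun ⟨l, hl, hle⟩ ↦ by
    have hlt := ht.1 _ (.inr ⟨_, rfl, l, hl, rfl⟩) 0
    have hle := hle 0
    simp only [hline (-t), neg_smul, Pi.add_apply, Pi.neg_apply, Pi.sub_apply] at hle hlt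
    linarith
  have habove : L.symm (ξ, t) ∈ (upperClosure K : Set (Fin n → ℝ)) := ⟨k, hk, fun i ↦ by
    have hlt := ht.1 _ (.inl ⟨k, hk, _, rfl, rfl⟩) i
    simp only [hline t, Pi.add_apply, Pi.sub_apply] at hlt ⊢
    linarith⟩
  obtain ⟨u, -, hu⟩ := exists_mem_frontier (c := fun t ↦ L.symm (ξ, t)) (neg_le_self ht.2)
    (by fun_prop) hbelow habove
  exact ⟨_, hu, by simp⟩

lemma isCompact_frontier_inter_closure_preimage (hL : 0 ≪ L.symm (0, 1)) (hU : IsUpperSet U)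
    {D : Set E} (hD : Bornology.IsBounded D) :
    IsCompact (frontier U ∩ closure ((fun x ↦ (L x).1) ⁻¹' D)) := by
  obtain ⟨C, hC, hCL⟩ := exists_norm_sub_le_of_not_strLt hL
  have hnot : ∀ x ∈ frontier U, ∀ y ∈ frontier U, ¬ x ≪ y := fun x hx y hy ↦
    not_strLt_of_mem_frontier hU (frontier_subset_closure hx) hy
  obtain ⟨M, hM⟩ := Metric.isBounded_iff.1 hD.closure
  refine Metric.isCompact_of_isClosed_isBounded (isClosed_frontier.inter isClosed_closure)
    (Metric.isBounded_iff.2 ⟨C * M, fun x hx y hy ↦ ?_⟩)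
  have hcont : Continuous fun x ↦ (L x).1 := by fun_prop
  have hxy := hM (hcont.closure_preimage_subset D hx.2) (hcont.closure_preimage_subset D hy.2)
  rw [dist_eq_norm] at hxy ⊢
  exact (hCL x y (hnot x hx.1 y hy.1) (hnot y hy.1 x hx.1)).trans
    (mul_le_mul_of_nonneg_left hxy hC.le)

end Frontier

section FlowTube

variable {E : Type*} [NormedAddCommGroup E] [NormedSpace ℝ E] {f : E → E} {Φ : E → ℝ → E} {x₀ : E}
  {R ε : ℝ}

lemma IsLocalFlow.continuousOn_apply (hΦ : IsLocalFlow f Φ x₀ R ε) {t : ℝ} (ht : t ∈ Icc (-ε) ε) :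
    ContinuousOn (fun x ↦ Φ x t) (Metric.closedBall x₀ R) :=
  hΦ.continuousOn.comp (f := fun x ↦ (x, t)) (by fun_prop) fun _ hx ↦ ⟨hx, ht⟩

lemma IsLocalFlow.eventually_mem (hΦ : IsLocalFlow f Φ x₀ R ε) {W : Set E} (hW : W ∈ 𝓝 x₀) :
    ∀ᶠ δ in 𝓝[>] (0 : ℝ), ∀ᶠ x in 𝓝 x₀, ∀ t ∈ Icc (-δ) δ, Φ x t ∈ W := by
  have hcont : ContinuousAt (Function.uncurry Φ) (x₀, 0) := hΦ.continuousOn.continuousAt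
    (prod_mem_nhds (Metric.closedBall_mem_nhds x₀ hΦ.radius_pos)
      (Icc_mem_nhds (neg_lt_zero.2 hΦ.time_pos) hΦ.time_pos))
  have hmem : ∀ᶠ p in 𝓝 x₀ ×ˢ 𝓝 (0 : ℝ), Φ p.1 p.2 ∈ W := by
    rw [← nhds_prod_eq]
    refine hcont.eventually_mem ?_
    rwa [Function.uncurry_apply_pair,
      hΦ.map_zero _ (Metric.mem_closedBall_self hΦ.radius_pos.le)]
  obtain ⟨P, hP, Q, hQ, hPQ⟩ := eventually_prod_iff.1 hmem
  obtain ⟨e, he, hQe⟩ := Metric.eventually_nhds_iff.1 hQ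
  filter_upwards [Ioo_mem_nhdsGT he] with δ hδ
  filter_upwards [hP] with x hx t ht
  refine hPQ hx (hQe ?_)
  rw [Real.dist_0_eq_abs]
  exact (abs_le.2 ht).trans_lt hδ.2

end FlowTube

section RisingArc

variable {n : ℕ} {f : (Fin n → ℝ) → Fin n → ℝ} {H : (Fin n → ℝ) → ℝ} {γ : ℝ → Fin n → ℝ}
  {a b c : ℝ}

lemma IsCoopIrred.shift_strLt_shift [NeZero n] (hf : IsCoopIrred f) {s s' u : ℝ}
    (hγ : IsSol f γ (Icc a b)) (hs : a ≤ s) (hs' : a ≤ s') (hu : 0 ≤ u) (hsu : s + u ≤ b)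
    (hsu' : s' + u ≤ b) (h : γ s ≪ γ s') : γ (s + u) ≪ γ (s' + u) := by
  rcases hu.eq_or_lt with rfl | hu
  · simpa using h
  · simpa only [add_comm u] using hf.strLt_of_lt (a := 0) (b := u)
      (hγ.shift s fun t ht ↦ ⟨by linarith [ht.1], by linarith [ht.2]⟩)
      (hγ.shift s' fun t ht ↦ ⟨by linarith [ht.1], by linarith [ht.2]⟩) (by simpa using h.lt) u
      ⟨hu, le_rfl⟩

lemma IsFirstIntegral.not_isLocalMax_abs_sub (hH : IsFirstIntegral f H) {x : Fin n → ℝ}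
    (hne : H x ≠ c) : ¬ IsLocalMax (fun y ↦ |H y - c|) x := by
  intro hmax
  refine hH.fderiv_ne_zero x ?_
  rcases hne.lt_or_gt with h | h
  · refine IsLocalMin.fderiv_eq_zero ?_
    filter_upwards [hmax] with y hy
    rw [abs_of_neg (sub_neg.2 h)] at hy
    linarith [neg_le_abs (H y - c)]
  · refine IsLocalMax.fderiv_eq_zero ?_
    filter_upwards [hmax] with y hy
    rw [abs_of_pos (sub_pos.2 h)] at hy
    linarith [le_abs_self (H y - c)]

/-- `γ` is a solution around `[a, b]` with `γ a ≤ γ b`. The time margin of length `1` on either side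
is an arbitrary normalisation. -/
structure IsRisingArc (f : (Fin n → ℝ) → Fin n → ℝ) (γ : ℝ → Fin n → ℝ) (a b : ℝ) : Prop where
  lt : a < b
  isSol : IsSol f γ (Icc (a - 1) (b + 1))
  le : γ a ≤ γ b

/-- The points lying above the arc `γ '' [a, b]`. -/
abbrev arcUpper (γ : ℝ → Fin n → ℝ) (a b : ℝ) : Set (Fin n → ℝ) := upperClosure (γ '' Icc a b)

namespace IsRisingArc

lemma isSol_Icc (hγ : IsRisingArc f γ a b) : IsSol f γ (Icc a b) :=
  hγ.isSol.mono (Icc_subset_Icc (by linarith) (by linarith))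

lemma isCompact_image (hγ : IsRisingArc f γ a b) : IsCompact (γ '' Icc a b) :=
  isCompact_Icc.image_of_continuousOn hγ.isSol_Icc.continuousOn

lemma isClosed_arcUpper (hγ : IsRisingArc f γ a b) : IsClosed (arcUpper γ a b) :=
  isClosed_upperClosure_of_isCompact hγ.isCompact_image

lemma not_strLt [NeZero n] (hγ : IsRisingArc f γ a b) (hf : IsCoopIrred f) {s s' : ℝ}
    (hs : a ≤ s) (hss' : s < s') (hs' : s' ≤ b) : ¬ γ s' ≪ γ s := by
  intro h
  have hb : γ b ≪ γ (s + (b - s')) := by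
    simpa only [add_sub_cancel] using hf.shift_strLt_shift hγ.isSol_Icc (hs.trans hss'.le) hs
      (sub_nonneg.2 hs') (by linarith) (by linarith) h
  have ha : γ a ≪ γ (s + (b - s')) := fun i ↦ (hγ.le i).trans_lt (hb i)
  have hlt : a < s + (b - s') :=
    (show a ≤ s + (b - s') by linarith).lt_of_ne fun e ↦ by simpa [← e] using ha 0
  exact hf.not_peak hγ.isSol_Icc hlt (by linarith) ha hb.lt

lemma mem_interior_of_isSol (hγ : IsRisingArc f γ a b) (hf : IsCoopIrred f) {X : ℝ → Fin n → ℝ}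
    {u : ℝ} (hX : IsSol f X (Icc 0 u)) (hu : 0 < u) (hu1 : u ≤ 1) (hub : u ≤ b - a)
    (h0 : X 0 ∈ arcUpper γ a b) (hne : X 0 ∉ γ '' Icc a b) : X u ∈ interior (arcUpper γ a b) := by
  obtain ⟨_, ⟨s, hs, rfl⟩, hle⟩ := h0
  have hlt : γ s < X 0 := hle.lt_of_ne fun e ↦ hne (e ▸ mem_image_of_mem γ hs)
  have hXu : γ (u + s) ≪ X u := hf.strLt_of_lt (a := 0) (b := u)
    (hγ.isSol.shift s fun t ht ↦ ⟨by linarith [ht.1, hs.1], by linarith [ht.2, hs.2]⟩) hX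
    (by simpa using hlt) u ⟨hu, le_rfl⟩
  suffices h : γ (u + s) ∈ arcUpper γ a b from
    (upperClosure _).upper.mem_interior_of_forall_lt (subset_closure h) hXu
  rcases le_or_gt (u + s) b with h | h
  · exact subset_upperClosure ⟨_, ⟨by linarith [hs.1], h⟩, rfl⟩
  -- Past `b`, the arc stays above the translate of it that starts at `a`.
  · refine ⟨_, ⟨a + (u + s - b), ⟨by linarith, by linarith [hs.2]⟩, rfl⟩, ?_⟩
    have hshift := hf.shift_le_shift hγ.isSol (s := a) (s' := b) (u := u + s - b) (by linarith)
      (by linarith [hγ.lt]) (by linarith) (by linarith [hs.2, hγ.lt]) (by linarith [hs.2]) hγ.le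
    rwa [add_sub_cancel] at hshift

-- Near `x` the flow enters the interior of the upper set forwards in time and leaves the upper set
-- backwards, so that every orbit near `x` crosses the frontier.
lemma eventually_exists_mem_frontier (hγ : IsRisingArc f γ a b) (hf : IsCoopIrred f)
    (hH : IsFirstIntegral f H) (hc : ∀ t ∈ Icc a b, H (γ t) = c) {x : Fin n → ℝ}
    (hx : x ∈ frontier (arcUpper γ a b)) (hne : H x ≠ c) {W : Set (Fin n → ℝ)} (hW : W ∈ 𝓝 x) :
    ∀ᶠ y in 𝓝 x, ∃ q ∈ frontier (arcUpper γ a b) ∩ W, H q = H y := by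
  obtain ⟨Φ, R, ε, hΦ⟩ := exists_isLocalFlow hf.contDiff x
  have hxR := Metric.mem_closedBall_self (x := x) hΦ.radius_pos.le
  have hba : 0 < min 1 (b - a) := lt_min one_pos (sub_pos.2 hγ.lt)
  obtain ⟨τ, ⟨hτW, hτε⟩, hτ, hτ1⟩ := ((hΦ.eventually_mem hW).and
    (Ioc_mem_nhdsGT hΦ.time_pos)).and (Ioc_mem_nhdsGT hba) |>.exists
  have hτ1' := le_min_iff.1 hτ1
  have hsub : Icc (-τ) τ ⊆ Icc (-ε) ε := Icc_subset_Icc (neg_le_neg hτε.2) hτε.2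
  have hτmem : τ ∈ Icc (-τ) τ := ⟨by linarith, le_rfl⟩
  have hτmem' : -τ ∈ Icc (-τ) τ := ⟨le_rfl, by linarith⟩
  have h0mem : (0 : ℝ) ∈ Icc (-τ) τ := ⟨by linarith, hτ.le⟩
  have hconst : ∀ y ∈ Metric.closedBall x R, ∀ t ∈ Icc (-τ) τ, H (Φ y t) = H y := fun y hy t ht ↦ by
    rw [hH.eq_of_isSol (hΦ.isSol y hy) ordConnected_Icc (hsub ht) (hsub h0mem), hΦ.map_zero y hy]
  have harc : ∀ t ∈ Icc (-τ) τ, Φ x t ∉ γ '' Icc a b := fun t ht ⟨s, hs, hst⟩ ↦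
    hne (by rw [← hconst x hxR t ht, ← hst, hc s hs])
  have hup : Φ x τ ∈ interior (arcUpper γ a b) :=
    hγ.mem_interior_of_isSol hf ((hΦ.isSol x hxR).mono fun t ht ↦ hsub ⟨by linarith [ht.1], ht.2⟩)
      hτ hτ1'.1 hτ1'.2 (by simpa [hΦ.map_zero x hxR] using hγ.isClosed_arcUpper.frontier_subset hx)
      (harc 0 h0mem)
  have hdown : Φ x (-τ) ∉ arcUpper γ a b := fun h ↦ by
    have hint := hγ.mem_interior_of_isSol hf (X := fun t ↦ Φ x (t + -τ)) (u := τ)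
      ((hΦ.isSol x hxR).shift (-τ) fun t ht ↦ hsub ⟨by linarith [ht.1], by linarith [ht.2]⟩)
      hτ hτ1'.1 hτ1'.2 (by simpa using h) (by simpa using harc (-τ) hτmem')
    rw [add_neg_cancel, hΦ.map_zero x hxR] at hint
    exact hx.2 hint
  have hcont : ∀ t ∈ Icc (-τ) τ, ContinuousAt (fun y ↦ Φ y t) x := fun t ht ↦
    (hΦ.continuousOn_apply (hsub ht)).continuousAt (Metric.closedBall_mem_nhds x hΦ.radius_pos)
  filter_upwards [hτW, (hcont τ hτmem).eventually_mem (isOpen_interior.mem_nhds hup),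
    (hcont (-τ) hτmem').eventually_mem (hγ.isClosed_arcUpper.isOpen_compl.mem_nhds hdown),
    Metric.closedBall_mem_nhds x hΦ.radius_pos] with y hyW hy hy' hyR
  obtain ⟨t, ht, hq⟩ := exists_mem_frontier (h0mem.1.trans h0mem.2)
    ((hΦ.isSol y hyR).continuousOn.mono hsub) hy' (interior_subset hy)
  exact ⟨Φ y t, ⟨hq, hyW t ht⟩, hconst y hyR t ht⟩

lemma abs_sub_lt_of_frontier (hγ : IsRisingArc f γ a b) (hf : IsCoopIrred f)
    (hH : IsFirstIntegral f H) (hc : ∀ t ∈ Icc a b, H (γ t) = c) {D : Set (Fin n → ℝ)}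
    (hD : IsOpen D) (hDc : IsCompact (frontier (arcUpper γ a b) ∩ closure D)) {μ : ℝ} (hμ : 0 < μ)
    (h : ∀ x ∈ frontier (arcUpper γ a b), x ∈ frontier D → |H x - c| < μ) :
    ∀ x ∈ frontier (arcUpper γ a b), x ∈ D → |H x - c| < μ := by
  intro y hy hyD
  obtain ⟨x, ⟨hx, hxD⟩, hmax⟩ := hDc.exists_isMaxOn ⟨y, hy, subset_closure hyD⟩
    ((hH.contDiff.continuous.sub continuous_const).abs.continuousOn (f := fun x ↦ |H x - c|))
  refine (hmax ⟨hy, subset_closure hyD⟩).trans_lt ?_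
  by_contra! hμx
  have hxD' : x ∈ D := by
    by_contra hxD'
    exact hμx.not_gt (h x hx (hD.frontier_eq ▸ ⟨hxD, hxD'⟩))
  have hne : H x ≠ c := fun e ↦ by simp [e, hμ.not_ge] at hμx
  refine hH.not_isLocalMax_abs_sub hne ?_
  filter_upwards [hγ.eventually_exists_mem_frontier hf hH hc hx hne (hD.mem_nhds hxD')]
    with y ⟨q, ⟨hq, hqD⟩, hqy⟩
  exact hqy ▸ hmax ⟨hq, subset_closure hqD⟩

end IsRisingArc

end RisingArc

section ReturnArc

lemma IsSol.strictMonoOn_clm {E : Type*} [NormedAddCommGroup E] [NormedSpace ℝ E] {f : E → E}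
    {y : ℝ → E} {s t : ℝ} (hy : IsSol f y (Icc s t)) (β : E →L[ℝ] ℝ)
    (hpos : ∀ u ∈ Icc s t, 0 < β (f (y u))) : StrictMonoOn (fun u ↦ β (y u)) (Icc s t) := by
  refine strictMonoOn_of_deriv_pos (convex_Icc s t) (β.continuous.comp_continuousOn hy.continuousOn)
    fun u hu ↦ ?_
  have hderiv : HasDerivAt y (f (y u)) u :=
    IsSol.hasDerivAt (hy.mono interior_subset) isOpen_interior hu
  exact (hpos u (interior_subset hu)).trans_eq (β.hasFDerivAt.comp_hasDerivAt u hderiv).deriv.symm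

variable {n : ℕ} {f : (Fin n → ℝ) → Fin n → ℝ} {β : (Fin n → ℝ) →L[ℝ] ℝ} {z : Fin n → ℝ}
  {V W : Set (Fin n → ℝ)} {ρ δ : ℝ} {Φ : (Fin n → ℝ) → ℝ → Fin n → ℝ} {γ : ℝ → Fin n → ℝ} {a b : ℝ}

/-- A local flow near `z`, inside `V`, along which `β` increases and some coordinate decreases. -/
structure IsFlowBox (f : (Fin n → ℝ) → Fin n → ℝ) (β : (Fin n → ℝ) →L[ℝ] ℝ) (z : Fin n → ℝ)
    (V : Set (Fin n → ℝ)) (ρ δ : ℝ) (Φ : (Fin n → ℝ) → ℝ → Fin n → ℝ) : Prop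
    extends IsLocalFlow f Φ z (2 * ρ) δ where
  subset : Metric.closedBall z (2 * ρ) ⊆ V
  time_le_one : δ ≤ 1
  clm_pos : ∀ x ∈ Metric.ball z ρ, 0 < β (f x)
  exists_neg : ∃ i, ∀ x ∈ Metric.ball z ρ, f x i < 0
  eventually_mem_ball : ∀ᶠ x in 𝓝 z, ∀ t ∈ Icc (-δ) δ, Φ x t ∈ Metric.ball z ρ

/-- An arc `γ '' [a, b]` with `γ a ≤ γ b` whose endpoints lie in `W`, on the section `β x = β z`,
and which does not meet the part of the section in `V` at times strictly between. -/
structure IsReturnArc (f : (Fin n → ℝ) → Fin n → ℝ) (β : (Fin n → ℝ) →L[ℝ] ℝ) (z : Fin n → ℝ)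
    (V W : Set (Fin n → ℝ)) (γ : ℝ → Fin n → ℝ) (a b : ℝ) : Prop extends IsRisingArc f γ a b where
  mem : ∀ e, e = a ∨ e = b → γ e ∈ W
  clm_eq : ∀ e, e = a ∨ e = b → β (γ e) = β z
  clm_ne : ∀ t ∈ Ioo a b, γ t ∈ V → β (γ t) ≠ β z

lemma IsReturnArc.mono (hγ : IsReturnArc f β z V W γ a b) {V' : Set (Fin n → ℝ)} (hV : V' ⊆ V) :
    IsReturnArc f β z V' W γ a b :=
  { hγ with clm_ne := fun t ht h ↦ hγ.clm_ne t ht (hV h) }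

lemma exists_isFlowBox (hf : ContDiff ℝ 1 f) (hβ : 0 < β (f z)) (hz : ¬ 0 ≤ f z) (hV : V ∈ 𝓝 z) :
    ∃ ρ δ Φ, IsFlowBox f β z V ρ δ Φ := by
  obtain ⟨i, hi⟩ : ∃ i, f z i < 0 := by
    simpa only [Pi.le_def, Pi.zero_apply, not_forall, not_le] using hz
  obtain ⟨Φ, R, ε, hΦ⟩ := exists_isLocalFlow hf z
  have hpos : ∀ᶠ x in 𝓝 z, 0 < β (f x) :=
    (β.continuous.comp hf.continuous).continuousAt.eventually_const_lt hβ
  have hneg : ∀ᶠ x in 𝓝 z, f x i < 0 :=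
    ((continuous_apply i).comp hf.continuous).continuousAt.eventually_lt_const hi
  obtain ⟨r, hr, hball⟩ := Metric.eventually_nhds_iff_ball.1 ((hpos.and hneg).and hV)
  obtain ⟨ρ, hρ, hρr⟩ := exists_between (lt_min hr hΦ.radius_pos)
  have hρ2 : 2 * (ρ / 2) < min r R := by linarith
  have hclosed : Metric.closedBall z (2 * (ρ / 2)) ⊆ Metric.closedBall z R :=
    Metric.closedBall_subset_closedBall (hρ2.trans_le (min_le_right _ _)).le
  have hopen : Metric.closedBall z (2 * (ρ / 2)) ⊆ Metric.ball z r :=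
    Metric.closedBall_subset_ball (hρ2.trans_le (min_le_left _ _))
  have hball' : Metric.ball z (ρ / 2) ⊆ Metric.ball z r :=
    (Metric.ball_subset_closedBall.trans
      (Metric.closedBall_subset_closedBall (by linarith))).trans hopen
  obtain ⟨δ, hδ, hδmem⟩ := ((hΦ.eventually_mem (Metric.ball_mem_nhds z (half_pos hρ))).and
    (Ioc_mem_nhdsGT (lt_min hΦ.time_pos one_pos))).exists
  obtain ⟨hδε, hδ1⟩ := le_min_iff.1 hδmem.2
  have hIcc : Icc (-δ) δ ⊆ Icc (-ε) ε := Icc_subset_Icc (neg_le_neg hδε) hδε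
  exact ⟨ρ / 2, δ, Φ, {
    radius_pos := by linarith
    time_pos := hδmem.1
    map_zero x hx := hΦ.map_zero x (hclosed hx)
    isSol x hx := (hΦ.isSol x (hclosed hx)).mono hIcc
    continuousOn := hΦ.continuousOn.mono (prod_mono hclosed hIcc)
    subset x hx := (hball x (hopen hx)).2
    time_le_one := hδ1
    clm_pos x hx := (hball x (hball' hx)).1.1
    exists_neg := ⟨i, fun x hx ↦ (hball x (hball' hx)).1.2⟩
    eventually_mem_ball := hδ }⟩

namespace IsFlowBox

lemma pos (hB : IsFlowBox f β z V ρ δ Φ) : 0 < ρ := by linarith [hB.radius_pos]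

lemma ball_subset (hB : IsFlowBox f β z V ρ δ Φ) : Metric.ball z ρ ⊆ Metric.closedBall z (2 * ρ) :=
  Metric.ball_subset_closedBall.trans (Metric.closedBall_subset_closedBall (by linarith [hB.pos]))

lemma eventually_exists_clm_eq (hB : IsFlowBox f β z V ρ δ Φ) {d : ℝ} (hd : d ∈ Ioc 0 δ) :
    ∀ᶠ x in 𝓝 z, ∃ u ∈ Ioo (-d) d, β (Φ x u) = β z := by
  have hsub : Icc (-d) d ⊆ Icc (-δ) δ := Icc_subset_Icc (neg_le_neg hd.2) hd.2
  have hz := Metric.mem_closedBall_self (x := z) hB.radius_pos.le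
  have hmono : StrictMonoOn (fun u ↦ β (Φ z u)) (Icc (-d) d) :=
    IsSol.strictMonoOn_clm ((hB.isSol z hz).mono hsub) β fun u hu ↦
      hB.clm_pos _ (hB.eventually_mem_ball.self_of_nhds u (hsub hu))
  have hl : -d ∈ Icc (-d) d := ⟨le_rfl, by linarith [hd.1]⟩
  have h0 : (0 : ℝ) ∈ Icc (-d) d := ⟨by linarith [hd.1], hd.1.le⟩
  have hr : d ∈ Icc (-d) d := ⟨by linarith [hd.1], le_rfl⟩
  have hlt := hmono hl h0 (neg_lt_zero.2 hd.1)
  have hgt := hmono h0 hr hd.1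
  simp only [hB.map_zero z hz] at hlt hgt
  have hcont : ∀ u ∈ Icc (-d) d, ContinuousAt (fun x ↦ β (Φ x u)) z := fun u hu ↦
    β.continuous.continuousAt.comp ((hB.continuousOn_apply (hsub hu)).continuousAt
      (Metric.closedBall_mem_nhds z hB.radius_pos))
  filter_upwards [(hcont _ hl).eventually_lt_const hlt, (hcont _ hr).eventually_const_lt hgt,
    Metric.closedBall_mem_nhds z hB.radius_pos] with x hxl hxr hx
  exact intermediate_value_Ioo (h0.1.trans h0.2) (β.continuous.comp_continuousOn
    ((hB.isSol x hx).continuousOn.mono hsub)) ⟨hxl, hxr⟩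

lemma apply_eq (hB : IsFlowBox f β z V ρ δ Φ) (hf : ContDiff ℝ 1 f) (hγ : IsRisingArc f γ a b)
    {t u : ℝ} (ht : t ∈ Icc a b) (hx : γ t ∈ Metric.closedBall z (2 * ρ)) (hu : u ∈ Icc (-δ) δ) :
    Φ (γ t) u = γ (t + u) :=
  hB.toIsLocalFlow.eq_of_isSol hf hx (hγ.isSol.mono (Icc_subset_Icc
    (by linarith [ht.1, hB.time_le_one]) (by linarith [ht.2, hB.time_le_one]))) hu

lemma eventually_ne (hB : IsFlowBox f β z V ρ δ Φ) (hf : ContDiff ℝ 1 f) {d : ℝ}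
    (hd : d ∈ Ioc 0 δ) : ∀ᶠ x in 𝓝 z, ∀ W γ a b, IsReturnArc f β z V W γ a b →
      ∀ t ∈ Icc (a + d) (b - d), γ t ≠ x := by
  filter_upwards [hB.eventually_exists_clm_eq hd, hB.eventually_mem_ball,
    Metric.closedBall_mem_nhds z hB.radius_pos] with x ⟨u, hu, hβ⟩ hball hx W γ a b hγ t ht hxt
  have huδ : u ∈ Icc (-δ) δ := ⟨by linarith [hu.1, hd.2], by linarith [hu.2, hd.2]⟩
  have heq : Φ x u = γ (t + u) := by
    rw [← hxt] at hx ⊢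
    exact hB.apply_eq hf hγ.toIsRisingArc
      ⟨by linarith [ht.1, hd.1], by linarith [ht.2, hd.1]⟩ hx huδ
  rw [heq] at hβ
  exact hγ.clm_ne (t + u) ⟨by linarith [ht.1, hu.1], by linarith [ht.2, hu.2]⟩
    (heq ▸ hB.subset (hB.ball_subset (hball u huδ))) hβ

lemma eventually_mem_ball_of_isReturnArc (hB : IsFlowBox f β z V ρ δ Φ) (hf : ContDiff ℝ 1 f) :
    ∀ᶠ W in (𝓝 z).smallSets, ∀ γ a b, IsReturnArc f β z V W γ a b → ∀ e, e = a ∨ e = b →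
      ∀ t ∈ Icc (e - δ) (e + δ), γ t ∈ Metric.ball z ρ := by
  filter_upwards [(hB.eventually_mem_ball.and
    (Metric.closedBall_mem_nhds z hB.radius_pos)).smallSets] with W hW γ a b hγ e he t ht
  have heab : e ∈ Icc a b := by
    rcases he with rfl | rfl
    exacts [⟨le_rfl, hγ.lt.le⟩, ⟨hγ.lt.le, le_rfl⟩]
  obtain ⟨hball, hclosed⟩ := hW _ (hγ.mem e he)
  have hu : t - e ∈ Icc (-δ) δ := ⟨by linarith [ht.1], by linarith [ht.2]⟩
  simpa [hB.apply_eq hf hγ.toIsRisingArc heab hclosed hu] using hball _ hu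

lemma eventually_add_lt_sub (hB : IsFlowBox f β z V ρ δ Φ) (hf : ContDiff ℝ 1 f) :
    ∀ᶠ W in (𝓝 z).smallSets, ∀ γ a b, IsReturnArc f β z V W γ a b → a + δ < b - δ := by
  filter_upwards [hB.eventually_mem_ball_of_isReturnArc hf] with W hW γ a b hγ
  by_contra! hle
  have hmono : StrictMonoOn (fun u ↦ β (γ u)) (Icc a b) :=
    IsSol.strictMonoOn_clm hγ.isSol_Icc β fun u hu ↦ hB.clm_pos _ <| by
      rcases le_total u (a + δ) with h | h
      · exact hW γ a b hγ a (.inl rfl) u ⟨by linarith [hu.1, hB.time_pos], h⟩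
      · exact hW γ a b hγ b (.inr rfl) u ⟨by linarith, by linarith [hu.2, hB.time_pos]⟩
  refine (hmono ⟨le_rfl, hγ.lt.le⟩ ⟨hγ.lt.le, le_rfl⟩ hγ.lt).ne ?_
  exact (hγ.clm_eq a (.inl rfl)).trans (hγ.clm_eq b (.inr rfl)).symm

-- Two points of the arc which the flow carries near `z` and far from `z` are themselves apart.
lemma exists_le_norm_sub (hB : IsFlowBox f β z V ρ δ Φ) (hf : ContDiff ℝ 1 f) {d h : ℝ}
    (hd : d ∈ Ioc 0 δ) (hh : h ∈ Icc (-δ) δ) :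
    ∃ r ∈ Ioc 0 ρ, ∀ᶠ W in (𝓝 z).smallSets, ∀ γ a b, IsReturnArc f β z V W γ a b →
      ∀ e, e = a ∨ e = b → e - h ∈ Icc a b → ∀ t ∈ Icc a b, t + h ∈ Icc (a + d) (b - d) →
        r ≤ ‖γ t - γ (e - h)‖ := by
  obtain ⟨σ, hσ, hfar⟩ := Metric.eventually_nhds_iff_ball.1 (hB.eventually_ne hf hd)
  obtain ⟨r, hr, hunif⟩ := Metric.uniformContinuousOn_iff.1
    ((isCompact_closedBall z (2 * ρ)).uniformContinuousOn_of_continuous (hB.continuousOn_apply hh))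
    (σ / 2) (half_pos hσ)
  refine ⟨min r ρ, ⟨lt_min hr hB.pos, min_le_right _ _⟩, ?_⟩
  filter_upwards [hB.eventually_mem_ball_of_isReturnArc hf,
    eventually_smallSets_subset.2 (Metric.ball_mem_nhds z (half_pos hσ))]
    with W hnear hWσ γ a b hγ e he heh t ht hth
  by_contra! hlt
  obtain ⟨hltr, hltρ⟩ := lt_min_iff.1 hlt
  have hx : γ (e - h) ∈ Metric.ball z ρ :=
    hnear γ a b hγ e he _ ⟨by linarith [hh.2], by linarith [hh.1]⟩
  have hxt : γ t ∈ Metric.closedBall z (2 * ρ) := by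
    rw [← dist_eq_norm] at hltρ
    rw [Metric.mem_ball] at hx
    rw [Metric.mem_closedBall]
    linarith [dist_triangle (γ t) (γ (e - h)) z]
  have hdist := hunif _ hxt _ (hB.ball_subset hx) (by rwa [dist_eq_norm])
  rw [hB.apply_eq hf hγ.toIsRisingArc ht hxt hh,
    hB.apply_eq hf hγ.toIsRisingArc heh (hB.ball_subset hx) hh, sub_add_cancel] at hdist
  have hez := Metric.mem_ball.1 (hWσ (hγ.mem e he))
  refine hfar (γ (t + h)) ?_ W γ a b hγ (t + h) hth rfl
  rw [Metric.mem_ball]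
  linarith [dist_triangle (γ (t + h)) (γ e) z]

end IsFlowBox

end ReturnArc

section Visibility

variable {n : ℕ} {f : (Fin n → ℝ) → Fin n → ℝ} {z : Fin n → ℝ} {Φ : (Fin n → ℝ) → ℝ → Fin n → ℝ}
  {R ε d r : ℝ}

lemma exists_mem_Icc_norm_sub_eq {p y : Fin n → ℝ} (hpy : p ≤ y) (hr : 0 < r)
    (h : r ≤ ‖p - y‖) : ∃ x ∈ Icc p y, ‖x - y‖ = r := by
  have hN : 0 < ‖p - y‖ := hr.trans_le h
  refine ⟨AffineMap.lineMap y p (r / ‖p - y‖), (convex_Icc p y).segment_subset (𝕜 := ℝ)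
    ⟨hpy, le_rfl⟩ ⟨le_rfl, hpy⟩
    (lineMap_mem_segment ℝ y p ⟨by positivity, (div_le_one hN).2 h⟩), ?_⟩
  rw [← dist_eq_norm, dist_lineMap_left, dist_comm, dist_eq_norm,
    Real.norm_of_nonneg (by positivity)]
  field_simp

lemma IsLocalFlow.exists_add_le_of_norm_sub_eq [NeZero n] (hΦ : IsLocalFlow f Φ z R ε)
    (hf : IsCoopIrred f) (hd : d ∈ Ioc 0 ε) (hr : 0 < r) :
    ∃ k > 0, ∀ x ∈ Metric.closedBall z R, ∀ y ∈ Metric.closedBall z R, x ≤ y → ‖x - y‖ = r →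
      ∀ i, Φ x d i + k ≤ Φ y d i := by
  let B := Metric.closedBall z R
  let Q : Set ((Fin n → ℝ) × (Fin n → ℝ)) := B ×ˢ B ∩ {p | p.1 ≤ p.2 ∧ ‖p.1 - p.2‖ = r}
  have hQ : IsCompact Q := ((isCompact_closedBall z R).prod (isCompact_closedBall z R)).inter_right
    ((isClosed_le continuous_fst continuous_snd).inter
      (isClosed_eq (continuous_fst.sub continuous_snd).norm continuous_const))
  have hsub : Icc 0 d ⊆ Icc (-ε) ε := Icc_subset_Icc (by linarith [hΦ.time_pos]) hd.2
  have hcont : ∀ i, ContinuousOn (fun x ↦ Φ x d i) B := fun i ↦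
    (continuous_apply i).comp_continuousOn (hΦ.continuousOn_apply (hsub ⟨hd.1.le, le_rfl⟩))
  have hpos : ∀ i, ∃ k > 0, ∀ p ∈ Q, k ≤ Φ p.2 d i - Φ p.1 d i := fun i ↦
    hQ.exists_forall_le' (((hcont i).comp continuousOn_snd fun p hp ↦ hp.1.2).sub
      ((hcont i).comp continuousOn_fst fun p hp ↦ hp.1.1)) fun p ⟨⟨hx, hy⟩, hle, hp⟩ ↦ by
        have hne : p.1 ≠ p.2 := fun e ↦ by simp [e, hr.ne] at hp
        refine sub_pos.2 (hf.strLt_of_lt ((hΦ.isSol _ hx).mono hsub) ((hΦ.isSol _ hy).mono hsub)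
          ?_ d ⟨hd.1, le_rfl⟩ i)
        rw [hΦ.map_zero _ hx, hΦ.map_zero _ hy]
        exact hle.lt_of_ne hne
  choose k hk hkQ using hpos
  obtain ⟨c, hc, hck⟩ := strLt.exists_pos_forall_le (v := k) hk
  exact ⟨c, hc, fun x hx y hy hxy hr i ↦ by
    linarith [hck i, hkQ i (x, y) ⟨⟨hx, hy⟩, hxy, hr⟩]⟩

lemma IsLocalFlow.exists_add_le_of_le_norm_sub [NeZero n] (hΦ : IsLocalFlow f Φ z (2 * R) ε)
    (hf : IsCoopIrred f) (hd : d ∈ Ioc 0 ε) (hr : r ∈ Ioc 0 R) :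
    ∃ k > 0, ∀ y ∈ Metric.closedBall z R, ∀ x, IsSol f x (Icc 0 d) → x 0 ≤ y → r ≤ ‖x 0 - y‖ →
      ∀ i, x d i + k ≤ Φ y d i := by
  obtain ⟨k, hk, hΦk⟩ := hΦ.exists_add_le_of_norm_sub_eq hf hd hr.1
  refine ⟨k, hk, fun y hy x hx hle hrx i ↦ ?_⟩
  obtain ⟨w, hw, hwr⟩ := exists_mem_Icc_norm_sub_eq hle hr.1 hrx
  rw [Metric.mem_closedBall] at hy
  have hyR : y ∈ Metric.closedBall z (2 * R) := Metric.mem_closedBall.2 (by linarith [hr.1, hr.2])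
  have hwR : w ∈ Metric.closedBall z (2 * R) := by
    rw [← dist_eq_norm] at hwr
    rw [Metric.mem_closedBall]
    linarith [dist_triangle w y z, hr.2]
  have hxw : x d ≤ Φ w d := hf.le_of_le hx
    ((hΦ.isSol w hwR).mono (Icc_subset_Icc (by linarith [hΦ.time_pos]) hd.2))
    (by simpa [hΦ.map_zero w hwR] using hw.1) d ⟨hd.1.le, le_rfl⟩
  linarith [hxw i, hΦk w hwR y hyR hw.2 hwr i]

namespace IsFlowBox

variable {β : (Fin n → ℝ) →L[ℝ] ℝ} {V : Set (Fin n → ℝ)} {ρ δ : ℝ}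

lemma eventually_not_le_sub [NeZero n] (hB : IsFlowBox f β z V ρ δ Φ) (hf : IsCoopIrred f)
    (hd : d ∈ Ioc 0 (δ / 2)) : ∀ᶠ W in (𝓝 z).smallSets, ∀ γ a b, IsReturnArc f β z V W γ a b →
      ∀ s ∈ Ico a (b - d), ¬ γ s ≤ γ (b - d) := by
  have hδ := hB.time_pos
  have hdδ : d ∈ Ioc 0 δ := ⟨hd.1, by linarith [hd.2]⟩
  have hdmem : d ∈ Icc (-δ) δ := ⟨by linarith [hd.1], hdδ.2⟩
  obtain ⟨r, hr, hsep⟩ := hB.exists_le_norm_sub hf.contDiff hdδ hdmem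
  obtain ⟨k, hk, hmargin⟩ := hB.toIsLocalFlow.exists_add_le_of_le_norm_sub hf hdδ hr
  obtain ⟨i, hi⟩ := hB.exists_neg
  filter_upwards [hsep, hB.eventually_mem_ball_of_isReturnArc hf.contDiff,
    eventually_smallSets_subset.2 (Metric.ball_mem_nhds z (half_pos hk))]
    with W hsepW hnear hWk γ a b hγ s hs hle
  have hd0 := hd.1
  have hd2 := hd.2
  have hbd : b - d ∈ Icc a b := ⟨by linarith [hs.1, hs.2], by linarith⟩
  have hnear_b := hnear γ a b hγ b (.inr rfl)
  have hy := hnear_b (b - d) ⟨by linarith, by linarith⟩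
  rcases le_or_gt (b - δ) s with hbs | hbs
  · refine (IsSol.strictMonoOn_clm (s := s) (t := b - d) (hγ.isSol_Icc.mono
      (Icc_subset_Icc hs.1 hbd.2)) (-ContinuousLinearMap.proj (R := ℝ) i) (fun u hu ↦ ?_)
      ⟨le_rfl, hs.2.le⟩ ⟨hs.2.le, le_rfl⟩ hs.2).not_ge (neg_le_neg (hle i))
    exact neg_pos.2 (hi _ (hnear_b u ⟨by linarith [hu.1], by linarith [hu.2]⟩))
  · have hr_le : r ≤ ‖γ s - γ (b - d)‖ := hsepW γ a b hγ b (.inr rfl) hbd s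
      ⟨hs.1, by linarith⟩ ⟨by linarith [hs.1], by linarith⟩
    have hshift : IsSol f (fun t ↦ γ (t + s)) (Icc 0 d) :=
      hγ.isSol_Icc.shift s fun t ht ↦ ⟨by linarith [ht.1, hs.1], by linarith [ht.2, hs.2]⟩
    have hjump : ∀ j, γ (d + s) j + k ≤ γ b j := by
      have := hmargin _ (Metric.ball_subset_closedBall hy) _ hshift (by simpa using hle)
        (by simpa using hr_le)
      rwa [hB.apply_eq hf.contDiff hγ.toIsRisingArc hbd (hB.ball_subset hy) hdmem,
        sub_add_cancel] at this
    have hab : ∀ j, γ b j < γ a j + k := fun j ↦ by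
      have ha := (dist_le_pi_dist _ _ j).trans_lt (hWk (hγ.mem a (.inl rfl)))
      have hb := (dist_le_pi_dist _ _ j).trans_lt (hWk (hγ.mem b (.inr rfl)))
      rw [Real.dist_eq, abs_lt] at ha hb
      linarith [ha.1, hb.2]
    refine hf.not_valley hγ.isSol_Icc (c := d + s) (by linarith [hs.1]) (by linarith)
      (fun j ↦ by linarith [hjump j, hab j]) (strLt.lt fun j ↦ by linarith [hjump j])

lemma eventually_not_le [NeZero n] (hB : IsFlowBox f β z V ρ δ Φ) (hf : IsCoopIrred f)
    (hd : d ∈ Ioc 0 (δ / 2)) : ∀ᶠ W in (𝓝 z).smallSets, ∀ γ a b, IsReturnArc f β z V W γ a b →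
      ∀ s s', a ≤ s → s < s' → s' ≤ b - d → ¬ γ s ≤ γ s' := by
  filter_upwards [hB.eventually_not_le_sub hf hd] with W hW γ a b hγ s s' hs hss' hs' hle
  have hd0 := hd.1
  refine hW γ a b hγ (s + (b - d - s')) ⟨by linarith, by linarith⟩ ?_
  simpa only [add_sub_cancel] using hf.shift_le_shift hγ.isSol_Icc hs (hs.trans hss'.le)
    (sub_nonneg.2 hs') (by linarith) (by linarith) hle

lemma eventually_mem_frontier [NeZero n] (hB : IsFlowBox f β z V ρ δ Φ) (hf : IsCoopIrred f)
    (hd : d ∈ Ioc 0 (δ / 2)) : ∀ᶠ W in (𝓝 z).smallSets, ∀ γ a b, IsReturnArc f β z V W γ a b →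
      ∀ s ∈ Icc a (b - d), γ s ∈ frontier (arcUpper γ a b) := by
  filter_upwards [hB.eventually_not_le hf hd] with W hW γ a b hγ s hs
  have hsb : s ≤ b := by linarith [hs.2, hd.1]
  refine ⟨subset_closure (subset_upperClosure ⟨s, ⟨hs.1, hsb⟩, rfl⟩), fun hint ↦ ?_⟩
  obtain ⟨_, ⟨s', hs', rfl⟩, hlt⟩ := exists_strLt_of_mem_interior_upperClosure hint
  rcases lt_trichotomy s' s with h | rfl | h
  · exact hW γ a b hγ s' s hs'.1 h hs.2 hlt.le
  · exact (hlt 0).false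
  · exact hγ.not_strLt hf hs.1 h hs'.2 hlt

end IsFlowBox

end Visibility

section ReturnArcExclusion

lemma exists_ball_subset_of_not_strLt {n : ℕ} {E : Type*} [NormedAddCommGroup E] [NormedSpace ℝ E]
    {L : (Fin n → ℝ) ≃L[ℝ] E × ℝ} {z : Fin n → ℝ} {N : Set (Fin n → ℝ)} (hL : 0 ≪ L.symm (0, 1))
    (hN : N ∈ 𝓝 z) : ∃ μ > 0, ∀ᶠ y in 𝓝 z, ∀ x, ¬ x ≪ y → ¬ y ≪ x →
      (L x).1 ∈ Metric.ball (L z).1 μ → x ∈ N := by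
  obtain ⟨C, hC, hbound⟩ := exists_norm_sub_le_of_not_strLt hL
  obtain ⟨ε, hε, hεN⟩ := Metric.mem_nhds_iff.1 hN
  have hcont : ContinuousAt (fun y ↦ C * ‖(L z).1 - (L y).1‖ + ‖y - z‖) z := by fun_prop
  refine ⟨ε / 2 / C, by positivity, ?_⟩
  filter_upwards [hcont.eventually_lt_const (u := ε / 2) (by simpa using half_pos hε)]
    with y hy x hxy hyx hx
  rw [Metric.mem_ball, dist_eq_norm, lt_div_iff₀' hC] at hx
  refine hεN (Metric.mem_ball.2 ?_)
  rw [dist_eq_norm]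
  calc ‖x - z‖ ≤ ‖x - y‖ + ‖y - z‖ := norm_sub_le_norm_sub_add_norm_sub x y z
    _ ≤ C * (‖(L x).1 - (L z).1‖ + ‖(L z).1 - (L y).1‖) + ‖y - z‖ := by
        gcongr
        exact (hbound x y hxy hyx).trans
          (by gcongr; exact norm_sub_le_norm_sub_add_norm_sub _ _ _)
    _ < ε := by linarith

variable {n : ℕ} {f : (Fin n → ℝ) → Fin n → ℝ} {β : (Fin n → ℝ) →L[ℝ] ℝ} {H : (Fin n → ℝ) → ℝ}
  {L : (Fin n → ℝ) ≃L[ℝ] ℂ × ℝ} {z : Fin n → ℝ} {V W : Set (Fin n → ℝ)} {ρ δ : ℝ}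
  {Φ : (Fin n → ℝ) → ℝ → Fin n → ℝ} {γ : ℝ → Fin n → ℝ} {a b : ℝ}

lemma IsReturnArc.re_eq_of_mem_segment (hγ : IsReturnArc f β z V W γ a b)
    (hβ : ∀ x, β x = (L x).1.re) {ξ : ℂ} (hξ : ξ ∈ segment ℝ (L (γ a)).1 (L (γ b)).1) :
    ξ.re = β z := by
  have hsub : segment ℝ (L (γ a)).1 (L (γ b)).1 ⊆ Complex.reCLM ⁻¹' {β z} :=
    ((convex_singleton (β z)).linear_preimage Complex.reCLM.toLinearMap).segment_subset
      ((hβ _).symm.trans (hγ.clm_eq a (.inl rfl))) ((hβ _).symm.trans (hγ.clm_eq b (.inr rfl)))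
  exact hsub hξ

lemma re_eq_zero_and_norm_eq_one {c : ℂ} (hc : c * c = -1) : c.re = 0 ∧ ‖c‖ = 1 := by
  rcases mul_self_eq_mul_self_iff.1 (hc.trans Complex.I_mul_I.symm) with rfl | rfl <;> simp

lemma exists_forall_le_two_mul_abs_sub (hL : 0 ≪ L.symm (0, 1)) (hH : ContDiffAt ℝ 1 H z)
    (hLH : ∀ x, (L x).1.im = fderiv ℝ H z x) :
    ∃ r₀ > (0 : ℝ), ∀ᶠ y in 𝓝 z, ∀ x, ¬ x ≪ y → ¬ y ≪ x → ∀ c : ℂ, c * c = -1 →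
      ∀ r ∈ Ioc 0 r₀, (L x).1 = (L y).1 + r * c → r ≤ 2 * |H x - H y| := by
  obtain ⟨U, hU, hHU⟩ := exists_nhds_norm_sub_le_two_mul_abs_sub hL hH hLH
  obtain ⟨μ, hμ, hmem⟩ := exists_ball_subset_of_not_strLt hL hU
  have hcont : ContinuousAt (fun y ↦ dist (L y).1 (L z).1) z := by fun_prop
  refine ⟨μ / 2, half_pos hμ, ?_⟩
  filter_upwards [hU, hmem, hcont.eventually_lt_const (u := μ / 2) (by simpa using half_pos hμ)]
    with y hy hmem hyz x hxy hyx c hc r hr hx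
  obtain ⟨hcre, hcn⟩ := re_eq_zero_and_norm_eq_one hc
  have hdist : dist (L x).1 (L y).1 = r := by simp [hx, hcn, abs_of_pos hr.1]
  have hxU : x ∈ U := hmem x hxy hyx <| Metric.mem_ball.2 <|
    (dist_triangle _ (L y).1 _).trans_lt (by linarith [hr.2])
  have hle := hHU x hxU y hy (by simp [hx, hcre]) hxy hyx
  rwa [← dist_eq_norm, hdist] at hle

lemma IsRisingArc.isC1Arc (hγ : IsRisingArc f γ a b) (hf : ContDiff ℝ 1 f) :
    IsC1Arc (fun t ↦ (L (γ t)).1) a b := by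
  have hderiv : ∀ t ∈ Icc a b, HasDerivAt (fun t ↦ (L (γ t)).1) (L (f (γ t))).1 t := fun t ht ↦
    (ContinuousLinearMap.fst ℝ ℂ ℝ ∘L L.toContinuousLinearMap).hasFDerivAt.comp_hasDerivAt t
      ((hγ.isSol t ⟨by linarith [ht.1], by linarith [ht.2]⟩).hasDerivAt
        (Icc_mem_nhds (by linarith [ht.1]) (by linarith [ht.2])))
  have hcont : Continuous fun x ↦ (L (f x)).1 := by fun_prop
  exact ⟨hγ.lt.le, fun t ht ↦ (hderiv t ht).differentiableAt,
    (hcont.comp_continuousOn hγ.isSol_Icc.continuousOn).congr fun t ht ↦ (hderiv t ht).deriv⟩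

namespace IsFlowBox

lemma eventually_strictMonoOn (hB : IsFlowBox f β z V ρ δ Φ) (hf : ContDiff ℝ 1 f) :
    ∀ᶠ W in (𝓝 z).smallSets, ∀ γ a b, IsReturnArc f β z V W γ a b → ∀ e, e = a ∨ e = b →
      StrictMonoOn (fun t ↦ β (γ t)) (Icc (e - δ) (e + δ)) := by
  filter_upwards [hB.eventually_mem_ball_of_isReturnArc hf] with W hW γ a b hγ e he
  have hsub : Icc (e - δ) (e + δ) ⊆ Icc (a - 1) (b + 1) := by
    apply Icc_subset_Icc <;> rcases he with rfl | rfl <;> linarith [hγ.lt, hB.time_le_one]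
  exact IsSol.strictMonoOn_clm (hγ.isSol.mono hsub) β fun u hu ↦
    hB.clm_pos _ (hW γ a b hγ e he u hu)

lemma exists_lt_norm_sub [NeZero n] (hB : IsFlowBox f β z V ρ δ Φ) (hf : IsCoopIrred f)
    (hL : 0 ≪ L.symm (0, 1)) :
    ∃ r > 0, ∀ᶠ W in (𝓝 z).smallSets, ∀ γ a b, IsReturnArc f β z V W γ a b →
      ∀ t ∈ Icc (a + δ) (b - δ), r < ‖(L (γ t)).1 - (L (γ (a + δ / 2))).1‖ := by
  obtain ⟨C, hC, hbound⟩ := exists_norm_sub_le_of_not_strLt hL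
  have hδ := hB.time_pos
  obtain ⟨r, hr, hsep⟩ := hB.exists_le_norm_sub hf.contDiff (d := δ / 2) (h := -(δ / 2))
    ⟨half_pos hδ, by linarith⟩ ⟨by linarith, by linarith⟩
  refine ⟨r / (2 * C), div_pos hr.1 (by positivity), ?_⟩
  filter_upwards [hsep, hB.eventually_mem_frontier hf ⟨half_pos hδ, le_rfl⟩]
    with W hsepW hfr γ a b hγ t ht
  have hs : a + δ / 2 ∈ Icc a (b - δ / 2) := ⟨by linarith, by linarith [ht.1, ht.2]⟩
  have ht' : t ∈ Icc a (b - δ / 2) := ⟨by linarith [ht.1], by linarith [ht.2]⟩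
  have hle := hsepW γ a b hγ a (.inl rfl) ⟨by linarith, by linarith [hs.2]⟩ t
    ⟨ht'.1, by linarith [ht'.2]⟩ ⟨by linarith [ht.1], by linarith [ht.2]⟩
  rw [sub_neg_eq_add] at hle
  have hnot : ∀ u ∈ Icc a (b - δ / 2), ∀ v ∈ Icc a (b - δ / 2), ¬ γ u ≪ γ v := fun u hu v hv ↦
    not_strLt_of_mem_frontier (upperClosure _).upper
      (frontier_subset_closure (hfr γ a b hγ u hu)) (hfr γ a b hγ v hv)
  rw [div_lt_iff₀ (by positivity)]
  linarith [hbound _ _ (hnot t ht' _ hs) (hnot _ hs t ht'), hr.1]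

lemma exists_notMem_image_union_segment [NeZero n] (hB : IsFlowBox f β z V ρ δ Φ)
    (hf : IsCoopIrred f) (hL : 0 ≪ L.symm (0, 1)) (hβ : ∀ x, β x = (L x).1.re) :
    ∃ r > 0, ∀ᶠ W in (𝓝 z).smallSets, ∀ γ a b, IsReturnArc f β z V W γ a b →
      ∀ ξ : ℂ, ξ.re = β (γ (a + δ / 2)) → ‖ξ - (L (γ (a + δ / 2))).1‖ ≤ r →
        ξ ∉ (fun t ↦ (L (γ t)).1) '' Icc (a + δ) b ∪ segment ℝ (L (γ a)).1 (L (γ b)).1 := by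
  obtain ⟨r, hr, hfar⟩ := hB.exists_lt_norm_sub hf hL
  refine ⟨r, hr, ?_⟩
  filter_upwards [hfar, hB.eventually_strictMonoOn hf.contDiff] with W hfarW hmono γ a b hγ ξ hre hξ
  have hδ := hB.time_pos
  have hgt : β z < β (γ (a + δ / 2)) := by
    have h : β (γ a) < β (γ (a + δ / 2)) := hmono γ a b hγ a (.inl rfl)
      ⟨by linarith, by linarith⟩ ⟨by linarith, by linarith⟩ (by linarith)
    rwa [hγ.clm_eq a (.inl rfl)] at h
  rintro (⟨t, ht, rfl⟩ | hseg)
  · rcases le_or_gt t (b - δ) with h | h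
    · exact (hfarW γ a b hγ t ⟨ht.1, h⟩).not_ge hξ
    · have hle : β (γ t) ≤ β z := ((hmono γ a b hγ b (.inr rfl)).monotoneOn
        ⟨h.le, by linarith [ht.2]⟩ ⟨by linarith, by linarith⟩ ht.2).trans_eq
          (hγ.clm_eq b (.inr rfl))
      rw [hβ (γ t), hre] at hle
      exact hle.not_gt hgt
  · rw [hγ.re_eq_of_mem_segment hβ hseg] at hre
    exact hgt.ne hre

lemma exists_bounded_side [NeZero n] (hB : IsFlowBox f β z V ρ δ Φ) (hf : IsCoopIrred f)
    (hL : 0 ≪ L.symm (0, 1)) (hβ : ∀ x, β x = (L x).1.re) :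
    ∃ r₀ > (0 : ℝ), ∀ᶠ W in (𝓝 z).smallSets, ∀ γ a b, IsReturnArc f β z V W γ a b → ∀ r ∈ Ioc 0 r₀,
      ∃ D : Set ℂ, IsOpen D ∧ Bornology.IsBounded D ∧
        frontier D ⊆ chordLoop (fun t ↦ (L (γ t)).1) a b ∧
        ∃ c : ℂ, c * c = -1 ∧ (L (γ (a + δ / 2))).1 + r * c ∈ D := by
  obtain ⟨r₀, hr₀, hoff⟩ := hB.exists_notMem_image_union_segment hf hL hβ
  refine ⟨r₀, hr₀, ?_⟩
  filter_upwards [hoff, hB.eventually_strictMonoOn hf.contDiff,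
    hB.eventually_add_lt_sub hf.contDiff] with W hoff hmono hlong γ a b hγ r hr
  have hδ := hB.time_pos
  replace hoff := hoff γ a b hγ
  replace hmono := hmono γ a b hγ a (.inl rfl)
  replace hlong := hlong γ a b hγ
  have hs : a + δ / 2 ∈ Icc (a - δ) (a + δ) := ⟨by linarith, by linarith⟩
  have hpt := hoff (L (γ (a + δ / 2))).1 (hβ _).symm (by simpa using hr₀.le)
  refine (hγ.isC1Arc hf.contDiff).exists_bounded_side (s := a + δ / 2) (m := a + δ)
    (by linarith) (by linarith) (by linarith) (fun t ht ↦ ?_) (fun t ht ↦ ?_)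
    (fun h ↦ hpt (.inl h)) (fun h ↦ hpt (.inr h)) hr.1 (fun c hc τ hτ hmem ↦ ?_)
  · simpa only [hβ] using hmono ⟨by linarith [ht.1], by linarith [ht.2]⟩ hs ht.2
  · simpa only [hβ] using hmono hs ⟨by linarith [ht.1], ht.2⟩ ht.1
  · obtain ⟨hcre, hcn⟩ := re_eq_zero_and_norm_eq_one hc
    have hre : ((L (γ (a + δ / 2))).1 + τ * c).re = β (γ (a + δ / 2)) := by simp [hβ, hcre]
    have hξ := hoff _ hre (by simpa [hcn, abs_of_pos hτ.1] using hτ.2.trans hr.2)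
    rcases hmem with ⟨t, ht, heq⟩ | hseg
    · rcases le_or_gt t (a + δ) with hta | hta
      · have ht_eq : t = a + δ / 2 := hmono.injOn ⟨by linarith [ht.1], hta⟩ hs (by
          simpa only [← hre, hβ] using congrArg Complex.re heq)
        have hc0 : c ≠ 0 := norm_ne_zero_iff.1 (hcn.trans_ne one_ne_zero)
        simp [ht_eq, hτ.1.ne', hc0] at heq
      · exact hξ (.inl ⟨t, ⟨hta.le, ht.2⟩, heq⟩)
    · exact hξ (.inr hseg)

lemma exists_preimage_chordLoop_subset (hB : IsFlowBox f β z V ρ δ Φ) (hf : ContDiff ℝ 1 f)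
    {N : Set (Fin n → ℝ)} (hL : 0 ≪ L.symm (0, 1)) (hN : N ∈ 𝓝 z) :
    ∃ d ∈ Ioc 0 (δ / 2), ∀ᶠ W in (𝓝 z).smallSets, ∀ γ a b, IsReturnArc f β z V W γ a b →
      ∀ x, ¬ x ≪ γ a → ¬ γ a ≪ x → (L x).1 ∈ chordLoop (fun t ↦ (L (γ t)).1) a b →
        x ∈ N ∨ ∃ t ∈ Icc a (b - d), (L x).1 = (L (γ t)).1 := by
  obtain ⟨μ, hμ, hmem⟩ := exists_ball_subset_of_not_strLt hL hN
  have hball : (fun x ↦ (L x).1) ⁻¹' Metric.ball (L z).1 μ ∈ 𝓝 z :=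
    (show Continuous fun x ↦ (L x).1 by fun_prop).continuousAt.preimage_mem_nhds
      (Metric.ball_mem_nhds _ hμ)
  obtain ⟨d, hstay, hd⟩ := ((hB.eventually_mem hball).and
    (Ioc_mem_nhdsGT (half_pos hB.time_pos))).exists
  refine ⟨d, hd, ?_⟩
  filter_upwards [hmem.smallSets, hstay.smallSets, eventually_smallSets_subset.2 hball,
    eventually_smallSets_subset.2 (Metric.closedBall_mem_nhds z hB.radius_pos)]
    with W hmem hstay hnear hWB γ a b hγ x hx hx' hloop
  have hγa := hγ.mem a (.inl rfl)
  have hγb := hγ.mem b (.inr rfl)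
  have htail : ∀ t ∈ Icc (b - d) b, (L (γ t)).1 ∈ Metric.ball (L z).1 μ := fun t ht ↦ by
    have h := hstay _ hγb (t - b) ⟨by linarith [ht.1], by linarith [ht.2, hd.1]⟩
    rwa [hB.apply_eq hf hγ.toIsRisingArc ⟨hγ.lt.le, le_rfl⟩ (hWB hγb)
      ⟨by linarith [ht.1, hd.2, hB.time_pos], by linarith [ht.2, hB.time_pos]⟩,
      add_sub_cancel] at h
  rcases hloop with ⟨t, ht, heq⟩ | hseg
  · rcases le_or_gt t (b - d) with h | h
    · exact .inr ⟨t, ⟨ht.1, h⟩, heq.symm⟩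
    · exact .inl (hmem _ hγa x hx hx' (heq ▸ htail t ⟨h.le, ht.2⟩))
  · exact .inl (hmem _ hγa x hx hx' ((convex_ball _ _).segment_subset
      (hnear hγa) (hnear hγb) hseg))

lemma eventually_abs_sub_lt [NeZero n] (hB : IsFlowBox f β z V ρ δ Φ) (hf : IsCoopIrred f)
    (hH : Continuous H) (hL : 0 ≪ L.symm (0, 1)) {μ : ℝ} (hμ : 0 < μ) :
    ∀ᶠ W in (𝓝 z).smallSets, ∀ γ a b, IsReturnArc f β z V W γ a b →
      (∀ t ∈ Icc a b, H (γ t) = H z) → ∀ x ∈ frontier (arcUpper γ a b),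
        (L x).1 ∈ chordLoop (fun t ↦ (L (γ t)).1) a b → |H x - H z| < μ := by
  have hN : {x | |H x - H z| < μ} ∈ 𝓝 z := by
    have hcont : ContinuousAt (fun x ↦ |H x - H z|) z := by fun_prop
    exact hcont.eventually_lt_const (by simpa using hμ)
  obtain ⟨d, hd, hloop⟩ := hB.exists_preimage_chordLoop_subset hf.contDiff hL hN
  filter_upwards [hloop, hB.eventually_mem_frontier hf hd, hB.eventually_add_lt_sub hf.contDiff]
    with W hloop hfr hlong γ a b hγ hHγ x hx hxloop
  have hnot : ∀ t ∈ Icc a (b - d), ¬ x ≪ γ t ∧ ¬ γ t ≪ x := fun t ht ↦ by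
    have ht := hfr γ a b hγ t ht
    exact ⟨not_strLt_of_mem_frontier (upperClosure _).upper (frontier_subset_closure hx) ht,
      not_strLt_of_mem_frontier (upperClosure _).upper (frontier_subset_closure ht) hx⟩
  have ha := hnot a ⟨le_rfl, by linarith [hlong γ a b hγ, hd.2, hB.time_pos]⟩
  rcases hloop γ a b hγ x ha.1 ha.2 hxloop with h | ⟨t, ht, heq⟩
  · exact h
  · rw [eq_of_not_strLt hL (hnot t ht).1 (hnot t ht).2 heq,
      hHγ t ⟨ht.1, ht.2.trans (by linarith [hd.1])⟩, sub_self, abs_zero]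
    exact hμ

end IsFlowBox

-- Above the point found on the bounded side of the projected arc, `|H - H z|` is larger than above
-- the border of that side, against the maximum principle on the frontier of the upper set.
lemma eventually_not_isReturnArc [NeZero n] (hf : IsCoopIrred f) (hH : IsFirstIntegral f H)
    (hL : 0 ≪ L.symm (0, 1)) (hLH : ∀ x, (L x).1.im = fderiv ℝ H z x)
    (hβ : ∀ x, β x = (L x).1.re) (hβz : 0 < β (f z)) (hz : ¬ 0 ≤ f z) (hV : V ∈ 𝓝 z) :
    ∀ᶠ W in (𝓝 z).smallSets, ∀ γ a b, (∀ t ∈ Icc a b, H (γ t) = H z) →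
      ¬ IsReturnArc f β z V W γ a b := by
  obtain ⟨r₁, hr₁, hlarge⟩ := exists_forall_le_two_mul_abs_sub hL hH.contDiff.contDiffAt hLH
  obtain ⟨U, hU, hlargeU⟩ := hlarge.exists_mem
  obtain ⟨ρ, δ, Φ, hB⟩ := exists_isFlowBox hf.contDiff hβz hz (inter_mem hV hU)
  obtain ⟨r₀, hr₀, hside⟩ := hB.exists_bounded_side hf hL hβ
  have hδ := hB.time_pos
  set r := min r₀ r₁
  have hr : 0 < r := lt_min hr₀ hr₁
  filter_upwards [hside, hB.eventually_abs_sub_lt hf hH.contDiff.continuous hL (half_pos hr),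
    hB.eventually_mem_frontier hf ⟨half_pos hδ, le_rfl⟩, hB.eventually_add_lt_sub hf.contDiff,
    hB.eventually_mem_ball_of_isReturnArc hf.contDiff]
    with W hside hgap hfr hlong hball γ a b hHγ hγ
  replace hγ := hγ.mono (inter_subset_left (t := U))
  have hs : a + δ / 2 ∈ Icc a (b - δ / 2) := ⟨by linarith, by linarith [hlong γ a b hγ]⟩
  have hsfr := hfr γ a b hγ _ hs
  obtain ⟨D, hDo, hDb, hD, c, hc, hcD⟩ := hside γ a b hγ r ⟨hr, min_le_left _ _⟩
  obtain ⟨q, hq, hqL⟩ := exists_mem_frontier_upperClosure hL hγ.isCompact_image.isBounded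
    ((nonempty_Icc.2 hγ.lt.le).image γ) ((L (γ (a + δ / 2))).1 + r * c)
  have hcont : Continuous fun x ↦ (L x).1 := by fun_prop
  have hlt : |H q - H z| < r / 2 := hγ.abs_sub_lt_of_frontier hf hH hHγ (hDo.preimage hcont)
    (isCompact_frontier_inter_closure_preimage hL (upperClosure _).upper hDb) (half_pos hr)
    (fun x hx hxD ↦ hgap γ a b hγ hHγ x hx (hD (hcont.frontier_preimage_subset D hxD))) q hq
    (mem_preimage.2 (hqL ▸ hcD))
  have hsU : γ (a + δ / 2) ∈ U := (hB.subset (hB.ball_subset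
    (hball γ a b hγ a (.inl rfl) (a + δ / 2) ⟨by linarith, by linarith⟩))).2
  have hge := hlargeU _ hsU q
    (not_strLt_of_mem_frontier (upperClosure _).upper (frontier_subset_closure hq) hsfr)
    (not_strLt_of_mem_frontier (upperClosure _).upper (frontier_subset_closure hsfr) hq)
    c hc r ⟨hr, min_le_right _ _⟩ hqL
  rw [hHγ _ ⟨hs.1, by linarith [hs.2]⟩] at hge
  linarith

end ReturnArcExclusion

section SectionCrossing

variable {n : ℕ} {f : (Fin n → ℝ) → Fin n → ℝ} {H : (Fin n → ℝ) → ℝ} {γ : ℝ → Fin n → ℝ}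
  {l : Filter ℝ} {A : Set ℝ} {L : (Fin n → ℝ) ≃L[ℝ] ℂ × ℝ} {β : (Fin n → ℝ) →L[ℝ] ℝ}
  {p p' z : Fin n → ℝ} {V W : Set (Fin n → ℝ)}

lemma exists_pos_eventually_lt_abs_sub {X : Type*} [TopologicalSpace X] {ι : Type*} {l : Filter ι}
    {γ : ι → X} {S : Set X} (hS : IsCompact S) {β : X → ℝ} (hβ : Continuous β) {c : ℝ}
    (hne : ∀ y ∈ S, MapClusterPt y l γ → β y ≠ c) :
    ∃ μ > 0, ∀ᶠ t in l, γ t ∈ S → μ < |β (γ t) - c| := by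
  have hnot : ∀ᶠ t in l ⊓ comap (β ∘ γ) (𝓝 c), γ t ∉ S := by
    by_contra hfreq
    simp only [not_eventually, not_not] at hfreq
    obtain ⟨y, hyS, hy⟩ := hS.exists_mapClusterPt_of_frequently hfreq
    have hβy : ClusterPt (β y) (𝓝 c) := ClusterPt.mono (hy.continuousAt_comp hβ.continuousAt)
      ((map_mono inf_le_right).trans map_comap_le)
    exact hne y hyS (hy.mono inf_le_left) (eq_of_nhds_neBot hβy)
  obtain ⟨s, hs, N, hN, hsN⟩ := eventually_inf.1 hnot
  obtain ⟨μ, hμ, hμN⟩ := (Metric.nhds_basis_closedBall.comap (β ∘ γ)).mem_iff.1 hN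
  refine ⟨μ, hμ, mem_of_superset hs fun t ht htS ↦ ?_⟩
  by_contra! hle
  exact hsN t ⟨ht, hμN hle⟩ htS

lemma inter_frontier_nonempty_of_isPreconnected {X : Type*} [TopologicalSpace X] {S K : Set X}
    (hS : IsPreconnected S) (h : (S ∩ K).Nonempty) (h' : (S ∩ Kᶜ).Nonempty) :
    (S ∩ frontier K).Nonempty := by
  by_contra hempty
  have hcover : S ⊆ interior K ∪ interior Kᶜ := fun x hx ↦ by
    by_contra hn
    rw [interior_compl, mem_union, not_or, notMem_compl_iff] at hn
    exact hempty ⟨x, hx, hn.2, hn.1⟩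
  have hsub : S ⊆ interior K := hS.subset_left_of_subset_union isOpen_interior isOpen_interior
    (disjoint_compl_right.mono interior_subset interior_subset) hcover
    (h.mono fun x hx ↦ ⟨hx.1, (hcover hx.1).resolve_right fun hn ↦ interior_subset hn hx.2⟩)
  obtain ⟨x, hxS, hxK⟩ := h'
  exact hxK (interior_subset (hsub hxS))

namespace IsOrbit

lemma firstIntegral_eq_of_mapClusterPt (hγ : IsOrbit f γ l A) (hH : IsFirstIntegral f H)
    (hp : MapClusterPt p l γ) (hp' : MapClusterPt p' l γ) : H p = H p' := by
  obtain ⟨t, ht⟩ := (((mapClusterPt_iff_frequently.1 hp) _ univ_mem).and_eventually hγ.mem).exists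
  rw [← hγ.firstIntegral_eq hH hp ht.2, hγ.firstIntegral_eq hH hp' ht.2]

lemma frequently_mem_frontier (hγ : IsOrbit f γ l A) {K : Set (Fin n → ℝ)}
    (hp : MapClusterPt p l γ) (hp' : MapClusterPt p' l γ) (hK : K ∈ 𝓝 p) (hK' : Kᶜ ∈ 𝓝 p') :
    ∃ᶠ t in l, γ t ∈ frontier K := by
  intro hnot
  obtain ⟨A', hA', hγ'⟩ := hγ.restrict hnot
  obtain ⟨t₁, t₂, t₃, h₁₂, h₂₃, hsub, h₁, h₂, -⟩ := hγ'.exists_separated_times 0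
    (frequently_of_mapClusterPt hp hK) (frequently_of_mapClusterPt hp' hK')
    (frequently_of_mapClusterPt hp hK)
  have hIcc : Icc t₁ t₂ ⊆ A' := (Icc_subset_Icc (by linarith) (by linarith)).trans hsub
  obtain ⟨-, ⟨t, ht, rfl⟩, hfr⟩ := inter_frontier_nonempty_of_isPreconnected
    (isPreconnected_Icc.image γ (hγ'.isSol.mono hIcc).continuousOn)
    ⟨γ t₁, mem_image_of_mem γ ⟨le_rfl, by linarith⟩, h₁⟩
    ⟨γ t₂, mem_image_of_mem γ ⟨by linarith, le_rfl⟩, h₂⟩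
  exact (hA' (hIcc ht)).2 hfr

lemma exists_frequently_mem_closedBall_eq (hγ : IsOrbit f γ l A) (hp : MapClusterPt p l γ)
    (hp' : MapClusterPt p' l γ) {r : ℝ} (hr : 0 < r) (hrp' : r < dist p' p)
    {β : (Fin n → ℝ) → ℝ} (hβ : Continuous β)
    (hne : ∀ y ∈ Metric.sphere p r, MapClusterPt y l γ → β y ≠ β p) :
    ∃ c, ∃ᶠ t in l, γ t ∈ Metric.closedBall p r ∩ β ⁻¹' {c} := by
  obtain ⟨μ, hμ, hμS⟩ := exists_pos_eventually_lt_abs_sub (isCompact_sphere p r) hβ hne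
  have habs : Continuous fun x ↦ |β x - β p| := by fun_prop
  have hK : Metric.closedBall p r ∩ {x | |β x - β p| ≤ μ} ∈ 𝓝 p :=
    inter_mem (Metric.closedBall_mem_nhds p hr)
      (habs.continuousAt.eventually_le_const (by simpa using hμ))
  have hK' : (Metric.closedBall p r ∩ {x | |β x - β p| ≤ μ})ᶜ ∈ 𝓝 p' :=
    mem_of_superset (Metric.isClosed_closedBall.isOpen_compl.mem_nhds (by simpa using hrp'))
      (compl_subset_compl.2 inter_subset_left)
  have hlevel : ∃ᶠ t in l, γ t ∈ Metric.closedBall p r ∩ β ⁻¹' {β p + μ} ∨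
      γ t ∈ Metric.closedBall p r ∩ β ⁻¹' {β p - μ} := by
    refine ((hγ.frequently_mem_frontier hp hp' hK hK').and_eventually hμS).mono ?_
    rintro t ⟨hfr, hsphere⟩
    obtain ⟨hball, hle⟩ : γ t ∈ Metric.closedBall p r ∩ {x | |β x - β p| ≤ μ} :=
      (Metric.isClosed_closedBall.inter (isClosed_le habs continuous_const)).frontier_subset hfr
    have heq : |β (γ t) - β p| = μ := by
      rcases frontier_inter_subset _ _ hfr with h | h
      · exact absurd (hsphere (frontier_closedBall p hr.ne' ▸ h.1)) (not_lt.2 hle)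
      · exact frontier_le_subset_eq habs continuous_const h.2
    rcases (abs_eq hμ.le).1 heq with h | h
    · exact .inl ⟨hball, by simpa using by linarith⟩
    · exact .inr ⟨hball, by simpa using by linarith⟩
  rcases frequently_or_distrib.1 hlevel with h | h
  exacts [⟨_, h⟩, ⟨_, h⟩]

lemma exists_mapClusterPt_velocity_ne_zero [NeZero n] (hγ : IsOrbit f γ l A) (hf : IsCoopIrred f)
    (hH : IsFirstIntegral f H) (hL : 0 ≪ L.symm (0, 1)) (hLH : ∀ x, (L x).1.im = fderiv ℝ H p x)
    (hp : MapClusterPt p l γ) (hp' : MapClusterPt p' l γ) (hne : p' ≠ p) :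
    ∃ z, MapClusterPt z l γ ∧ f z ≠ 0 := by
  obtain ⟨U, hU, hgraph⟩ := exists_nhds_eq_or_strLt hL hH.contDiff.contDiffAt hLH
  obtain ⟨r₀, hr₀, hball⟩ := Metric.nhds_basis_closedBall.mem_iff.1 hU
  obtain ⟨r, hr, hr_lt⟩ := exists_between (lt_min hr₀ (dist_pos.2 hne))
  obtain ⟨hrr₀, hrp'⟩ := lt_min_iff.1 hr_lt
  have hballr : Metric.closedBall p r ⊆ U :=
    (Metric.closedBall_subset_closedBall hrr₀.le).trans hball
  have hre : Continuous fun x ↦ (L x).1.re := by fun_prop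
  obtain ⟨c, hc⟩ := hγ.exists_frequently_mem_closedBall_eq hp hp' hr hrp' hre fun y hyr hy hyp ↦ by
    rcases hgraph y (hballr (Metric.sphere_subset_closedBall hyr)) p
      (hballr (Metric.mem_closedBall_self hr.le)) (hγ.firstIntegral_eq_of_mapClusterPt hH hy hp) hyp
      with rfl | h | h
    · exact hr.ne (by simpa using hyr)
    · exact hγ.not_strLt hf hy hp h
    · exact hγ.not_strLt hf hp hy h
  obtain ⟨z, ⟨hzr, hzc⟩, hz⟩ := ((isCompact_closedBall p r).inter_right
    (isClosed_singleton.preimage hre)).exists_mapClusterPt_of_frequently hc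
  refine ⟨z, hz, fun hfz ↦ hne ?_⟩
  have hcomparable : ∃ᶠ t in l, z ≤ γ t ∨ γ t ≤ z := by
    refine (hc.and_eventually hγ.mem).mono fun t ht ↦ ?_
    rcases hgraph (γ t) (hballr ht.1.1) z (hballr hzr) (hγ.firstIntegral_eq hH hz ht.2)
      (ht.1.2.trans hzc.symm) with h | h | h
    exacts [.inl h.ge, .inr h.le, .inl h.le]
  rcases frequently_or_distrib.1 hcomparable with h | h
  · exact (hγ.eq_of_frequently_ge hf hfz hz h hp').trans
      (hγ.eq_of_frequently_ge hf hfz hz h hp).symm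
  · exact (hγ.eq_of_frequently_le hf hfz hz h hp').trans
      (hγ.eq_of_frequently_le hf hfz hz h hp).symm

lemma frequently_mem_and_clm_eq (hγ : IsOrbit f γ l A) (hf : ContDiff ℝ 1 f) (hβ : 0 < β (f z))
    (hz0 : ¬ 0 ≤ f z) (hz : MapClusterPt z l γ) (hW : W ∈ 𝓝 z) :
    ∃ᶠ t in l, γ t ∈ W ∧ β (γ t) = β z := by
  intro hnot
  obtain ⟨A', hA', hγ'⟩ := hγ.restrict hnot
  obtain ⟨ρ, δ, Φ, hB⟩ := exists_isFlowBox hf hβ hz0 hW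
  obtain ⟨t, ⟨⟨⟨u, hu, huβ⟩, hball⟩, htρ⟩, htA'⟩ := ((frequently_of_mapClusterPt hz
    (((hB.eventually_exists_clm_eq ⟨hB.time_pos, le_rfl⟩).and hB.eventually_mem_ball).and
      (Metric.closedBall_mem_nhds z hB.radius_pos))).and_eventually
    (hγ'.eventually_Icc_subset δ)).exists
  have hu' := Ioo_subset_Icc_self hu
  have hflow : Φ (γ t) u = γ (t + u) :=
    hB.toIsLocalFlow.eq_of_isSol hf htρ (hγ'.isSol.mono htA') hu'
  have huW : γ (t + u) ∈ W := hflow ▸ hB.subset (hB.ball_subset (hball u hu'))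
  exact (hA' (htA' ⟨by linarith [hu'.1], by linarith [hu'.2]⟩)).2 ⟨huW, hflow ▸ huβ⟩

end IsOrbit

end SectionCrossing

section Convergence

variable {n : ℕ} {f : (Fin n → ℝ) → Fin n → ℝ} {H : (Fin n → ℝ) → ℝ} {γ : ℝ → Fin n → ℝ}
  {l : Filter ℝ} {A : Set ℝ} {L : (Fin n → ℝ) ≃L[ℝ] ℂ × ℝ} {β : (Fin n → ℝ) →L[ℝ] ℝ}
  {w z : Fin n → ℝ} {V W : Set (Fin n → ℝ)} {a b : ℝ}

lemma exists_consecutive_mem {X : Type*} [TopologicalSpace X] {γ : ℝ → X} {Z : Set X}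
    (hZ : IsClosed Z) {t₁ t₂ t₃ : ℝ} (hγ : ContinuousOn γ (Icc t₁ t₃)) (h₁₂ : t₁ ≤ t₂)
    (h₂₃ : t₂ ≤ t₃) (h₁ : γ t₁ ∈ Z) (h₂ : γ t₂ ∉ Z) (h₃ : γ t₃ ∈ Z) :
    ∃ a ∈ Icc t₁ t₃, ∃ b ∈ Icc t₁ t₃, a < b ∧ γ a ∈ Z ∧ γ b ∈ Z ∧ ∀ t ∈ Ioo a b, γ t ∉ Z := by
  have hcompact {u v : ℝ} (hu : t₁ ≤ u) (hv : v ≤ t₃) : IsCompact (Icc u v ∩ γ ⁻¹' Z) :=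
    isCompact_Icc.of_isClosed_subset ((hγ.mono (Icc_subset_Icc hu hv)).preimage_isClosed_of_isClosed
      isClosed_Icc hZ) inter_subset_left
  obtain ⟨a, ⟨ha, haZ⟩, hmax⟩ :=
    (hcompact le_rfl h₂₃).exists_isGreatest ⟨t₁, ⟨le_rfl, h₁₂⟩, h₁⟩
  obtain ⟨b, ⟨hb, hbZ⟩, hmin⟩ :=
    (hcompact h₁₂ le_rfl).exists_isLeast ⟨t₃, ⟨h₂₃, le_rfl⟩, h₃⟩
  have hat : a < t₂ := ha.2.lt_of_ne fun h ↦ h₂ (h ▸ haZ)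
  refine ⟨a, ⟨ha.1, ha.2.trans h₂₃⟩, b, ⟨h₁₂.trans hb.1, hb.2⟩, hat.trans_le hb.1, haZ, hbZ,
    fun t ht htZ ↦ ?_⟩
  rcases le_total t t₂ with h | h
  · exact ht.1.not_ge (hmax ⟨⟨ha.1.trans ht.1.le, h⟩, htZ⟩)
  · exact ht.2.not_ge (hmin ⟨⟨h, ht.2.le.trans hb.2⟩, htZ⟩)

lemma ordConnected_ball (z : Fin n → ℝ) (r : ℝ) : OrdConnected (Metric.ball z r) := by
  rcases le_or_gt r 0 with hr | hr
  · rw [Metric.ball_eq_empty.2 hr]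
    exact ordConnected_empty
  · simp only [ball_pi z hr, Real.ball_eq_Ioo]
    exact ordConnected_pi fun _ _ ↦ ordConnected_Ioo

lemma IsCoopIrred.mem_of_comparable [NeZero n] (hf : IsCoopIrred f) {t₁ c t₃ : ℝ}
    (hγ : IsSol f γ (Icc t₁ t₃)) (hc : c ∈ Icc t₁ t₃) (hW : OrdConnected W) (h₁ : γ t₁ ∈ W)
    (h₃ : γ t₃ ∈ W) (h₁c : γ t₁ = γ c ∨ γ t₁ ≪ γ c ∨ γ c ≪ γ t₁)
    (hc₃ : γ c = γ t₃ ∨ γ c ≪ γ t₃ ∨ γ t₃ ≪ γ c) : γ c ∈ W := by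
  rcases eq_or_ne (γ t₁) (γ c) with h | hne₁
  · exact h ▸ h₁
  rcases eq_or_ne (γ c) (γ t₃) with h | hne₃
  · exact h ▸ h₃
  have h₁_lt : t₁ < c := hc.1.lt_of_ne fun h ↦ hne₁ (h ▸ rfl)
  have h₃_lt : c < t₃ := hc.2.lt_of_ne fun h ↦ hne₃ (h ▸ rfl)
  rcases h₁c.resolve_left hne₁ with h₁c | h₁c <;> rcases hc₃.resolve_left hne₃ with hc₃ | hc₃
  · exact hW.out h₁ h₃ ⟨h₁c.le, hc₃.le⟩
  · exact absurd hc₃.lt (hf.not_peak hγ h₁_lt h₃_lt h₁c)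
  · exact absurd hc₃.lt (hf.not_valley hγ h₁_lt h₃_lt h₁c)
  · exact hW.out h₃ h₁ ⟨hc₃.le, h₁c.le⟩

lemma IsCoopIrred.exists_consecutive_mem_of_comparable [NeZero n] (hf : IsCoopIrred f)
    {t₁ t₂ t₃ : ℝ} (hγ : IsSol f γ (Icc t₁ t₃)) (h₁₂ : t₁ ≤ t₂) (h₂₃ : t₂ ≤ t₃)
    {Z : Set (Fin n → ℝ)} (hZ : IsClosed Z)
    (hcomp : ∀ s ∈ Icc t₁ t₃, ∀ t ∈ Icc t₁ t₃, γ s ∈ Z → γ t ∈ Z →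
      γ s = γ t ∨ γ s ≪ γ t ∨ γ t ≪ γ s)
    (hW : OrdConnected W) (h₁ : γ t₁ ∈ Z ∩ W) (h₂ : γ t₂ ∉ Z) (h₃ : γ t₃ ∈ Z ∩ W) :
    ∃ a ∈ Icc t₁ t₃, ∃ b ∈ Icc t₁ t₃, a < b ∧ γ a ∈ Z ∩ W ∧ γ b ∈ Z ∩ W ∧
      (∀ t ∈ Ioo a b, γ t ∉ Z) ∧ (γ a ≤ γ b ∨ γ b ≤ γ a) := by
  obtain ⟨a, ha, b, hb, hab, haZ, hbZ, hout⟩ :=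
    exists_consecutive_mem hZ hγ.continuousOn h₁₂ h₂₃ h₁.1 h₂ h₃.1
  have h₁₃ := h₁₂.trans h₂₃
  have hmem {c : ℝ} (hc : c ∈ Icc t₁ t₃) (hcZ : γ c ∈ Z) : γ c ∈ W :=
    hf.mem_of_comparable hγ hc hW h₁.2 h₃.2 (hcomp _ (left_mem_Icc.2 h₁₃) _ hc h₁.1 hcZ)
      (hcomp _ hc _ (right_mem_Icc.2 h₁₃) hcZ h₃.1)
  refine ⟨a, ha, b, hb, hab, ⟨haZ, hmem ha haZ⟩, ⟨hbZ, hmem hb hbZ⟩, hout, ?_⟩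
  rcases hcomp a ha b hb haZ hbZ with h | h | h
  exacts [.inl h.le, .inl h.le, .inr h.le]

-- In the second alternative the arc of `γ` descends from `γ a` to `γ b`.
lemma IsOrbit.exists_isReturnArc [NeZero n] (hγ : IsOrbit f γ l A) (hf : IsCoopIrred f)
    (hH : IsFirstIntegral f H) (hL : 0 ≪ L.symm (0, 1)) (hLH : ∀ x, (L x).1.im = fderiv ℝ H z x)
    (hβ : ∀ x, β x = (L x).1.re) (hβz : 0 < β (f z)) (hz0 : ¬ 0 ≤ f z) (hz : MapClusterPt z l γ)
    (hw : MapClusterPt w l γ) (hwz : w ≠ z) :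
    ∃ V ∈ 𝓝 z, ∀ W ∈ 𝓝 z, ∃ a b, Icc a b ⊆ A ∧ (IsReturnArc f β z V W γ a b ∨
      IsReturnArc (fun x ↦ -f (-x)) (-β) (-z) (Neg.neg ⁻¹' V) (Neg.neg ⁻¹' W) (fun t ↦ -γ t)
        a b) := by
  obtain ⟨U, hU, hgraph⟩ := exists_nhds_eq_or_strLt hL hH.contDiff.contDiffAt hLH
  obtain ⟨r, hr, hball⟩ := Metric.nhds_basis_closedBall.mem_iff.1
    (inter_mem hU (isOpen_compl_singleton.mem_nhds (mem_compl_singleton_iff.2 hwz.symm)))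
  refine ⟨Metric.closedBall z r, Metric.closedBall_mem_nhds z hr, fun W hW ↦ ?_⟩
  obtain ⟨g, hg, hgW⟩ := Metric.nhds_basis_ball.mem_iff.1
    (inter_mem hW (Metric.closedBall_mem_nhds z hr))
  have hfar : ∀ᶠ x in 𝓝 w, x ∉ Metric.closedBall z r :=
    Metric.isClosed_closedBall.isOpen_compl.mem_nhds fun h ↦ (hball h).2 rfl
  have hhit := hγ.frequently_mem_and_clm_eq hf.contDiff hβz hz0 hz (Metric.ball_mem_nhds z hg)
  obtain ⟨t₁, t₂, t₃, h₁₂, h₂₃, hA, ⟨h₁g, h₁β⟩, h₂, h₃g, h₃β⟩ :=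
    hγ.exists_separated_times 1 hhit (frequently_of_mapClusterPt hw hfar) hhit
  have hIcc : Icc t₁ t₃ ⊆ A := (Icc_subset_Icc (by linarith) (by linarith)).trans hA
  obtain ⟨a, ha, b, hb, hab, ⟨haZ, hag⟩, ⟨hbZ, hbg⟩, hout, hle⟩ :=
    hf.exists_consecutive_mem_of_comparable (hγ.isSol.mono hIcc) (t₂ := t₂) (by linarith)
      (by linarith)
      (Metric.isClosed_closedBall.inter (isClosed_singleton.preimage β.continuous))
      (fun s hs t ht hsZ htZ ↦ hgraph _ (hball hsZ.1).1 _ (hball htZ.1).1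
        (by rw [hγ.firstIntegral_eq hH hz (hIcc hs), hγ.firstIntegral_eq hH hz (hIcc ht)])
        (by rw [← hβ, ← hβ, hsZ.2, htZ.2]))
      (ordConnected_ball z g) ⟨⟨(hgW h₁g).2, h₁β⟩, h₁g⟩ (fun h ↦ h₂ h.1)
      ⟨⟨(hgW h₃g).2, h₃β⟩, h₃g⟩
  have hsub : Icc (a - 1) (b + 1) ⊆ A :=
    (Icc_subset_Icc (by linarith [ha.1]) (by linarith [hb.2])).trans hA
  have hsol : IsSol f γ (Icc (a - 1) (b + 1)) := hγ.isSol.mono hsub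
  refine ⟨a, b, (Icc_subset_Icc (by linarith) (by linarith)).trans hsub, ?_⟩
  have hends : ∀ e, e = a ∨ e = b → γ e ∈ W ∧ β (γ e) = β z := by
    rintro e (rfl | rfl)
    exacts [⟨(hgW hag).1, haZ.2⟩, ⟨(hgW hbg).1, hbZ.2⟩]
  have hne : ∀ t ∈ Ioo a b, γ t ∈ Metric.closedBall z r → β (γ t) ≠ β z :=
    fun t ht htV hβt ↦ hout t ht ⟨htV, hβt⟩
  exact hle.imp
    (fun hle ↦ ⟨⟨hab, hsol, hle⟩, fun e he ↦ (hends e he).1, fun e he ↦ (hends e he).2, hne⟩)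
    fun hle ↦ ⟨⟨hab, hsol.neg, neg_le_neg hle⟩, fun e he ↦ by simpa using (hends e he).1,
      fun e he ↦ by simpa using (hends e he).2, by simpa using hne⟩

end Convergence

section ThreeDimensional

variable {f : (Fin 3 → ℝ) → Fin 3 → ℝ} {H : (Fin 3 → ℝ) → ℝ} {γ : ℝ → Fin 3 → ℝ} {l : Filter ℝ}
  {A : Set ℝ} {L : (Fin 3 → ℝ) ≃L[ℝ] ℂ × ℝ} {p z : Fin 3 → ℝ}

namespace IsOrbit

lemma exists_continuousLinearEquiv (hγ : IsOrbit f γ l A) (hf : IsCoopIrred f)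
    (hH : IsFirstIntegral f H) (hp : MapClusterPt p l γ)
    (hnon : ¬ {y | MapClusterPt y l γ}.Subsingleton) :
    ∃ L : (Fin 3 → ℝ) ≃L[ℝ] ℂ × ℝ, 0 ≪ L.symm (0, 1) ∧ ∀ x, (L x).1.im = fderiv ℝ H p x := by
  have hneg : ¬ 0 ≤ grad H p := fun h ↦ hnon (hγ.subsingleton_of_grad_nonneg hf hH hp h)
  have hpos : ¬ grad H p ≤ 0 := fun h ↦ hnon <| hγ.subsingleton_of_grad_nonneg hf hH.neg hp <| by
    have : grad (fun x ↦ -H x) p = -grad H p := by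
      ext i
      simp [grad, fderiv_fun_neg]
    rwa [this, Left.nonneg_neg_iff]
  simp only [Pi.le_def, Pi.zero_apply, not_forall, not_le] at hneg hpos
  obtain ⟨j, hj⟩ := hneg
  obtain ⟨i, hi⟩ := hpos
  obtain ⟨v, hv, hwv⟩ := exists_pos_dotProduct_eq_zero hi hj
  obtain ⟨L, hL, hLH⟩ := exists_continuousLinearEquiv_complex_prod (grad_ne_zero hH p) hv hwv
  exact ⟨L, hL, fun x ↦ (hLH x).trans (fderiv_eq_dotProduct H p x).symm⟩

lemma re_velocity_ne_zero (hγ : IsOrbit f γ l A) (hf : IsCoopIrred f) (hH : IsFirstIntegral f H)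
    (hL : 0 ≪ L.symm (0, 1)) (hLH : ∀ x, (L x).1.im = fderiv ℝ H z x) (hz : MapClusterPt z l γ)
    (hfz : f z ≠ 0) : (L (f z)).1.re ≠ 0 := by
  intro hre
  have hfst : (L (f z)).1 = 0 := Complex.ext hre ((hLH _).trans (hH.fderiv_apply z))
  have hvert : f z = (L (f z)).2 • L.symm (0, 1) := by
    rw [← map_smul, eq_comm, ContinuousLinearEquiv.symm_apply_eq]
    exact Prod.ext (by simp [hfst]) (by simp)
  refine hfz ((le_total 0 (L (f z)).2).elim (fun h ↦ hγ.eq_zero_of_velocity_nonneg hf hz ?_)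
    fun h ↦ hγ.eq_zero_of_velocity_nonpos hf hz ?_)
  · exact hvert ▸ smul_nonneg h hL.le
  · exact hvert ▸ smul_nonpos_of_nonpos_of_nonneg h hL.le

lemma exists_continuousLinearEquiv_velocity (hγ : IsOrbit f γ l A) (hf : IsCoopIrred f)
    (hH : IsFirstIntegral f H) (hz : MapClusterPt z l γ) (hfz : f z ≠ 0)
    (hnon : ¬ {y | MapClusterPt y l γ}.Subsingleton) :
    ∃ L : (Fin 3 → ℝ) ≃L[ℝ] ℂ × ℝ, 0 ≪ L.symm (0, 1) ∧ (∀ x, (L x).1.im = fderiv ℝ H z x) ∧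
      0 < (L (f z)).1.re := by
  obtain ⟨L, hL, hLH⟩ := hγ.exists_continuousLinearEquiv hf hH hz hnon
  rcases (hγ.re_velocity_ne_zero hf hH hL hLH hz hfz).lt_or_gt with h | h
  · let M := L.trans (((Complex.conjCLE.trans (.neg ℝ)).prodCongr (.refl ℝ ℝ)))
    exact ⟨M, by simpa [M] using hL, by simpa [M] using hLH, by simpa [M] using h⟩
  · exact ⟨L, hL, hLH, h⟩

theorem subsingleton_mapClusterPt (hγ : IsOrbit f γ l A) (hf : IsCoopIrred f)
    (hH : IsFirstIntegral f H) : {y | MapClusterPt y l γ}.Subsingleton := by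
  by_contra hnon
  obtain ⟨p, hp, p', hp', hne⟩ := not_subsingleton_iff.1 hnon
  obtain ⟨L₀, hL₀, hL₀H⟩ := hγ.exists_continuousLinearEquiv hf hH hp hnon
  obtain ⟨z, hz, hfz⟩ :=
    hγ.exists_mapClusterPt_velocity_ne_zero hf hH hL₀ hL₀H hp hp' (Ne.symm hne)
  obtain ⟨L, hL, hLH, hLz⟩ := hγ.exists_continuousLinearEquiv_velocity hf hH hz hfz hnon
  obtain ⟨w, hw, hwz⟩ : ∃ w, MapClusterPt w l γ ∧ w ≠ z := by
    rcases eq_or_ne p z with rfl | h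
    exacts [⟨p', hp', Ne.symm hne⟩, ⟨p, hp, h⟩]
  let β : (Fin 3 → ℝ) →L[ℝ] ℝ := Complex.reCLM ∘L .fst ℝ ℂ ℝ ∘L L.toContinuousLinearMap
  obtain ⟨V, hV, harc⟩ := hγ.exists_isReturnArc hf hH hL hLH (β := β) (fun _ ↦ rfl) hLz
    (fun h ↦ hfz (hγ.eq_zero_of_velocity_nonneg hf hz h)) hz hw hwz
  have hno := eventually_not_isReturnArc hf hH hL hLH (β := β) (fun _ ↦ rfl) hLz
    (fun h ↦ hfz (hγ.eq_zero_of_velocity_nonneg hf hz h)) hV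
  let M := L.trans ((ContinuousLinearEquiv.neg ℝ).prodCongr (.refl ℝ ℝ))
  have hno' := eventually_not_isReturnArc hf.neg hH.comp_neg (L := M) (β := -β) (z := -z)
    (V := Neg.neg ⁻¹' V) (by simpa [M] using hL)
    (fun x ↦ by rw [fderiv_comp_neg']; simp [M, hLH]) (fun x ↦ rfl) (by simpa [β] using hLz)
    (fun h ↦ hfz (hγ.eq_zero_of_velocity_nonpos hf hz (by simpa using h)))
    (continuous_neg.continuousAt.preimage_mem_nhds (by simpa using hV))
  obtain ⟨W, hW, hWno⟩ := eventually_smallSets.1 hno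
  obtain ⟨W', hW', hWno'⟩ := eventually_smallSets.1 hno'
  obtain ⟨a, b, hA, h | h⟩ := harc (W ∩ Neg.neg ⁻¹' W')
    (inter_mem hW (continuous_neg.continuousAt.preimage_mem_nhds hW'))
  · exact hWno _ inter_subset_left γ a b (fun t ht ↦ hγ.firstIntegral_eq hH hz (hA ht)) h
  · exact hWno' _ (fun x hx ↦ by simpa using hx.2) _ a b
      (fun t ht ↦ by simpa using hγ.firstIntegral_eq hH hz (hA ht)) h

end IsOrbit

end ThreeDimensional

section LimitSets

variable {n : ℕ} {f : (Fin n → ℝ) → Fin n → ℝ} {γ : ℝ → Fin n → ℝ} {X : Set (Fin n → ℝ)} {a : ℝ}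

lemma IsSolOn.isOrbit_atTop (hγ : IsSolOn f X (Ici a) γ) : IsOrbit f γ atTop (Ioi a) where
  isSol := IsIntegralCurveOn.mono hγ.2 Ioi_subset_Ici_self
  isOpen := isOpen_Ioi
  ordConnected := ordConnected_Ioi
  mem := Ioi_mem_atTop a
  eq_atTop_or_atBot := .inl rfl

lemma IsSolOn.isOrbit_atBot (hγ : IsSolOn f X (Iic a) γ) : IsOrbit f γ atBot (Iio a) where
  isSol := IsIntegralCurveOn.mono hγ.2 Iio_subset_Iic_self
  isOpen := isOpen_Iio
  ordConnected := ordConnected_Iio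
  mem := Iio_mem_atBot a
  eq_atTop_or_atBot := .inr rfl

lemma omegaSet_subset_mapClusterPt : omegaSet X γ ⊆ {y | MapClusterPt y atTop γ} :=
  fun _ ⟨_, _, ht, hy⟩ ↦ MapClusterPt.of_comp ht hy.mapClusterPt

lemma alphaSet_subset_mapClusterPt : alphaSet X γ ⊆ {y | MapClusterPt y atBot γ} :=
  fun _ ⟨_, _, ht, hy⟩ ↦ MapClusterPt.of_comp ht hy.mapClusterPt

end LimitSets

/-- three-dimensional cooperative irreducible systems with a `C¹`
first integral with nonzero gradient: all limit sets are empty or singletons. -/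
theorem stmt_4 {f : (Fin 3 → ℝ) → (Fin 3 → ℝ)} (hf : ContDiff ℝ 1 f)
    (hcoop : coopVF f Set.univ) (hirr : ∀ x, matIrred (jacMat f x))
    {H : (Fin 3 → ℝ) → ℝ} (hH : ContDiff ℝ 1 H)
    (hfi : ∀ x, fderiv ℝ H x (f x) = 0)
    (hgrad : ∀ x, ∃ i, fderiv ℝ H x (Pi.single i 1) ≠ 0) :
    (∀ γ : ℝ → Fin 3 → ℝ, IsSolOn f Set.univ (Set.Ici 0) γ →
      (omegaSet Set.univ γ).Subsingleton) ∧
    (∀ γ : ℝ → Fin 3 → ℝ, IsSolOn f Set.univ (Set.Iic 0) γ →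
      (alphaSet Set.univ γ).Subsingleton) := by
  have hfI : IsCoopIrred f := ⟨hf, fun x i j ↦ hcoop x (mem_univ x) i j, hirr⟩
  have hHI : IsFirstIntegral f H := ⟨hH, hfi, fun x h ↦ by
    obtain ⟨i, hi⟩ := hgrad x
    exact hi (by simp [h])⟩
  exact ⟨fun γ hγ ↦ (hγ.isOrbit_atTop.subsingleton_mapClusterPt hfI hHI).anti
      omegaSet_subset_mapClusterPt,
    fun γ hγ ↦ (hγ.isOrbit_atBot.subsingleton_mapClusterPt hfI hHI).anti
      alphaSet_subset_mapClusterPt⟩
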